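/- arXiv:math/0405482 — 2 statements merged into one kernel-verified Lean document; each statement's English description precedes it below -/
import Mathlib

section
/- Let n ≥ 1, let σ : Fin n → Fin n be a bijection, and let Δ be a triple diagram without closed strands realizing σ, with arcs γ_i. Then Δ is minimal — i.e., its number of triple points is less than or equal to the number of triple points of every triple diagram whose arcs realize σ — if and only if both of the following hold: (1) no monogon: no arc γ_i passes through the same point of the disk at two distinct parameter values; and (2) no parallel bigon: there do not exist distinct indices i ≠ j, points x ≠ y of the open disk, and parameters s₁ < s₂ and t₁ < t₂ with γ_i(s₁) = γ_j(t₁) = x and γ_i(s₂) = γ_j(t₂) = y (i.e., two arcs meeting at two points with both arcs oriented from the first point to the second). -/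
open Set Metric Real
open scoped RealInnerProductSpace

noncomputable section

/-- The Euclidean plane. -/
abbrev Plane : Type := EuclideanSpace ℝ (Fin 2)

/-- The point of the unit circle at angle `θ`. -/
def unitPt (θ : ℝ) : Plane := (WithLp.equiv 2 (Fin 2 → ℝ)).symm ![Real.cos θ, Real.sin θ]

/-- The `2n` marked boundary points `v_k = (cos (kπ/n), sin (kπ/n))`. -/
def bpoint (n k : ℕ) : Plane := unitPt (k * Real.pi / n)

/-- The underlying geometric data of a diagram in the closed unit disk:
`na` smooth immersed arcs with endpoints on the boundary circle (transverse to it,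
pairwise distinct endpoints, interior in the open disk) and `nl` smooth immersed
loops (1-periodic) contained in the open disk. -/
structure PreDiagram (na nl : ℕ) where
  arc : Fin na → ℝ → Plane
  loop : Fin nl → ℝ → Plane
  arc_smooth : ∀ i, ContDiff ℝ (⊤ : ℕ∞) (arc i)
  loop_smooth : ∀ i, ContDiff ℝ (⊤ : ℕ∞) (loop i)
  loop_periodic : ∀ i, Function.Periodic (loop i) 1
  arc_immersed : ∀ i, ∀ t ∈ Icc (0:ℝ) 1, deriv (arc i) t ≠ 0
  loop_immersed : ∀ i t, deriv (loop i) t ≠ 0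
  arc_in_disk : ∀ i, ∀ t ∈ Icc (0:ℝ) 1, ‖arc i t‖ ≤ 1
  arc_interior : ∀ i, ∀ t ∈ Ioo (0:ℝ) 1, ‖arc i t‖ < 1
  arc_start_bdry : ∀ i, ‖arc i 0‖ = 1
  arc_end_bdry : ∀ i, ‖arc i 1‖ = 1
  arc_transverse_start : ∀ i, ⟪deriv (arc i) 0, arc i 0⟫ ≠ 0
  arc_transverse_end : ∀ i, ⟪deriv (arc i) 1, arc i 1⟫ ≠ 0
  loop_in_disk : ∀ i t, ‖loop i t‖ < 1
  endpoints_distinct :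
    Function.Injective (Sum.elim (fun i => arc i 0) (fun i => arc i 1) :
      Fin na ⊕ Fin na → Plane)

variable {na nl : ℕ}

/-- The passages of the strands of a diagram through the point `p`: parameter values
(with the strand they belong to) mapping to `p`.  For arcs the relevant parameters lie in
`(0,1)`; for loops we take one period `[0,1)`. -/
def PreDiagram.passages (D : PreDiagram na nl) (p : Plane) :
    Set ((Fin na × ℝ) ⊕ (Fin nl × ℝ)) :=
  Sum.elim (fun q => q.2 ∈ Ioo (0:ℝ) 1 ∧ D.arc q.1 q.2 = p)
           (fun q => q.2 ∈ Ico (0:ℝ) 1 ∧ D.loop q.1 q.2 = p)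

/-- The (forward) tangent vector of the branch through a given passage. -/
def PreDiagram.tangent (D : PreDiagram na nl) :
    (Fin na × ℝ) ⊕ (Fin nl × ℝ) → Plane :=
  Sum.elim (fun q => deriv (D.arc q.1) q.2) (fun q => deriv (D.loop q.1) q.2)

/-- A multiple point: a point traversed more than once by the strands,
counting with multiplicity in the parameters. -/
def PreDiagram.IsMultiplePoint (D : PreDiagram na nl) (p : Plane) : Prop :=
  ¬ (D.passages p).Subsingleton

/-- A triple diagram: a diagram whose set of multiple points is finite, such that through
each multiple point exactly three branches pass, with pairwise linearly independent
tangent vectors, and such that at each such triple point the six tangent rays of the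
three branches alternate between outgoing and incoming in cyclic order (equivalently,
some positive combination of the three forward tangent vectors vanishes). -/
structure TripleDiagram (na nl : ℕ) extends PreDiagram na nl where
  multiple_finite : {p : Plane | toPreDiagram.IsMultiplePoint p}.Finite
  triple : ∀ p : Plane, toPreDiagram.IsMultiplePoint p →
    (toPreDiagram.passages p).ncard = 3
  branches_transverse : ∀ p : Plane, toPreDiagram.IsMultiplePoint p →
    ∀ q₁ ∈ toPreDiagram.passages p, ∀ q₂ ∈ toPreDiagram.passages p, q₁ ≠ q₂ →
      LinearIndependent ℝ ![toPreDiagram.tangent q₁, toPreDiagram.tangent q₂]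
  alternating : ∀ p : Plane, toPreDiagram.IsMultiplePoint p →
    ∃ q₁ q₂ q₃, toPreDiagram.passages p = {q₁, q₂, q₃} ∧
      ∃ a b c : ℝ, 0 < a ∧ 0 < b ∧ 0 < c ∧
        a • toPreDiagram.tangent q₁ + b • toPreDiagram.tangent q₂ +
          c • toPreDiagram.tangent q₃ = 0

/-- The number of triple points of a triple diagram. -/
def TripleDiagram.tripleCount (D : TripleDiagram na nl) : ℕ :=
  {p : Plane | D.toPreDiagram.IsMultiplePoint p}.ncard

/-- A triple diagram (with `n` arcs) realizes the bijection `σ` if its `i`-th arc runs from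
the 'in' point `v_{2i}` to the 'out' point `v_{2σ(i)+1}`. -/
def Realizes {n nl : ℕ} (D : TripleDiagram n nl) (σ : Equiv.Perm (Fin n)) : Prop :=
  ∀ i : Fin n, D.arc i 0 = bpoint n (2 * (i : ℕ)) ∧ D.arc i 1 = bpoint n (2 * (σ i : ℕ) + 1)

/-- `N(σ)`: the number of ordered pairs `(i,j)`, `i ≠ j`, such that with `a = 2i`, `b = 2j`,
`c = 2σ(i)+1`, `d = 2σ(j)+1` in `{0,…,2n−1}`, either `a < b < c < d` or `d < c < b < a`. -/
def Ncross (n : ℕ) (σ : Equiv.Perm (Fin n)) : ℕ :=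
  (Finset.univ.filter fun ij : Fin n × Fin n =>
    ij.1 ≠ ij.2 ∧
      ((2 * (ij.1 : ℕ) < 2 * (ij.2 : ℕ) ∧
        2 * (ij.2 : ℕ) < 2 * (σ ij.1 : ℕ) + 1 ∧
        2 * (σ ij.1 : ℕ) + 1 < 2 * (σ ij.2 : ℕ) + 1) ∨
       (2 * (σ ij.2 : ℕ) + 1 < 2 * (σ ij.1 : ℕ) + 1 ∧
        2 * (σ ij.1 : ℕ) + 1 < 2 * (ij.2 : ℕ) ∧
        2 * (ij.2 : ℕ) < 2 * (ij.1 : ℕ)))).card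

end

/-!
For arcs with indices `i < j`, the crossings counted with the signs of the determinants of the two
velocities are the zeros of `(s, t) ↦ γ_i s - γ_j t` on the unit square, counted with minus their
indices. The sum of the indices is the winding number along the boundary of the square. Two diagrams
with the same endpoints give maps whose quotient avoids the negative real axis there, so the signed
number of crossings of all such pairs depends only on the endpoints.

The alternation of the rays at a triple point makes its three crossings contribute at most `1` in
total. Without monogons and parallel bigons the initial parts of its three branches meet only at the
triple point; this embedded tripod reaches the circle in the cyclic order of the velocities, and the
contribution is exactly `1`. Hence such a diagram has the least possible number of triple points.

Conversely, the oriented smoothing of the crossing of two of the three branches at a triple point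
removes that triple point: by the alternation of the rays, the third branch passes between the two
new strands. Smoothing a monogon splits off a loop and keeps the endpoints of the arc. Smoothing a
crossing of two arcs exchanges their final endpoints, so smoothing both vertices of a parallel bigon
keeps `σ`.
-/

/-! ### Indices of zeros of planar maps -/

section Degree

open Filter Topology ComplexConjugate

lemma exists_continuousOn_eq_cexp {E : Type*} [AddCommGroup E] [Module ℝ E] [TopologicalSpace E]
    [IsTopologicalAddGroup E] [ContinuousSMul ℝ E] {S : Set E} {a : E} (hS : StarConvex ℝ a S)
    {F : E → ℂ} (hF : ContinuousOn F S) (hF0 : ∀ x ∈ S, F x ≠ 0) :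
    ∃ l : E → ℂ, ContinuousOn l S ∧ ∀ x ∈ S, F x = Complex.exp (l x) := by
  rcases S.eq_empty_or_nonempty with rfl | hne
  · simp
  have ha : a ∈ S := hS.mem hne
  have hseg (t : unitInterval) (x : S) : a + (t : ℝ) • ((x : E) - a) ∈ S :=
    hS.add_smul_sub_mem x.2 t.2.1 t.2.2
  let H : C(unitInterval × S, {z : ℂ // z ≠ 0}) :=
    ⟨fun q => ⟨F (a + (q.1 : ℝ) • ((q.2 : E) - a)), hF0 _ (hseg q.1 q.2)⟩,
      (hF.comp_continuous (f := fun q : unitInterval × S => a + (q.1 : ℝ) • ((q.2 : E) - a))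
        (by fun_prop) fun q => hseg q.1 q.2).subtype_mk _⟩
  let f : C(S, ℂ) := ContinuousMap.const S (Complex.log (F a))
  have hf (x : S) : H (0, x) = ⟨_, (f x).exp_ne_zero⟩ := by
    ext; simp [H, f, Complex.exp_log (hF0 a ha)]
  let L := Complex.isCoveringMap_exp.liftHomotopy H f hf
  have hL (x : S) : F x = Complex.exp (L (1, x)) := by
    have h : Complex.exp (L (1, x)) = F (a + (1 : ℝ) • ((x : E) - a)) := congrArg Subtype.val
      (congrFun (Complex.isCoveringMap_exp.liftHomotopy_lifts H f hf) (1, x))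
    rw [h, one_smul, add_sub_cancel]
  classical
  refine ⟨fun x => if h : x ∈ S then L (1, ⟨x, h⟩) else 0, ?_, fun x hx => by simp [hx, hL ⟨x, hx⟩]⟩
  rw [continuousOn_iff_continuous_domRestrict]
  convert L.continuous.comp (Continuous.prodMk_right (1 : unitInterval)) using 1
  ext x
  simp

/-- `F` has winding number `m` around the isolated point `z` of its domain of continuity: near `z`
it is a nonvanishing function with a continuous logarithm times `(x - z) ^ m`. -/
def HasIndexAt (F : ℂ → ℂ) (z : ℂ) (m : ℤ) : Prop :=
  ∃ l : ℂ → ℂ, ∀ᶠ x in 𝓝[≠] z, ContinuousAt l x ∧ F x = Complex.exp (l x) * (x - z) ^ m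

lemma HasIndexAt.congr {F G : ℂ → ℂ} {z : ℂ} {m : ℤ} (h : HasIndexAt F z m)
    (hFG : F =ᶠ[𝓝[≠] z] G) : HasIndexAt G z m := by
  obtain ⟨l, hl⟩ := h
  exact ⟨l, by filter_upwards [hl, hFG] with x hx hFG using ⟨hx.1, hFG ▸ hx.2⟩⟩

lemma HasIndexAt.mul {F G : ℂ → ℂ} {z : ℂ} {m k : ℤ} (hF : HasIndexAt F z m)
    (hG : HasIndexAt G z k) : HasIndexAt (fun x => F x * G x) z (m + k) := by
  obtain ⟨l, hl⟩ := hF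
  obtain ⟨l', hl'⟩ := hG
  refine ⟨fun x => l x + l' x, ?_⟩
  filter_upwards [hl, hl', self_mem_nhdsWithin] with x hx hx' hxz
  refine ⟨hx.1.add hx'.1, ?_⟩
  rw [hx.2, hx'.2, Complex.exp_add, zpow_add₀ (sub_ne_zero.2 hxz)]
  ring

lemma hasIndexAt_zero {F : ℂ → ℂ} {z : ℂ} (hF : ∀ᶠ x in 𝓝 z, ContinuousAt F x) (hz : F z ≠ 0) :
    HasIndexAt F z 0 := by
  -- rotating by `F z` puts the values of `F` near `z` in the domain of the principal logarithm
  have hslit : ∀ᶠ x in 𝓝 z, F x / F z ∈ Complex.slitPlane :=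
    (hF.self_of_nhds.div_const (F z)).eventually
      (Complex.isOpen_slitPlane.mem_nhds (by simp [hz, Complex.one_mem_slitPlane]))
  refine ⟨fun x => Complex.log (F x / F z) + Complex.log (F z),
    (hF.and hslit).filter_mono nhdsWithin_le_nhds |>.mono fun x hx => ⟨?_, ?_⟩⟩
  · exact ((hx.1.div_const _).clog hx.2).add continuousAt_const
  · rw [Complex.exp_add, Complex.exp_log (Complex.slitPlane_ne_zero hx.2), Complex.exp_log hz,
      zpow_zero, mul_one, div_mul_cancel₀ _ hz]

lemma HasIndexAt.of_eventuallyEq_mul_zpow {F G : ℂ → ℂ} {w z : ℂ} {m k : ℤ}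
    (hF : HasIndexAt F w m) (hwz : w ≠ z) (hFG : ∀ᶠ x in 𝓝 w, F x = G x * (x - z) ^ k) :
    HasIndexAt G w m := by
  have hne : ∀ᶠ x in 𝓝 w, x ≠ z := isOpen_ne.eventually_mem hwz
  have hpow : HasIndexAt (fun x => (x - z) ^ (-k)) w 0 :=
    hasIndexAt_zero (hne.mono fun x hx =>
      (continuousAt_id.sub continuousAt_const).zpow₀ _ (Or.inl (sub_ne_zero.2 hx)))
      (zpow_ne_zero _ (sub_ne_zero.2 hwz))
  refine add_zero m ▸ (hF.mul hpow).congr (nhdsWithin_le_nhds ?_)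
  filter_upwards [hFG, hne] with x hx hxz
  rw [hx, zpow_neg, mul_inv_cancel_right₀ (zpow_ne_zero _ (sub_ne_zero.2 hxz))]

lemma continuousAt_mul_of_mem_tsupport {X : Type*} [TopologicalSpace X] {φ l : X → ℂ} {x : X}
    (hφ : Continuous φ) (hl : x ∈ tsupport φ → ContinuousAt l x) :
    ContinuousAt (fun y => φ y * l y) x := by
  by_cases hx : x ∈ tsupport φ
  · exact hφ.continuousAt.mul (hl hx)
  · refine continuousAt_const.congr (f := fun _ => (0 : ℂ)) ?_
    filter_upwards [notMem_tsupport_iff_eventuallyEq.1 hx] with y hy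
    simp [hy]

lemma HasIndexAt.exists_factor {F : ℂ → ℂ} {z : ℂ} {m : ℤ} {K : Set ℂ} (h : HasIndexAt F z m)
    (hF : ContinuousOn F K) {r : ℝ} (hr : 0 < r) :
    ∃ G : ℂ → ℂ, ContinuousOn G K ∧ (∀ x, r ≤ dist x z → F x = G x * (x - z) ^ m) ∧
      ∀ x, G x = 0 → x ≠ z ∧ F x = 0 := by
  obtain ⟨l, hl⟩ := h
  obtain ⟨ρ', hρ', hlρ'⟩ := Metric.mem_nhdsWithin_iff.1 hl
  obtain ⟨ρ, hρ, hρr, hρρ'⟩ : ∃ ρ > 0, ρ ≤ r ∧ ρ ≤ ρ' :=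
    ⟨min r ρ', by positivity, by simp, by simp⟩
  let φ : ContDiffBump z := ⟨ρ / 3, 2 * ρ / 3, by positivity, by linarith⟩
  have hlφ (x : ℂ) (hx : x ∈ tsupport φ) (hxz : x ≠ z) :
      ContinuousAt l x ∧ F x = Complex.exp (l x) * (x - z) ^ m := by
    rw [φ.tsupport_eq, mem_closedBall] at hx
    exact hlρ' ⟨hx.trans_lt (by dsimp only [φ]; linarith), hxz⟩
  -- near `z` the logarithm is cut off, so that `G` becomes constant there
  let G : ℂ → ℂ := Function.update (fun x => F x / (x - z) ^ m * Complex.exp (-(φ x * l x))) z 1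
  have hGz : G z = 1 := Function.update_self ..
  have hG {x : ℂ} (hx : x ≠ z) : G x = F x / (x - z) ^ m * Complex.exp (-(φ x * l x)) :=
    Function.update_of_ne hx ..
  have hpow {x : ℂ} (hx : x ≠ z) : (x - z) ^ m ≠ 0 := zpow_ne_zero _ (sub_ne_zero.2 hx)
  have hG_near : ∀ᶠ x in 𝓝 z, G x = 1 := by
    filter_upwards [φ.eventuallyEq_one, φ.support_eq ▸ ball_mem_nhds z φ.rOut_pos] with x hφ hx
    rcases eq_or_ne x z with rfl | hxz
    · exact hGz
    · rw [hG hxz, (hlφ x (subset_tsupport _ hx) hxz).2, mul_div_cancel_right₀ _ (hpow hxz), hφ,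
        ← Complex.exp_add]
      simp
  refine ⟨G, fun x hx => ?_, fun x hx => ?_, fun x hx => ?_⟩
  · rcases eq_or_ne x z with rfl | hxz
    · exact (continuousAt_const.congr (hG_near.mono fun _ h => h.symm)).continuousWithinAt
    have hφl : ContinuousAt (fun y => (φ y : ℂ) * l y) x :=
      continuousAt_mul_of_mem_tsupport (Complex.continuous_ofReal.comp φ.continuous) fun hxφ =>
        (hlφ x (tsupport_comp_subset Complex.ofReal_zero φ hxφ) hxz).1
    have hcont : ContinuousAt (fun y => (y - z) ^ m) x :=
      (continuousAt_id.sub continuousAt_const).zpow₀ _ (Or.inl (sub_ne_zero.2 hxz))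
    refine (((hF x hx).div hcont.continuousWithinAt (hpow hxz)).mul
      hφl.neg.cexp.continuousWithinAt).congr_of_eventuallyEq ?_ (hG hxz)
    filter_upwards [nhdsWithin_le_nhds (isOpen_ne.mem_nhds hxz)] with y hy using hG hy
  · have hxz : x ≠ z := dist_pos.1 (hr.trans_le hx)
    rw [hG hxz, φ.zero_of_le_dist (by dsimp only [φ]; linarith)]
    simp [hpow hxz]
  · rcases eq_or_ne x z with rfl | hxz
    · simp [hGz] at hx
    · exact ⟨hxz, by simpa [hG hxz, hpow hxz] using hx⟩

lemma HasIndexAt.eventually_continuousAt {F : ℂ → ℂ} {z : ℂ} {m : ℤ} (h : HasIndexAt F z m) :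
    ∀ᶠ x in 𝓝[≠] z, ContinuousAt F x := by
  obtain ⟨l, hl⟩ := h
  filter_upwards [eventually_eventually_nhdsWithin.2 hl, self_mem_nhdsWithin] with x hx hxz
  rw [isOpen_compl_singleton.nhdsWithin_eq hxz] at hx
  exact (hx.self_of_nhds.1.cexp.mul ((continuousAt_id.sub continuousAt_const).zpow₀ _
    (Or.inl (sub_ne_zero.2 hxz)))).congr (hx.mono fun _ hy => hy.2.symm)

lemma HasIndexAt.of_norm_sub_lt {F G : ℂ → ℂ} {z : ℂ} {m : ℤ} (hG : HasIndexAt G z m)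
    (hF : ∀ᶠ x in 𝓝[≠] z, ContinuousAt F x) (hFG : ∀ᶠ x in 𝓝[≠] z, ‖F x - G x‖ < ‖G x‖) :
    HasIndexAt F z m := by
  have hGc := hG.eventually_continuousAt
  obtain ⟨l, hl⟩ := hG
  refine ⟨fun x => l x + Complex.log (F x / G x), ?_⟩
  filter_upwards [hl, hF, hGc, hFG] with x hlx hFx hGx hlt
  have hG0 : G x ≠ 0 := norm_pos_iff.1 ((norm_nonneg _).trans_lt hlt)
  have hslit : F x / G x ∈ Complex.slitPlane := by
    rw [← add_sub_cancel (G x) (F x), add_div, div_self hG0]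
    exact Complex.mem_slitPlane_of_norm_lt_one (by rwa [norm_div, div_lt_one (norm_pos_iff.2 hG0)])
  refine ⟨hlx.1.add ((hFx.div hGx hG0).clog hslit), ?_⟩
  rw [Complex.exp_add, Complex.exp_log (Complex.slitPlane_ne_zero hslit), mul_right_comm, ← hlx.2,
    mul_div_cancel₀ _ hG0]

lemma hasIndexAt_one_mul_sub {α : ℂ} (hα : α ≠ 0) (z : ℂ) :
    HasIndexAt (fun x => α * (x - z)) z 1 :=
  ⟨fun _ => Complex.log α, .of_forall fun x => ⟨continuousAt_const, by
    simp [Complex.exp_log hα]⟩⟩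

lemma hasIndexAt_neg_one_mul_conj_sub {β : ℂ} (hβ : β ≠ 0) (z : ℂ) :
    HasIndexAt (fun x => β * conj (x - z)) z (-1) := by
  -- `conj w = ‖w‖ ^ 2 * w⁻¹`
  refine ⟨fun x => Complex.log β + (2 * Real.log ‖x - z‖ : ℝ), ?_⟩
  filter_upwards [self_mem_nhdsWithin] with x hx
  have hxz : x - z ≠ 0 := sub_ne_zero.2 hx
  refine ⟨continuousAt_const.add (Complex.continuous_ofReal.continuousAt.comp
    (continuousAt_const.mul (ContinuousAt.log (by fun_prop) (norm_ne_zero_iff.2 hxz)))), ?_⟩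
  rw [Complex.exp_add, Complex.exp_log hβ, ← Complex.ofReal_exp, two_mul, Real.exp_add,
    Real.exp_log (norm_pos_iff.2 hxz), mul_assoc, zpow_neg_one, ← pow_two, Complex.ofReal_pow,
    ← Complex.conj_mul', mul_inv_cancel_right₀ hxz]

lemma HasIndexAt.of_sub_sub_isLittleO {F L M : ℂ → ℂ} {z : ℂ} {m : ℤ} (hL : HasIndexAt L z m)
    {a b : ℝ} (hLa : ∀ x, ‖L x‖ = a * ‖x - z‖) (hMb : ∀ x, ‖M x‖ = b * ‖x - z‖) (hba : b < a)
    (hF : ∀ᶠ x in 𝓝[≠] z, ContinuousAt F x)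
    (hFLM : (fun x => F x - L x - M x) =o[𝓝 z] fun x => x - z) : HasIndexAt F z m := by
  refine hL.of_norm_sub_lt hF ?_
  filter_upwards [nhdsWithin_le_nhds (hFLM.bound (half_pos (sub_pos.2 hba))), self_mem_nhdsWithin]
    with x hx hxz
  have hpos : 0 < ‖x - z‖ := norm_pos_iff.2 (sub_ne_zero.2 hxz)
  calc ‖F x - L x‖ = ‖F x - L x - M x + M x‖ := by rw [sub_add_cancel]
    _ ≤ (a - b) / 2 * ‖x - z‖ + b * ‖x - z‖ := (norm_add_le _ _).trans (by rw [hMb]; gcongr)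
    _ < a * ‖x - z‖ := by nlinarith
    _ = ‖L x‖ := (hLa x).symm

lemma isLittleO_sub_sub_conj {g h : ℝ → ℂ} {u v z : ℂ} (hg : HasDerivAt g u z.re)
    (hh : HasDerivAt h v z.im) (hgh : g z.re = h z.im) :
    (fun x : ℂ => g x.re - h x.im - (u + Complex.I * v) / 2 * (x - z)
      - (u - Complex.I * v) / 2 * conj (x - z)) =o[𝓝 z] fun x => x - z := by
  have hre : (fun x : ℂ => x.re - z.re) =O[𝓝 z] fun x => x - z :=
    .of_bound' (.of_forall fun x => by simpa using Complex.abs_re_le_norm (x - z))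
  have him : (fun x : ℂ => x.im - z.im) =O[𝓝 z] fun x => x - z :=
    .of_bound' (.of_forall fun x => by simpa using Complex.abs_im_le_norm (x - z))
  have hg' := (hg.isLittleO.comp_tendsto (Complex.continuous_re.tendsto z)).trans_isBigO hre
  have hh' := (hh.isLittleO.comp_tendsto (Complex.continuous_im.tendsto z)).trans_isBigO him
  refine (hg'.sub hh').congr_left fun x => ?_
  simp only [Function.comp_apply, hgh]
  apply Complex.ext <;> simp <;> ring

lemma hasIndexAt_sub_of_hasDerivAt {g h : ℝ → ℂ} {u v z : ℂ} (hg : HasDerivAt g u z.re)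
    (hh : HasDerivAt h v z.im) (hgh : g z.re = h z.im) (huv : (conj u * v).im ≠ 0)
    (hgc : ∀ᶠ s in 𝓝 z.re, ContinuousAt g s) (hhc : ∀ᶠ t in 𝓝 z.im, ContinuousAt h t) :
    HasIndexAt (fun x => g x.re - h x.im) z (-SignType.sign (conj u * v).im) := by
  -- `g x.re - h x.im` is `α * (x - z) + β * conj (x - z)` to first order
  set α := (u + Complex.I * v) / 2 with hα
  set β := (u - Complex.I * v) / 2 with hβ
  have hαβ : ‖β‖ ^ 2 - ‖α‖ ^ 2 = (conj u * v).im := by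
    rw [← Complex.normSq_eq_norm_sq, ← Complex.normSq_eq_norm_sq, hα, hβ]
    simp only [Complex.normSq_apply, Complex.div_ofNat_re, Complex.div_ofNat_im, Complex.add_re,
      Complex.add_im, Complex.sub_re, Complex.sub_im, Complex.mul_re, Complex.mul_im,
      Complex.I_re, Complex.I_im, Complex.conj_re, Complex.conj_im]
    ring
  have hF : ∀ᶠ x in 𝓝[≠] z, ContinuousAt (fun x : ℂ => g x.re - h x.im) x := by
    filter_upwards [nhdsWithin_le_nhds (Complex.continuous_re.continuousAt.eventually hgc),
      nhdsWithin_le_nhds (Complex.continuous_im.continuousAt.eventually hhc)] with x hgx hhx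
    exact (hgx.comp Complex.continuous_re.continuousAt).sub
      (hhx.comp Complex.continuous_im.continuousAt)
  have hlin := isLittleO_sub_sub_conj hg hh hgh
  have hnα (x : ℂ) : ‖α * (x - z)‖ = ‖α‖ * ‖x - z‖ := norm_mul ..
  have hnβ (x : ℂ) : ‖β * conj (x - z)‖ = ‖β‖ * ‖x - z‖ := by rw [norm_mul, Complex.norm_conj]
  rcases huv.lt_or_gt with hneg | hpos
  · have hlt : ‖β‖ < ‖α‖ := lt_of_pow_lt_pow_left₀ 2 (norm_nonneg _) (by linarith)
    rw [sign_neg hneg]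
    exact (hasIndexAt_one_mul_sub (norm_pos_iff.1 ((norm_nonneg β).trans_lt hlt)) z)
      |>.of_sub_sub_isLittleO hnα hnβ hlt hF hlin
  · have hlt : ‖α‖ < ‖β‖ := lt_of_pow_lt_pow_left₀ 2 (norm_nonneg _) (by linarith)
    rw [sign_pos hpos]
    exact (hasIndexAt_neg_one_mul_conj_sub (norm_pos_iff.1 ((norm_nonneg α).trans_lt hlt)) z)
      |>.of_sub_sub_isLittleO hnβ hnα hlt hF (hlin.congr_left fun x => sub_right_comm ..)

lemma div_mem_slitPlane_of_re_pos {a b : ℂ} (ha : 0 < a.re) (hb : 0 < b.re) :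
    a / b ∈ Complex.slitPlane := by
  have hb0 : b ≠ 0 := by rintro rfl; simp at hb
  rw [Complex.mem_slitPlane_iff_not_le_zero]
  intro h
  have ha' : a.re ≤ 0 := by
    rw [← div_mul_cancel₀ a hb0, Complex.mul_re, (Complex.le_def.1 h).2]
    simpa using mul_nonpos_of_nonpos_of_nonneg (Complex.le_def.1 h).1 hb.le
  linarith

lemma sub_div_sub_mem_slitPlane_of_mem_frontier {K : Set ℂ} (hK : Convex ℝ K) {z c x : ℂ}
    (hz : z ∈ interior K) (hc : c ∈ interior K) (hx : x ∈ frontier K) :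
    (x - z) / (x - c) ∈ Complex.slitPlane := by
  -- a line through `x` has `z` and `c` on one side
  obtain ⟨f, hf⟩ := geometric_hahn_banach_open_point hK.interior isOpen_interior hx.2
  obtain ⟨w, hw⟩ : ∃ w : ℂ, ∀ v : ℂ, f v = (w * v).re :=
    ⟨⟨f 1, -f Complex.I⟩, fun v => by
      have hv : v = v.re • (1 : ℂ) + v.im • Complex.I := by simp [Complex.re_add_im]
      rw [hv, map_add, map_smul, map_smul]
      simp [mul_comm]⟩
  have hpos {y : ℂ} (hy : y ∈ interior K) : 0 < (w * (x - y)).re := by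
    rw [← hw, map_sub]
    linarith [hf y hy]
  have hw0 : w ≠ 0 := by rintro rfl; simpa using hpos hz
  simpa [mul_div_mul_left _ _ hw0] using div_mem_slitPlane_of_re_pos (hpos hz) (hpos hc)

lemma exists_continuousOn_frontier_zpow_sub_eq {K : Set ℂ} (hK : Convex ℝ K) {z c : ℂ}
    (hz : z ∈ interior K) (hc : c ∈ interior K) (m : ℤ) :
    ∃ l : ℂ → ℂ, ContinuousOn l (frontier K) ∧
      ∀ x ∈ frontier K, (x - z) ^ m = Complex.exp (l x) * (x - c) ^ m := by
  have hslit {x : ℂ} (hx : x ∈ frontier K) : (x - z) / (x - c) ∈ Complex.slitPlane :=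
    sub_div_sub_mem_slitPlane_of_mem_frontier hK hz hc hx
  have hne {x : ℂ} (hx : x ∈ frontier K) : x - c ≠ 0 := sub_ne_zero.2 fun h => hx.2 (h ▸ hc)
  refine ⟨fun x => m * Complex.log ((x - z) / (x - c)), ?_, fun x hx => ?_⟩
  · exact continuousOn_const.mul (ContinuousOn.clog
      ((continuousOn_id.sub continuousOn_const).div (continuousOn_id.sub continuousOn_const)
        fun x hx => hne hx) fun x hx => hslit hx)
  · rw [Complex.exp_int_mul, Complex.exp_log (Complex.slitPlane_ne_zero (hslit hx)), ← mul_zpow,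
      div_mul_cancel₀ _ (hne hx)]

lemma exists_continuousOn_frontier_eq_cexp_mul_zpow {K : Set ℂ} (hK : Convex ℝ K)
    (hKc : IsClosed K) {c : ℂ} (hc : c ∈ interior K) (Z : Finset ℂ) (m : ℂ → ℤ) {F : ℂ → ℂ}
    (hF : ContinuousOn F K) (hZ : ∀ z ∈ Z, z ∈ interior K ∧ HasIndexAt F z (m z))
    (hF0 : ∀ x ∈ K, x ∉ Z → F x ≠ 0) :
    ∃ l : ℂ → ℂ, ContinuousOn l (frontier K) ∧
      ∀ x ∈ frontier K, F x = Complex.exp (l x) * (x - c) ^ ∑ z ∈ Z, m z := by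
  classical
  induction Z using Finset.induction_on generalizing F with
  | empty =>
    obtain ⟨l, hl, hFl⟩ := exists_continuousOn_eq_cexp (hK.starConvex (interior_subset hc)) hF
      fun x hx => hF0 x hx (by simp)
    exact ⟨l, hl.mono hKc.frontier_subset, fun x hx => by
      simpa using hFl x (hKc.frontier_subset hx)⟩
  | insert z Z hzZ ih =>
    obtain ⟨hz, hzm⟩ := hZ z (by simp)
    obtain ⟨r, hr, hrK⟩ := Metric.mem_nhds_iff.1
      (inter_mem (isOpen_interior.mem_nhds hz) (Z.isClosed.isOpen_compl.mem_nhds hzZ))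
    have hfar {x : ℂ} (hx : x ∈ interior K → x ∈ Z) : r / 2 < dist x z := by
      by_contra! hlt
      have hxK := hrK (mem_ball.2 (hlt.trans_lt (half_lt_self hr)))
      exact hxK.2 (hx hxK.1)
    obtain ⟨G, hG, hFG, hG0⟩ := hzm.exists_factor hF (half_pos hr)
    have hGZ (w : ℂ) (hw : w ∈ Z) : w ∈ interior K ∧ HasIndexAt G w (m w) := by
      obtain ⟨hwK, hwm⟩ := hZ w (by simp [hw])
      have hdist : ∀ᶠ x in 𝓝 w, r / 2 < dist x z :=
        (continuous_id.dist continuous_const).continuousAt.eventually_const_lt (hfar fun _ => hw)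
      exact ⟨hwK, hwm.of_eventuallyEq_mul_zpow (by rintro rfl; exact hzZ hw)
        (hdist.mono fun x hx => hFG x hx.le)⟩
    obtain ⟨l, hl, hGl⟩ := ih hG hGZ fun x hx hxZ hGx =>
      hF0 x hx (by simpa [(hG0 x hGx).1] using hxZ) (hG0 x hGx).2
    obtain ⟨l', hl', hzl'⟩ := exists_continuousOn_frontier_zpow_sub_eq hK hz hc (m z)
    refine ⟨fun x => l x + l' x, hl.add hl', fun x hx => ?_⟩
    have hne : x - c ≠ 0 := sub_ne_zero.2 fun h => hx.2 (h ▸ hc)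
    rw [hFG x (hfar fun h => (hx.2 h).elim).le, hGl x hx, hzl' x hx, Complex.exp_add,
      Finset.sum_insert hzZ, zpow_add₀ hne]
    ring

lemma exists_polar_frontier {K : Set ℂ} (hK : Convex ℝ K) (hKb : Bornology.IsBounded K) {c : ℂ}
    (hc : c ∈ interior K) :
    ∃ ρ : ℝ → ℝ, Continuous ρ ∧ (∀ θ, 0 < ρ θ) ∧ Function.Periodic ρ (2 * π) ∧
      ∀ θ, c + ρ θ * Complex.exp (θ * Complex.I) ∈ frontier K := by
  let e : ℂ ≃ₜ ℂ := Homeomorph.addLeft c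
  have hK₀ : Convex ℝ (e ⁻¹' K) := by simpa [e] using hK.translate_preimage_right c
  have hnhds : e ⁻¹' K ∈ 𝓝 0 := e.continuous.continuousAt (by
    simpa [e] using mem_interior_iff_mem_nhds.1 hc)
  have hb : Bornology.IsVonNBounded ℝ (e ⁻¹' K) := by
    rw [NormedSpace.isVonNBounded_iff]
    exact (Isometry.antilipschitz (IsometryEquiv.addLeft c).isometry).isBounded_preimage hKb
  have hgauge (θ : ℝ) : 0 < gauge (e ⁻¹' K) (Complex.exp (θ * Complex.I)) :=
    (gauge_pos (absorbent_nhds_zero hnhds) hb).2 (Complex.exp_ne_zero _)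
  refine ⟨fun θ => (gauge (e ⁻¹' K) (Complex.exp (θ * Complex.I)))⁻¹,
    ((continuous_gauge hK₀ hnhds).comp (by fun_prop)).inv₀ fun θ => (hgauge θ).ne',
    fun θ => inv_pos.2 (hgauge θ), fun θ => ?_, fun θ => ?_⟩
  · simp [add_mul, Complex.exp_add]
  · change e _ ∈ _
    rw [← mem_preimage, e.preimage_frontier, ← gauge_eq_one_iff_mem_frontier hK₀ hnhds,
      ← Complex.real_smul, gauge_smul_of_nonneg (inv_nonneg.2 (hgauge θ).le), smul_eq_mul,
      inv_mul_cancel₀ (hgauge θ).ne']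

lemma eq_zero_of_zpow_eq_cexp_on_frontier {K : Set ℂ} (hK : Convex ℝ K)
    (hKb : Bornology.IsBounded K) {c : ℂ} (hc : c ∈ interior K) {m : ℤ} {l : ℂ → ℂ}
    (hl : ContinuousOn l (frontier K))
    (hlm : ∀ x ∈ frontier K, (x - c) ^ m = Complex.exp (l x)) : m = 0 := by
  obtain ⟨ρ, hρ, hρ0, hρper, hρK⟩ := exists_polar_frontier hK hKb hc
  -- along `θ ↦ c + ρ θ * exp (θ * I)` the two logarithms of `(x - c) ^ m` differ by a constant
  let k : ℝ → ℂ := fun θ =>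
    l (c + ρ θ * Complex.exp (θ * Complex.I)) - m * (Real.log (ρ θ) + θ * Complex.I)
  have hk : Continuous k := by
    have hlog : Continuous fun θ => Real.log (ρ θ) := hρ.log fun θ => (hρ0 θ).ne'
    exact (hl.comp_continuous (by fun_prop) hρK).sub (by fun_prop)
  have hexp (θ : ℝ) : Complex.exp (k θ) = 1 := by
    rw [Complex.exp_sub, ← hlm _ (hρK θ), Complex.exp_int_mul, Complex.exp_add,
      ← Complex.ofReal_exp, Real.exp_log (hρ0 θ), add_sub_cancel_left, div_self]
    exact zpow_ne_zero _ (mul_ne_zero (by exact_mod_cast (hρ0 θ).ne') (Complex.exp_ne_zero _))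
  have hconst : k (2 * π) = k 0 := Complex.isCoveringMap_exp.const_of_comp hk
    (fun θ φ => by simp only [hexp]) _ _
  have hρ2π : ρ (2 * π) = ρ 0 := hρper.eq
  simpa [k, hρ2π, mul_add, Real.pi_ne_zero] using hconst

theorem sum_index_eq_of_div_mem_slitPlane {K : Set ℂ} (hK : Convex ℝ K) (hKc : IsClosed K)
    (hKb : Bornology.IsBounded K) {c : ℂ} (hc : c ∈ interior K) {Z Z' : Finset ℂ} {m m' : ℂ → ℤ}
    {F F' : ℂ → ℂ} (hF : ContinuousOn F K) (hF' : ContinuousOn F' K)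
    (hZ : ∀ z ∈ Z, z ∈ interior K ∧ HasIndexAt F z (m z))
    (hZ' : ∀ z ∈ Z', z ∈ interior K ∧ HasIndexAt F' z (m' z))
    (hF0 : ∀ x ∈ K, x ∉ Z → F x ≠ 0) (hF0' : ∀ x ∈ K, x ∉ Z' → F' x ≠ 0)
    (hslit : ∀ x ∈ frontier K, F' x / F x ∈ Complex.slitPlane) :
    ∑ z ∈ Z, m z = ∑ z ∈ Z', m' z := by
  obtain ⟨l, hl, hFl⟩ := exists_continuousOn_frontier_eq_cexp_mul_zpow hK hKc hc Z m hF hZ hF0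
  obtain ⟨l', hl', hFl'⟩ :=
    exists_continuousOn_frontier_eq_cexp_mul_zpow hK hKc hc Z' m' hF' hZ' hF0'
  have hFK {x : ℂ} (hx : x ∈ frontier K) : F x ≠ 0 := fun h => by simpa [h] using hslit x hx
  have hdiv : ContinuousOn (fun x => F' x / F x) (frontier K) :=
    (hF'.mono hKc.frontier_subset).div (hF.mono hKc.frontier_subset) fun x hx => hFK hx
  refine eq_of_sub_eq_zero (eq_zero_of_zpow_eq_cexp_on_frontier hK hKb hc
    (l := fun x => l' x - l x - Complex.log (F' x / F x)) ((hl'.sub hl).sub (hdiv.clog hslit))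
    fun x hx => ?_)
  have hne : x - c ≠ 0 := sub_ne_zero.2 fun h => hx.2 (h ▸ hc)
  rw [Complex.exp_sub, Complex.exp_sub, Complex.exp_log (Complex.slitPlane_ne_zero (hslit x hx)),
    eq_div_iff (Complex.slitPlane_ne_zero (hslit x hx)), eq_div_iff (Complex.exp_ne_zero _),
    zpow_sub₀ hne, hFl x hx, hFl' x hx]
  field_simp [zpow_ne_zero _ hne]

end Degree

/-! ### Embedded tripods in the disk -/

section HalfArcs

open Filter Topology ComplexConjugate

/-- `l` is the continuous logarithm, normalized by `l x₀ = 0`, of the quotient of `F` by its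
linearization `A` at its zero `x₀`. -/
structure IsTangentLog {E : Type*} [NormedAddCommGroup E] [NormedSpace ℝ E] (l F : E → ℂ)
    (A : E →L[ℝ] ℂ) (S : Set E) (x₀ : E) : Prop where
  continuousOn : ContinuousOn l S
  apply_base : l x₀ = 0
  eq_cexp_mul : ∀ x ∈ S, F x = Complex.exp (l x) * A (x - x₀)

section IsTangentLog

variable {E : Type*} [NormedAddCommGroup E] [NormedSpace ℝ E] {l l' F : E → ℂ}
  {A : E →L[ℝ] ℂ} {S : Set E} {x₀ : E}

lemma IsTangentLog.eqOn (h : IsTangentLog l F A S x₀) (h' : IsTangentLog l' F A S x₀)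
    (hA : Function.Injective A) (hS : IsPreconnected S) (hx₀ : x₀ ∈ S) : EqOn l l' S := by
  have hexp {x : E} (hx : x ∈ S) : Complex.exp (l x - l' x) = 1 := by
    rw [Complex.exp_sub, div_eq_one_iff_eq (Complex.exp_ne_zero _)]
    rcases eq_or_ne x x₀ with rfl | hne
    · rw [h.apply_base, h'.apply_base]
    · refine mul_right_cancel₀ (b := A (x - x₀)) ?_
        ((h.eq_cexp_mul x hx).symm.trans (h'.eq_cexp_mul x hx))
      exact (map_ne_zero_iff A hA).2 (sub_ne_zero.2 hne)
  intro x hx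
  have hconst := Complex.isCoveringMap_exp.constOn_of_comp hS
    (h.continuousOn.sub h'.continuousOn)
    (fun y hy z hz => Subtype.ext ((hexp hy).trans (hexp hz).symm)) hx hx₀
  simpa [h.apply_base, h'.apply_base, sub_eq_zero] using hconst

lemma IsTangentLog.exists [FiniteDimensional ℝ E] (hS : StarConvex ℝ x₀ S)
    (hF : ContinuousOn F S) (hFA : HasFDerivWithinAt F A S x₀) (hA : Function.Injective A)
    (hF0 : ∀ x ∈ S, F x = 0 ↔ x = x₀) : ∃ l, IsTangentLog l F A S x₀ := by
  classical
  rcases S.eq_empty_or_nonempty with rfl | hne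
  · exact ⟨0, continuousOn_empty _, rfl, by simp⟩
  have hx₀ : x₀ ∈ S := hS.mem hne
  have hA0 {x : E} (hx : x ≠ x₀) : A (x - x₀) ≠ 0 :=
    (map_ne_zero_iff A hA).2 (sub_ne_zero.2 hx)
  have hFx₀ : F x₀ = 0 := (hF0 x₀ hx₀).2 rfl
  obtain ⟨c, -, hc⟩ := A.toLinearMap.exists_antilipschitzWith (LinearMap.ker_eq_bot.2 hA)
  have hbig : (fun x => x - x₀) =O[𝓝[S \ {x₀}] x₀] fun x => A (x - x₀) :=
    .of_bound c (.of_forall fun x => hc.le_mul_norm (map_zero _) _)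
  have hlim : Tendsto (fun x => F x / A (x - x₀)) (𝓝[S \ {x₀}] x₀) (𝓝 1) := by
    refine (Asymptotics.isEquivalent_iff_tendsto_one ?_).1 ?_
    · filter_upwards [self_mem_nhdsWithin] with x hx using hA0 hx.2
    · refine ((hFA.isLittleO.mono (nhdsWithin_mono _ sdiff_subset)).trans_isBigO hbig).congr_left
        fun x => ?_
      simp [hFx₀]
  let H : E → ℂ := Function.update (fun x => F x / A (x - x₀)) x₀ 1
  have hHx₀ : H x₀ = 1 := Function.update_self ..
  have hH {x : E} (hx : x ≠ x₀) : H x = F x / A (x - x₀) := Function.update_of_ne hx ..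
  have hHc : ContinuousOn H S := by
    rw [continuousOn_update_iff]
    exact ⟨(hF.mono sdiff_subset).div (by fun_prop) fun x hx => hA0 hx.2, fun _ => hlim⟩
  have hH0 (x : E) (hx : x ∈ S) : H x ≠ 0 := by
    rcases eq_or_ne x x₀ with rfl | hxx₀
    · simp [hHx₀]
    · rw [hH hxx₀]
      exact div_ne_zero (mt (hF0 x hx).1 hxx₀) (hA0 hxx₀)
  obtain ⟨l, hl, hHl⟩ := exists_continuousOn_eq_cexp hS hHc hH0
  refine ⟨fun x => l x - l x₀, hl.sub continuousOn_const, sub_self _, fun x hx => ?_⟩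
  rw [Complex.exp_sub, ← hHl x hx, ← hHl x₀ hx₀, hHx₀, div_one]
  rcases eq_or_ne x x₀ with rfl | hxx₀
  · simp [hFx₀]
  · rw [hH hxx₀, div_mul_cancel₀ _ (hA0 hxx₀)]

lemma IsTangentLog.comp {E' : Type*} [NormedAddCommGroup E'] [NormedSpace ℝ E'] {g : E' → E}
    {A' : E' →L[ℝ] ℂ} {S' : Set E'} {y₀ : E'} (h : IsTangentLog l F A S x₀)
    (hg : ContinuousOn g S') (hmaps : MapsTo g S' S) (hy₀ : g y₀ = x₀)
    (hA : ∀ y, A (g y - x₀) = A' (y - y₀)) : IsTangentLog (l ∘ g) (F ∘ g) A' S' y₀ where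
  continuousOn := h.continuousOn.comp hg hmaps
  apply_base := by rw [Function.comp_apply, hy₀, h.apply_base]
  eq_cexp_mul y hy := by
    rw [← hA]
    exact h.eq_cexp_mul (g y) (hmaps hy)

lemma IsTangentLog.neg (h : IsTangentLog l F A S x₀) : IsTangentLog l (-F) (-A) S x₀ where
  continuousOn := h.continuousOn
  apply_base := h.apply_base
  eq_cexp_mul x hx := by
    rw [Pi.neg_apply, h.eq_cexp_mul x hx, neg_apply, mul_neg]

end IsTangentLog

lemma log_one_add_sub_log_one_add_inv {q : ℂ} (hq : q ∈ Complex.slitPlane) :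
    Complex.log (1 + q) - Complex.log (1 + q⁻¹) = Complex.log q := by
  have hadd {q : ℂ} (hq : q ∈ Complex.slitPlane) : 1 + q ∈ Complex.slitPlane := by
    rcases Complex.mem_slitPlane_iff.1 hq with h | h
    · exact Or.inl (by simpa using by linarith)
    · exact Or.inr (by simpa using h)
  have hinv {q : ℂ} (hq : q ∈ Complex.slitPlane) : q⁻¹ ∈ Complex.slitPlane := by
    have harg := (Complex.mem_slitPlane_iff_arg.1 hq).1
    refine Complex.mem_slitPlane_iff_arg.2 ⟨?_, inv_ne_zero (Complex.slitPlane_ne_zero hq)⟩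
    rw [Complex.arg_inv, if_neg harg]
    exact (neg_lt.1 (Complex.neg_pi_lt_arg q)).ne
  have hcont : ContinuousOn (fun q : ℂ =>
      Complex.log (1 + q) - Complex.log (1 + q⁻¹) - Complex.log q) Complex.slitPlane :=
    (((continuousOn_const.add continuousOn_id).clog fun q hq => hadd hq).sub
      ((continuousOn_const.add (continuousOn_id.inv₀ fun q hq =>
        Complex.slitPlane_ne_zero hq)).clog fun q hq => hadd (hinv hq))).sub
      (continuousOn_id.clog fun q hq => hq)
  have hexp (q : ℂ) (hq : q ∈ Complex.slitPlane) :
      Complex.exp (Complex.log (1 + q) - Complex.log (1 + q⁻¹) - Complex.log q) = 1 := by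
    have hq0 := Complex.slitPlane_ne_zero hq
    have h1 := Complex.slitPlane_ne_zero (hadd (hinv hq))
    rw [Complex.exp_sub, Complex.exp_sub, Complex.exp_log (Complex.slitPlane_ne_zero (hadd hq)),
      Complex.exp_log h1, Complex.exp_log hq0, div_div, div_eq_one_iff_eq (mul_ne_zero h1 hq0)]
    field_simp
    ring
  have hconst := Complex.isCoveringMap_exp.constOn_of_comp
    (Complex.starConvex_one_slitPlane.isPathConnected
      Complex.one_mem_slitPlane).isConnected.isPreconnected hcont
    (fun y hy z hz => Subtype.ext ((hexp y hy).trans (hexp z hz).symm)) hq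
    Complex.one_mem_slitPlane
  simpa [sub_eq_zero] using hconst

/-- A path in the closed unit disk from the unit circle to the point `p`, arriving there with
nonzero velocity `u`. -/
structure HalfArc (α : ℝ → ℂ) (p u : ℂ) : Prop where
  continuousOn : ContinuousOn α (Icc 0 1)
  apply_one : α 1 = p
  hasDerivAt : HasDerivAt α u 1
  norm_le : ∀ s ∈ Icc (0 : ℝ) 1, ‖α s‖ ≤ 1
  norm_zero : ‖α 0‖ = 1
  velocity_ne : u ≠ 0

lemma div_re_pos_of_norm_le_one {z w : ℂ} (hz : ‖z‖ = 1) (hw : ‖w‖ ≤ 1) (hne : w ≠ z) :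
    0 < ((z - w) / z).re := by
  have hz0 : z ≠ 0 := norm_pos_iff.1 (by simp [hz])
  have hn : ‖w / z‖ ≤ 1 := by rwa [norm_div, hz, div_one]
  rw [sub_div, div_self hz0, Complex.sub_re, Complex.one_re, sub_pos]
  refine ((Complex.re_le_norm _).trans hn).lt_of_ne fun h => hne ?_
  have him := (Complex.le_def.1 (Complex.re_eq_norm.1
    ((Complex.re_le_norm _).antisymm (hn.trans h.ge)))).2
  rw [← div_eq_one_iff_eq hz0]
  exact Complex.ext h (by simpa using him.symm)

lemma neg_div_mem_slitPlane_of_norm_eq_one {z w : ℂ} (hz : ‖z‖ = 1) (hw : ‖w‖ = 1)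
    (hne : w ≠ z) : -w / z ∈ Complex.slitPlane := by
  have hz0 : z ≠ 0 := norm_pos_iff.1 (by simp [hz])
  have hpos := div_re_pos_of_norm_le_one hz hw.le hne
  have hnorm : ‖-w / z‖ = 1 := by rw [norm_div, norm_neg, hz, hw, div_one]
  rw [Complex.mem_slitPlane_iff, or_iff_not_imp_right, not_not]
  intro him
  rcases abs_eq (zero_le_one' ℝ) |>.1 ((Complex.abs_re_eq_norm.2 him).trans hnorm) with h | h
  · rw [h]
    exact one_pos
  · rw [sub_div, div_self hz0, sub_eq_add_neg, ← neg_div, Complex.add_re, h] at hpos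
    simp at hpos

lemma im_div_ne_zero {u v : ℂ} (huv : (conj u * v).im ≠ 0) : (v / u).im ≠ 0 := by
  have h : v / u = (Complex.normSq u)⁻¹ * (conj u * v) := by
    rw [div_eq_mul_inv, Complex.inv_def]
    push_cast
    ring
  have hu : u ≠ 0 := by rintro rfl; simp at huv
  rw [h, Complex.im_ofReal_mul]
  exact mul_ne_zero (inv_ne_zero (Complex.normSq_pos.2 hu).ne') huv

lemma one_add_ofReal_mul_mem_slitPlane {w : ℂ} (hw : w.im ≠ 0) (t : ℝ) :
    1 + t * w ∈ Complex.slitPlane := by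
  rcases eq_or_ne t 0 with rfl | ht
  · simp
  · exact Or.inr (by simp [ht, hw])

lemma im_conj_mul_swap (u v : ℂ) : (conj v * u).im = -(conj u * v).im := by
  simp
  ring

/-- The linear map `(a, b) ↦ a u - b v`, the derivative of a difference of two curves with
velocities `u` and `v`. -/
noncomputable def velocityDiff (u v : ℂ) : ℝ × ℝ →L[ℝ] ℂ :=
  (ContinuousLinearMap.toSpanSingleton ℝ u).coprod (ContinuousLinearMap.toSpanSingleton ℝ (-v))

lemma velocityDiff_apply (u v : ℂ) (x : ℝ × ℝ) : velocityDiff u v x = x.1 * u - x.2 * v := by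
  simp [velocityDiff, sub_eq_add_neg]

lemma injective_velocityDiff {u v : ℂ} (huv : (conj u * v).im ≠ 0) :
    Function.Injective (velocityDiff u v) := by
  refine (injective_iff_map_eq_zero _).2 fun x hx => ?_
  rw [velocityDiff_apply] at hx
  have h₁ : (conj u * (x.1 * u - x.2 * v)).im = -(x.2 * (conj u * v).im) := by
    simp
    ring
  have h₂ : (conj v * (x.1 * u - x.2 * v)).im = -(x.1 * (conj u * v).im) := by
    simp
    ring
  rw [hx, mul_zero, Complex.zero_im, zero_eq_neg, mul_eq_zero, or_iff_left huv] at h₁ h₂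
  exact Prod.ext h₂ h₁

section Pair

variable {α β : ℝ → ℂ} {p u v : ℂ} {μ ν : ℝ → ℂ}

lemma HalfArc.exists_isTangentLog (hα : HalfArc α p u)
    (hp : ∀ s ∈ Icc (0 : ℝ) 1, α s = p → s = 1) :
    ∃ μ, IsTangentLog μ (fun s => α s - p) (.toSpanSingleton ℝ u) (Icc 0 1) 1 := by
  refine IsTangentLog.exists ((convex_Icc 0 1).starConvex (by simp))
    (hα.continuousOn.sub continuousOn_const)
    (hα.hasDerivAt.sub_const p).hasFDerivAt.hasFDerivWithinAt
    (smul_left_injective ℝ hα.velocity_ne) fun s hs => ⟨fun h => hp s hs (sub_eq_zero.1 h), ?_⟩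
  rintro rfl
  rw [hα.apply_one, sub_self]

lemma HalfArc.exists_isTangentLog_sub (hα : HalfArc α p u) (hβ : HalfArc β p v)
    (huv : (conj u * v).im ≠ 0)
    (hαβ : ∀ s ∈ Icc (0 : ℝ) 1, ∀ t ∈ Icc (0 : ℝ) 1, α s = β t → s = 1 ∧ t = 1) :
    ∃ l, IsTangentLog l (fun x : ℝ × ℝ => α x.1 - β x.2) (velocityDiff u v)
      (Icc 0 1 ×ˢ Icc 0 1) (1, 1) := by
  have hF : HasFDerivAt (fun x : ℝ × ℝ => α x.1 - β x.2) (velocityDiff u v) (1, 1) := by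
    refine ((hα.hasDerivAt.hasFDerivAt.comp (f := Prod.fst) ((1, 1) : ℝ × ℝ) hasFDerivAt_fst).sub
      (hβ.hasDerivAt.hasFDerivAt.comp (f := Prod.snd) ((1, 1) : ℝ × ℝ)
        hasFDerivAt_snd)).congr_fderiv ?_
    ext <;> simp [velocityDiff_apply]
  refine IsTangentLog.exists (((convex_Icc 0 1).prod (convex_Icc 0 1)).starConvex (by simp)) ?_
    hF.hasFDerivWithinAt (injective_velocityDiff huv) fun x hx => ⟨fun h => ?_, ?_⟩
  · exact (hα.continuousOn.comp continuousOn_fst fun x hx => hx.1).sub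
      (hβ.continuousOn.comp continuousOn_snd fun x hx => hx.2)
  · exact Prod.ext_iff.2 (hαβ _ hx.1 _ hx.2 (sub_eq_zero.1 h))
  · rintro rfl
    rw [hα.apply_one, hβ.apply_one, sub_self]

lemma IsTangentLog.swap_sub {l : ℝ × ℝ → ℂ}
    (hl : IsTangentLog l (fun x : ℝ × ℝ => α x.1 - β x.2) (velocityDiff u v)
      (Icc 0 1 ×ˢ Icc 0 1) (1, 1)) :
    IsTangentLog (l ∘ Prod.swap) (fun x : ℝ × ℝ => β x.1 - α x.2) (velocityDiff v u)
      (Icc 0 1 ×ˢ Icc 0 1) (1, 1) := by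
  convert hl.neg.comp (g := Prod.swap) continuous_swap.continuousOn
    (S' := Icc 0 1 ×ˢ Icc 0 1) (y₀ := (1, 1)) (fun x hx => ⟨hx.2, hx.1⟩) rfl ?_ using 1
  · ext x
    simp
  · intro x
    simp [velocityDiff_apply]

lemma HalfArc.eqOn_tangentLog_edge (hα : HalfArc α p u) (hβ : HalfArc β p v)
    (hμ : IsTangentLog μ (fun s => α s - p) (.toSpanSingleton ℝ u) (Icc 0 1) 1)
    {l : ℝ × ℝ → ℂ} (hl : IsTangentLog l (fun x : ℝ × ℝ => α x.1 - β x.2) (velocityDiff u v)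
      (Icc 0 1 ×ˢ Icc 0 1) (1, 1)) : EqOn (fun s => l (s, 1)) μ (Icc 0 1) := by
  refine IsTangentLog.eqOn ?_ hμ (smul_left_injective ℝ hα.velocity_ne) isPreconnected_Icc
    (by simp)
  have hF : (fun s => α s - p) = (fun x : ℝ × ℝ => α x.1 - β x.2) ∘ fun s => (s, 1) := by
    ext s
    simp [hβ.apply_one]
  rw [hF]
  exact hl.comp (by fun_prop) (fun s hs => ⟨hs, by simp⟩) rfl (by simp [velocityDiff_apply])

/-- On the edge `s = 0` of the square the argument of `α 0 - β t` relative to the boundary point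
`α 0` stays in the right half plane, so no winding is picked up along it. -/
lemma HalfArc.tangentLog_corner (hα : HalfArc α p u) (hβ : HalfArc β p v)
    (huv : (conj u * v).im ≠ 0)
    (hαβ : ∀ s ∈ Icc (0 : ℝ) 1, ∀ t ∈ Icc (0 : ℝ) 1, α s = β t → s = 1 ∧ t = 1)
    (hμ : IsTangentLog μ (fun s => α s - p) (.toSpanSingleton ℝ u) (Icc 0 1) 1)
    {l : ℝ × ℝ → ℂ} (hl : IsTangentLog l (fun x : ℝ × ℝ => α x.1 - β x.2) (velocityDiff u v)
      (Icc 0 1 ×ˢ Icc 0 1) (1, 1)) :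
    l (0, 0) + Complex.log (1 + -v / u) - Complex.log (1 + -β 0 / α 0) =
      μ 0 - Complex.log ((α 0 - p) / α 0) := by
  have h0 : (0 : ℝ) ∈ Icc (0 : ℝ) 1 := by simp
  have h1 : (1 : ℝ) ∈ Icc (0 : ℝ) 1 := by simp
  have hu := hα.velocity_ne
  have hα0 : α 0 ≠ 0 := norm_pos_iff.1 (by simp [hα.norm_zero])
  have hslit {t : ℝ} (ht : t ∈ Icc (0 : ℝ) 1) : (α 0 - β t) / α 0 ∈ Complex.slitPlane :=
    Or.inl (div_re_pos_of_norm_le_one hα.norm_zero (hβ.norm_le t ht)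
      fun h => zero_ne_one (hαβ 0 h0 t ht h.symm).1)
  have hslit_lin (t : ℝ) : 1 + (1 - t : ℝ) * (-v / u) ∈ Complex.slitPlane :=
    one_add_ofReal_mul_mem_slitPlane (by simpa [neg_div] using im_div_ne_zero huv) _
  have hexp (t : ℝ) (ht : t ∈ Icc (0 : ℝ) 1) : Complex.exp (l (0, t) +
      Complex.log (1 + (1 - t : ℝ) * (-v / u)) - Complex.log ((α 0 - β t) / α 0)) =
      -α 0 / u := by
    have hF := hl.eq_cexp_mul (0, t) ⟨h0, ht⟩
    rw [velocityDiff_apply] at hF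
    have hne := Complex.slitPlane_ne_zero (hslit ht)
    rw [Complex.exp_sub, Complex.exp_add, Complex.exp_log hne,
      Complex.exp_log (Complex.slitPlane_ne_zero (hslit_lin t)), div_eq_div_iff hne hu, neg_mul,
      mul_div_cancel₀ _ hα0, hF]
    push_cast [Prod.fst_sub, Prod.snd_sub]
    field_simp
    ring
  have hcont : ContinuousOn (fun t : ℝ => l (0, t) +
      Complex.log (1 + (1 - t : ℝ) * (-v / u)) - Complex.log ((α 0 - β t) / α 0)) (Icc 0 1) :=
    ((hl.continuousOn.comp (by fun_prop) fun t ht => ⟨h0, ht⟩).add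
      (ContinuousOn.clog (by fun_prop) fun t _ => hslit_lin t)).sub
      (((continuousOn_const.sub hβ.continuousOn).div_const _).clog fun t => hslit)
  have hconst := Complex.isCoveringMap_exp.constOn_of_comp isPreconnected_Icc hcont
    (fun s hs t ht => Subtype.ext ((hexp s hs).trans (hexp t ht).symm)) h0 h1
  have hα0' : 1 + -β 0 / α 0 = (α 0 - β 0) / α 0 := by rw [sub_div, div_self hα0]; ring
  rw [hα0']
  simpa [hβ.apply_one, show l (0, 1) = μ 0 from hα.eqOn_tangentLog_edge hβ hμ hl h0] using hconst

lemma HalfArc.tangentLog_sub_tangentLog (hα : HalfArc α p u) (hβ : HalfArc β p v)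
    (huv : (conj u * v).im ≠ 0)
    (hαβ : ∀ s ∈ Icc (0 : ℝ) 1, ∀ t ∈ Icc (0 : ℝ) 1, α s = β t → s = 1 ∧ t = 1)
    (hμ : IsTangentLog μ (fun s => α s - p) (.toSpanSingleton ℝ u) (Icc 0 1) 1)
    (hν : IsTangentLog ν (fun s => β s - p) (.toSpanSingleton ℝ v) (Icc 0 1) 1) :
    (μ 0 - Complex.log ((α 0 - p) / α 0)) - (ν 0 - Complex.log ((β 0 - p) / β 0)) =
      Complex.log (-v / u) - Complex.log (-β 0 / α 0) := by
  have h0 : (0 : ℝ) ∈ Icc (0 : ℝ) 1 := by simp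
  obtain ⟨l, hl⟩ := hα.exists_isTangentLog_sub hβ huv hαβ
  have hcorner := hα.tangentLog_corner hβ huv hαβ hμ hl
  have hcorner' := hβ.tangentLog_corner hα (by rwa [im_conj_mul_swap, neg_ne_zero])
    (fun t ht s hs h => (hαβ s hs t ht h.symm).symm) hν hl.swap_sub
  have hq := log_one_add_sub_log_one_add_inv (q := -v / u)
    (Or.inr (by simpa [neg_div] using im_div_ne_zero huv))
  have hr := log_one_add_sub_log_one_add_inv (neg_div_mem_slitPlane_of_norm_eq_one hα.norm_zero
    hβ.norm_zero fun h => zero_ne_one (hαβ 0 h0 0 h0 h.symm).1)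
  rw [inv_div, div_neg, ← neg_div] at hq hr
  rw [← hcorner, ← hcorner', ← hq, ← hr, Function.comp_apply, Prod.swap_prod_mk]
  ring

end Pair

lemma arg_neg_cexp_div_cexp {θ φ : ℝ} (hθ : θ ∈ Ico 0 (2 * π)) (hφ : φ ∈ Ico 0 (2 * π))
    (hne : θ ≠ φ) :
    Complex.arg (-Complex.exp (φ * Complex.I) / Complex.exp (θ * Complex.I)) =
      φ - θ - (SignType.sign (φ - θ) : ℤ) * π := by
  have hexp (ε : ℝ) (hε : Complex.exp (ε * Complex.I) = -1) :
      -Complex.exp (φ * Complex.I) / Complex.exp (θ * Complex.I) =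
        Complex.exp ((φ - θ + ε : ℝ) * Complex.I) := by
    push_cast
    rw [add_mul, sub_mul, Complex.exp_add, Complex.exp_sub, hε]
    ring
  have hpi : Complex.exp ((-π : ℝ) * Complex.I) = -1 := by
    rw [Complex.ofReal_neg, neg_mul, Complex.exp_neg, Complex.exp_pi_mul_I, inv_neg_one]
  rcases hne.lt_or_gt with h | h
  · rw [sign_pos (sub_pos.2 h), hexp (-π) hpi, Complex.arg_exp_mul_I, (toIocMod_eq_self _).2]
    · simp [sub_eq_add_neg]
    · constructor <;> linarith [hθ.1, hφ.2]
  · rw [sign_neg (sub_neg.2 h), hexp π Complex.exp_pi_mul_I, Complex.arg_exp_mul_I,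
      (toIocMod_eq_self _).2]
    · simp
    · constructor <;> linarith [hθ.2, hφ.1]

lemma arg_neg_div_neg {u v : ℂ} (huv : 0 < (conj u * v).im) : Complex.arg (-v / u) < 0 := by
  have hu : u ≠ 0 := by
    rintro rfl
    simp at huv
  have h : -v / u = (-(Complex.normSq u)⁻¹ : ℝ) * (conj u * v) := by
    rw [div_eq_mul_inv, Complex.inv_def]
    push_cast
    ring
  rw [Complex.arg_neg_iff, h, Complex.im_ofReal_mul]
  exact mul_neg_of_neg_of_pos (neg_lt_zero.2 (inv_pos.2 (Complex.normSq_pos.2 hu))) huv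

lemma arg_add_arg_add_arg_cyclic {u v w : ℂ} (huv : 0 < (conj u * v).im)
    (hvw : 0 < (conj v * w).im) (hwu : 0 < (conj w * u).im) :
    Complex.arg (-v / u) + Complex.arg (-w / v) + Complex.arg (-u / w) = -π := by
  have hne {a b : ℂ} (h : 0 < (conj a * b).im) : a ≠ 0 := by
    rintro rfl
    simp at h
  have hu := hne huv
  have hv := hne hvw
  have hw := hne hwu
  have hangle : ((Complex.arg (-v / u) + Complex.arg (-w / v) + Complex.arg (-u / w) : ℝ) :
      Real.Angle) = ((-π : ℝ) : Real.Angle) := by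
    have hprod : -v / u * (-w / v) * (-u / w) = -1 := by field_simp
    have h₁ : -v / u ≠ 0 := div_ne_zero (neg_ne_zero.2 hv) hu
    have h₂ : -w / v ≠ 0 := div_ne_zero (neg_ne_zero.2 hw) hv
    have h₃ : -u / w ≠ 0 := div_ne_zero (neg_ne_zero.2 hu) hw
    rw [Real.Angle.coe_add, Real.Angle.coe_add, ← Complex.arg_mul_coe_angle h₁ h₂,
      ← Complex.arg_mul_coe_angle (mul_ne_zero h₁ h₂) h₃, hprod, Complex.arg_neg_one,
      Real.Angle.coe_neg, Real.Angle.neg_coe_pi]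
  obtain ⟨k, hk⟩ := Real.Angle.angle_eq_iff_two_pi_dvd_sub.1 hangle
  have hbounds : (-1 : ℝ) < k ∧ (k : ℝ) < 1 := by
    constructor <;>
      nlinarith [Real.pi_pos, arg_neg_div_neg huv, arg_neg_div_neg hvw, arg_neg_div_neg hwu,
        Complex.neg_pi_lt_arg (-v / u), Complex.neg_pi_lt_arg (-w / v),
        Complex.neg_pi_lt_arg (-u / w)]
  obtain rfl : k = 0 := by
    have h₁ : -1 < k := by exact_mod_cast hbounds.1
    have h₂ : k < 1 := by exact_mod_cast hbounds.2
    omega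
  simpa [sub_eq_zero, add_eq_zero_iff_eq_neg] using hk

/-- Three half-arcs meeting only at their common endpoint leave the boundary circle in the cyclic
order of their velocities. -/
lemma sum_sign_boundary_angles_of_tripod {α : Fin 3 → ℝ → ℂ} {p : ℂ} {u : Fin 3 → ℂ}
    {θ : Fin 3 → ℝ} (hα : ∀ a, HalfArc (α a) p (u a)) (hθ : ∀ a, θ a ∈ Ico 0 (2 * π))
    (hα0 : ∀ a, α a 0 = Complex.exp (θ a * Complex.I))
    (hu : ∀ a, 0 < (conj (u a) * u (a + 1)).im)
    (hαα : ∀ a b, a ≠ b → ∀ s ∈ Icc (0 : ℝ) 1, ∀ t ∈ Icc (0 : ℝ) 1, α a s = α b t →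
      s = 1 ∧ t = 1) :
    ∑ a, (SignType.sign (θ (a + 1) - θ a) : ℤ) = 1 := by
  have hsucc (a : Fin 3) : a ≠ a + 1 := by decide +revert
  choose μ hμ using fun a => (hα a).exists_isTangentLog fun s hs h =>
    (hαα a (a + 1) (hsucc a) s hs 1 (by simp) (h.trans (hα (a + 1)).apply_one.symm)).1
  have hθne (a : Fin 3) : θ a ≠ θ (a + 1) := fun h =>
    zero_ne_one (hαα a (a + 1) (hsucc a) 0 (by simp) 0 (by simp) (by rw [hα0, hα0, h])).1
  have hcocycle (a : Fin 3) :
      (μ a 0 - Complex.log ((α a 0 - p) / α a 0)).im -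
        (μ (a + 1) 0 - Complex.log ((α (a + 1) 0 - p) / α (a + 1) 0)).im =
      Complex.arg (-u (a + 1) / u a) -
        (θ (a + 1) - θ a - (SignType.sign (θ (a + 1) - θ a) : ℤ) * π) := by
    rw [← arg_neg_cexp_div_cexp (hθ a) (hθ (a + 1)) (hθne a), ← hα0, ← hα0, ← Complex.log_im,
      ← Complex.log_im, ← Complex.sub_im, ← Complex.sub_im,
      (hα a).tangentLog_sub_tangentLog (hα (a + 1)) (hu a).ne' (hαα a (a + 1) (hsucc a))
        (hμ a) (hμ (a + 1))]
  have hcyclic := arg_add_arg_add_arg_cyclic (hu 0) (hu 1) (hu 2)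
  have hsum := congrArg₂ (· + ·) (congrArg₂ (· + ·) (hcocycle 0) (hcocycle 1)) (hcocycle 2)
  simp only [Fin.sum_univ_three, Fin.reduceAdd, zero_add] at hsum hcyclic ⊢
  have hpi : ((SignType.sign (θ 1 - θ 0) + SignType.sign (θ 2 - θ 1) +
      SignType.sign (θ 0 - θ 2) : ℤ) : ℝ) * π = 1 * π := by
    simp only [Int.cast_add]
    linear_combination -hsum - hcyclic
  exact_mod_cast mul_right_cancel₀ Real.pi_pos.ne' hpi

end HalfArcs

/-! ### The signed number of crossings -/

section SignedCount
open Filter Topology ComplexConjugate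

namespace Plane

/-- The standard identification of the plane with `ℂ`, giving access to arguments and logarithms. -/
noncomputable def toComplex : Plane ≃ₗᵢ[ℝ] ℂ := Complex.orthonormalBasisOneI.repr.symm

attribute [local instance] Complex.finrank_real_complex_fact

/-- The determinant of two vectors of the plane, as a bilinear form. -/
noncomputable def det : Plane →ₗ[ℝ] Plane →ₗ[ℝ] ℝ :=
  Complex.orientation.areaForm.compl₁₂ toComplex.toLinearMap toComplex.toLinearMap

lemma det_apply (u v : Plane) : det u v = (conj (toComplex u) * toComplex v).im :=
  Complex.areaForm _ _

lemma det_self (u : Plane) : det u u = 0 := Complex.orientation.areaForm_apply_self _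

lemma det_swap (u v : Plane) : det u v = -det v u := Complex.orientation.areaForm_swap _ _

lemma det_smul_sub_det_smul (u v w : Plane) : det u v • w = det w v • u + det u w • v := by
  apply toComplex.injective
  apply Complex.ext <;> simp [det_apply] <;> ring

lemma linearIndependent_pair_iff_det_ne_zero {u v : Plane} :
    LinearIndependent ℝ ![u, v] ↔ det u v ≠ 0 := by
  rw [LinearIndependent.pair_iff]
  refine ⟨fun h hdet => ?_, fun hdet a b h => ?_⟩
  · have hw (w : Plane) : det u w = 0 :=
      (h (det w v) (det u w) (by rw [← det_smul_sub_det_smul, hdet, zero_smul])).2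
    have hu : u = 0 := by
      have hI := hw (toComplex.symm (Complex.I * toComplex u))
      rw [det_apply, LinearIsometryEquiv.apply_symm_apply, mul_left_comm,
        ← Complex.normSq_eq_conj_mul_self, Complex.im_mul_ofReal, Complex.I_im, one_mul] at hI
      simpa using hI
    exact one_ne_zero (h 1 0 (by simp [hu])).1
  · have ha : a * det u v = 0 := by simpa [det_self] using congrArg (det · v) h
    have hb : b * det u v = 0 := by simpa [det_self] using congrArg (det u) h
    exact ⟨(mul_eq_zero.1 ha).resolve_right hdet, (mul_eq_zero.1 hb).resolve_right hdet⟩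

lemma det_pos_of_smul_add_smul_add_smul_eq_zero {u v w : Plane} {a b c : ℝ} (ha : 0 < a)
    (hb : 0 < b) (hc : 0 < c) (h0 : a • u + b • v + c • w = 0) (huv : 0 < det u v) :
    0 < det v w ∧ 0 < det w u := by
  have hu := congrArg (det u) h0
  have hv := congrArg (det v) h0
  simp only [map_add, map_smul, det_self, map_zero, smul_eq_mul, det_swap v u, det_swap u w]
    at hu hv
  exact ⟨pos_of_mul_pos_right (by linarith [mul_pos ha huv] : 0 < c * det v w) hc.le,
    pos_of_mul_pos_right (by linarith [mul_pos hb huv] : 0 < c * det w u) hc.le⟩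

lemma toComplex_bpoint (n k : ℕ) :
    toComplex (bpoint n k) = Complex.exp ((k * π / n : ℝ) * Complex.I) := by
  rw [Complex.exp_mul_I]
  apply Complex.ext <;>
  simp [toComplex, bpoint, unitPt, Complex.orthonormalBasisOneI_repr_symm_apply,
    ← Complex.ofReal_cos, ← Complex.ofReal_sin, -Complex.ofReal_mul, -Complex.ofReal_div]

end Plane

open Plane

/-- A strand together with a parameter on it; the strands are `n` arcs and `nl` loops. -/
abbrev Passage (n nl : ℕ) : Type := (Fin n × ℝ) ⊕ (Fin nl × ℝ)

namespace PreDiagram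

variable {n nl : ℕ} {D : PreDiagram n nl} {i j : Fin n} {s t : ℝ}

lemma norm_arc_lt_one_iff (ht : t ∈ Icc (0 : ℝ) 1) : ‖D.arc i t‖ < 1 ↔ t ∈ Ioo (0 : ℝ) 1 := by
  refine ⟨fun h => ⟨ht.1.lt_of_ne ?_, ht.2.lt_of_ne ?_⟩, D.arc_interior i t⟩ <;> rintro rfl
  exacts [h.ne (D.arc_start_bdry i), h.ne (D.arc_end_bdry i)]

lemma norm_arc_eq_one_iff (ht : t ∈ Icc (0 : ℝ) 1) : ‖D.arc i t‖ = 1 ↔ t = 0 ∨ t = 1 := by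
  refine ⟨fun h => ?_, ?_⟩
  · by_contra! hne
    exact h.not_lt (D.arc_interior i t ⟨ht.1.lt_of_ne' hne.1, ht.2.lt_of_ne hne.2⟩)
  · rintro (rfl | rfl)
    exacts [D.arc_start_bdry i, D.arc_end_bdry i]

lemma eq_of_arc_eq_of_norm_eq_one (hs : s ∈ Icc (0 : ℝ) 1) (ht : t ∈ Icc (0 : ℝ) 1)
    (h : D.arc i s = D.arc j t) (hnorm : ‖D.arc i s‖ = 1) : i = j ∧ s = t := by
  have hs' := (norm_arc_eq_one_iff hs).1 hnorm
  have ht' := (norm_arc_eq_one_iff ht).1 (h ▸ hnorm)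
  rcases hs' with rfl | rfl <;> rcases ht' with rfl | rfl
  · exact ⟨Sum.inl.inj (@D.endpoints_distinct (.inl i) (.inl j) h), rfl⟩
  · cases @D.endpoints_distinct (.inl i) (.inr j) h
  · cases @D.endpoints_distinct (.inr i) (.inl j) h
  · exact ⟨Sum.inr.inj (@D.endpoints_distinct (.inr i) (.inr j) h), rfl⟩

lemma mem_Ioo_of_arc_eq (hs : s ∈ Icc (0 : ℝ) 1) (ht : t ∈ Icc (0 : ℝ) 1)
    (h : D.arc i s = D.arc j t) (hne : (i, s) ≠ (j, t)) :
    s ∈ Ioo (0 : ℝ) 1 ∧ t ∈ Ioo (0 : ℝ) 1 := by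
  rw [← norm_arc_lt_one_iff (D := D) (i := i) hs, ← norm_arc_lt_one_iff (D := D) (i := j) ht, ← h,
    and_self]
  exact (D.arc_in_disk i s hs).lt_of_ne fun hnorm =>
    hne (Prod.ext_iff.2 (eq_of_arc_eq_of_norm_eq_one hs ht h hnorm))

/-- The sign of the crossing of two branches, where the branch on the arc of smaller index comes
first. Ordered pairs of passages that are not of this kind get sign `0`, so that each crossing of
two arcs counts once. -/
noncomputable def crossingSign (D : PreDiagram n nl) :
    Passage n nl × Passage n nl → ℤ
  | (.inl a, .inl b) =>
    if a.1 < b.1 then SignType.sign (det (D.tangent (.inl a)) (D.tangent (.inl b))) else 0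
  | _ => 0

/-- The crossings of two arcs, the parameters `s` and `t` being encoded as `s + t I`. -/
def crossings (D : PreDiagram n nl) (i j : Fin n) : Set ℂ :=
  {z | z.re ∈ Ioo 0 1 ∧ z.im ∈ Ioo 0 1 ∧ D.arc i z.re = D.arc j z.im}

/-- The number of crossings of pairs of arcs, counted with sign. -/
noncomputable def signedCount (D : PreDiagram n nl) : ℤ :=
  ∑ᶠ p ∈ {p | D.IsMultiplePoint p}, ∑ᶠ x ∈ D.passages p ×ˢ D.passages p, D.crossingSign x

lemma eq_of_mem_passages {p p' : Plane} {q : Passage n nl} (h : q ∈ D.passages p)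
    (h' : q ∈ D.passages p') : p = p' := by
  rcases q with q | q <;> exact h.2.symm.trans h'.2

lemma isMultiplePoint_of_ne {p : Plane} {q q' : Passage n nl}
    (hq : q ∈ D.passages p) (hq' : q' ∈ D.passages p) (hne : q ≠ q') : D.IsMultiplePoint p :=
  fun h => hne (h hq hq')

lemma isMultiplePoint_of_mem_crossings (hij : i ≠ j) {z : ℂ} (hz : z ∈ D.crossings i j) :
    D.IsMultiplePoint (D.arc i z.re) :=
  isMultiplePoint_of_ne (q := .inl (i, z.re)) (q' := .inl (j, z.im)) ⟨hz.1, rfl⟩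
    ⟨hz.2.1, hz.2.2.symm⟩ fun h => hij (congrArg Prod.fst (Sum.inl.inj h))

end PreDiagram

namespace TripleDiagram

open PreDiagram

variable {n nl : ℕ} {D : TripleDiagram n nl} {i j : Fin n} {p : Plane}

lemma finite_passages (hp : D.IsMultiplePoint p) : (D.passages p).Finite :=
  Set.finite_of_ncard_ne_zero (by rw [D.triple p hp]; norm_num)

lemma det_tangent_ne_zero {q q' : Passage n nl} (hq : q ∈ D.passages p) (hq' : q' ∈ D.passages p)
    (hne : q ≠ q') : det (D.tangent q) (D.tangent q') ≠ 0 :=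
  linearIndependent_pair_iff_det_ne_zero.1 <|
    D.branches_transverse p (isMultiplePoint_of_ne hq hq' hne) q hq q' hq' hne

lemma finite_iUnion_passages_prod (D : TripleDiagram n nl) :
    (⋃ p ∈ {p | D.IsMultiplePoint p}, D.passages p ×ˢ D.passages p).Finite :=
  D.multiple_finite.biUnion fun _ hp => (finite_passages hp).prod (finite_passages hp)

lemma image_crossings_subset (hij : i ≠ j) :
    (fun z : ℂ => (.inl (i, z.re), .inl (j, z.im))) '' D.crossings i j ⊆
      ⋃ p ∈ {p | D.IsMultiplePoint p}, D.passages p ×ˢ D.passages p := by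
  rintro _ ⟨z, hz, rfl⟩
  exact mem_biUnion (isMultiplePoint_of_mem_crossings hij hz)
    ⟨⟨hz.1, rfl⟩, hz.2.1, hz.2.2.symm⟩

lemma injective_crossing_passages (i j : Fin n) : Function.Injective
    (fun z : ℂ => ((.inl (i, z.re), .inl (j, z.im)) : Passage n nl × Passage n nl)) := by
  intro z w h
  simp only [Prod.mk.injEq, Sum.inl.injEq, true_and] at h
  exact Complex.ext h.1 h.2

lemma finite_crossings (hij : i ≠ j) : (D.crossings i j).Finite :=
  (D.finite_iUnion_passages_prod.subset (image_crossings_subset hij)).of_finite_image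
    (injective_crossing_passages i j).injOn

lemma det_ne_zero_of_mem_crossings (hij : i ≠ j) {z : ℂ} (hz : z ∈ D.crossings i j) :
    det (deriv (D.arc i) z.re) (deriv (D.arc j) z.im) ≠ 0 :=
  det_tangent_ne_zero (q := .inl (i, z.re)) (q' := .inl (j, z.im)) ⟨hz.1, rfl⟩
    ⟨hz.2.1, hz.2.2.symm⟩ fun h => hij (congrArg Prod.fst (Sum.inl.inj h))

lemma signedCount_eq_finsum_crossings (D : TripleDiagram n nl) :
    D.signedCount = ∑ᶠ a ∈ {a : Fin n × Fin n | a.1 < a.2}, ∑ᶠ z ∈ D.crossings a.1 a.2,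
      (SignType.sign (det (deriv (D.arc a.1) z.re) (deriv (D.arc a.2) z.im)) : ℤ) := by
  let E (a : Fin n × Fin n) (z : ℂ) : Passage n nl × Passage n nl :=
    (.inl (a.1, z.re), .inl (a.2, z.im))
  have hpair (a : Fin n × Fin n) (ha : a.1 < a.2) : ∑ᶠ z ∈ D.crossings a.1 a.2,
      (SignType.sign (det (deriv (D.arc a.1) z.re) (deriv (D.arc a.2) z.im)) : ℤ) =
      ∑ᶠ x ∈ E a '' D.crossings a.1 a.2, D.crossingSign x := by
    rw [finsum_mem_image (injective_crossing_passages a.1 a.2).injOn]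
    exact finsum_mem_congr rfl fun z _ => (if_pos ha).symm
  have hfinite (a : Fin n × Fin n) (ha : a.1 < a.2) : (E a '' D.crossings a.1 a.2).Finite :=
    (finite_crossings ha.ne).image _
  rw [signedCount, finsum_mem_congr (s := {a : Fin n × Fin n | a.1 < a.2}) rfl hpair,
    ← finsum_mem_biUnion (I := {a : Fin n × Fin n | a.1 < a.2}) _ (Set.toFinite _) hfinite,
    ← finsum_mem_biUnion _ D.multiple_finite
      fun p hp => (finite_passages hp).prod (finite_passages hp)]
  · refine finsum_mem_inter_support_eq' _ _ _ fun x hx => ⟨fun h => ?_, fun h => ?_⟩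
    · obtain ⟨p, -, h₁, h₂⟩ := mem_iUnion₂.1 h
      rcases x with ⟨⟨i, s⟩ | a, ⟨j, t⟩ | b⟩
      · have hij : i < j := by
          by_contra hij
          exact hx (if_neg hij)
        exact mem_biUnion (x := (i, j)) hij
          ⟨⟨s, t⟩, ⟨h₁.1, h₂.1, h₁.2.trans h₂.2.symm⟩, rfl⟩
      all_goals exact absurd rfl hx
    · obtain ⟨a, ha, h⟩ := mem_iUnion₂.1 h
      exact image_crossings_subset (ne_of_lt ha) h
  · rintro p - p' - hpp
    exact Set.disjoint_left.2 fun x h h' => hpp (eq_of_mem_passages h.1 h'.1)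
  · rintro a - b - hab
    refine Set.disjoint_left.2 ?_
    rintro _ ⟨z, -, rfl⟩ ⟨w, -, h⟩
    simp only [E, Prod.mk.injEq, Sum.inl.injEq] at h
    exact hab (Prod.ext h.1.1.symm h.2.1.symm)

lemma exists_oriented_passages (hp : D.IsMultiplePoint p) :
    ∃ q : Fin 3 → Passage n nl, Function.Injective q ∧ D.passages p = range q ∧
      ∀ a, 0 < det (D.tangent (q a)) (D.tangent (q (a + 1))) := by
  obtain ⟨q₁, q₂, q₃, hP, a, b, c, ha, hb, hc, h0⟩ := D.alternating p hp
  have hcard : ({q₁, q₂, q₃} : Set (Passage n nl)).ncard = 3 := hP ▸ D.triple p hp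
  have hdet : det (D.tangent q₁) (D.tangent q₂) ≠ 0 :=
    det_tangent_ne_zero (p := p) (by simp [hP]) (by simp [hP]) fun h => by
        rw [h, Set.insert_eq_of_mem (by simp)] at hcard
        have := Set.ncard_insert_le q₂ {q₃}
        rw [Set.ncard_singleton] at this
        omega
  have hinj (q : Fin 3 → Passage n nl) (hq : D.passages p = range q) :
      Function.Injective q := by
    rw [← Set.injOn_univ]
    refine Set.injOn_of_ncard_image_eq ?_
    rw [image_univ, ← hq, D.triple p hp, Set.ncard_univ, Nat.card_fin]
  rcases hdet.lt_or_gt with h | h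
  · have hq : D.passages p = range ![q₂, q₁, q₃] := by
      simp only [hP, Matrix.range_cons, Matrix.range_empty, union_empty, singleton_union]
      exact Set.insert_comm _ _ _
    rw [det_swap, neg_lt_zero] at h
    rw [add_comm (a • _)] at h0
    obtain ⟨h₁₃, h₃₂⟩ := det_pos_of_smul_add_smul_add_smul_eq_zero hb ha hc h0 h
    refine ⟨_, hinj _ hq, hq, fun k => ?_⟩
    fin_cases k
    exacts [h, h₁₃, h₃₂]
  · have hq : D.passages p = range ![q₁, q₂, q₃] := by
      simp only [hP, Matrix.range_cons, Matrix.range_empty, union_empty, singleton_union]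
    obtain ⟨h₂₃, h₃₁⟩ := det_pos_of_smul_add_smul_add_smul_eq_zero ha hb hc h0 h
    refine ⟨_, hinj _ hq, hq, fun k => ?_⟩
    fin_cases k
    exacts [h, h₂₃, h₃₁]

/-- The sign of the difference of the indices of the arcs of two passages, `0` if a loop is
involved. -/
noncomputable def strandSign : Passage n nl → Passage n nl → ℤ
  | .inl a, .inl b => SignType.sign ((b.1 : ℤ) - a.1)
  | _, _ => 0

lemma crossingSign_self (D : PreDiagram n nl) (q : Passage n nl) : D.crossingSign (q, q) = 0 := by
  rcases q with _ | _ <;> simp [crossingSign]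

lemma crossingSign_add_swap {D : PreDiagram n nl} {q q' : Passage n nl}
    (h : 0 < det (D.tangent q) (D.tangent q')) :
    D.crossingSign (q, q') + D.crossingSign (q', q) = strandSign q q' := by
  rcases q with ⟨i, s⟩ | q <;> rcases q' with ⟨j, t⟩ | q' <;>
    simp only [crossingSign, strandSign, add_zero]
  rw [det_swap (D.tangent (.inl (j, t))), Left.sign_neg, sign_pos h]
  rcases lt_trichotomy i j with hij | rfl | hij
  · rw [if_pos hij, if_neg hij.not_gt, sign_pos (by omega), add_zero]
  · simp
  · rw [if_neg hij.not_gt, if_pos hij, sign_neg (by omega), zero_add]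

lemma finsum_crossingSign_eq_sum_strandSign {D : PreDiagram n nl} {q : Fin 3 → Passage n nl}
    (hq : Function.Injective q) (hP : D.passages p = range q)
    (hdet : ∀ a, 0 < det (D.tangent (q a)) (D.tangent (q (a + 1)))) :
    ∑ᶠ x ∈ D.passages p ×ˢ D.passages p, D.crossingSign x =
      ∑ a, strandSign (q a) (q (a + 1)) := by
  rw [hP, Set.prod_range_range_eq,
    finsum_mem_range (g := fun x : Fin 3 × Fin 3 => (q x.1, q x.2)) (hq.prodMap hq),
    finsum_eq_sum_of_fintype, Fintype.sum_prod_type]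
  simp only [← crossingSign_add_swap (hdet _), Fin.sum_univ_three, crossingSign_self]
  simp only [Fin.reduceAdd, zero_add]
  ring

lemma sum_strandSign_le_one (q : Fin 3 → Passage n nl) :
    ∑ a, strandSign (q a) (q (a + 1)) ≤ 1 := by
  simp only [Fin.sum_univ_three, Fin.reduceAdd, zero_add]
  rcases q 0 with a | a <;> rcases q 1 with b | b <;> rcases q 2 with c | c <;>
    simp only [strandSign, sign_apply] <;> (try split_ifs) <;> simp <;> omega

lemma signedCount_le_tripleCount (D : TripleDiagram n nl) : D.signedCount ≤ D.tripleCount := by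
  rw [tripleCount, signedCount, Set.ncard_eq_toFinset_card _ D.multiple_finite,
    finsum_mem_eq_finite_toFinset_sum _ D.multiple_finite, ← nsmul_one]
  refine Finset.sum_le_card_nsmul _ _ _ fun p hp => ?_
  obtain ⟨q, hq, hP, hdet⟩ := exists_oriented_passages (D.multiple_finite.mem_toFinset.1 hp)
  rw [finsum_crossingSign_eq_sum_strandSign hq hP hdet]
  exact sum_strandSign_le_one q

end TripleDiagram

end SignedCount

section Reduced
open Filter Topology ComplexConjugate PreDiagram Plane

variable {n nl nl' : ℕ}

namespace PreDiagram

variable {D : PreDiagram n nl} {i j : Fin n} {s t : ℝ}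

lemma hasDerivAt_arc (D : PreDiagram n nl) (i : Fin n) (s : ℝ) :
    HasDerivAt (D.arc i) (deriv (D.arc i) s) s :=
  ((D.arc_smooth i).differentiable (by simp)).differentiableAt.hasDerivAt

lemma hasDerivAt_toComplex_arc (D : PreDiagram n nl) (i : Fin n) (s : ℝ) :
    HasDerivAt (fun s => toComplex (D.arc i s)) (toComplex (deriv (D.arc i) s)) s :=
  toComplex.toContinuousLinearEquiv.hasFDerivAt.comp_hasDerivAt s (D.hasDerivAt_arc i s)

lemma continuous_toComplex_arc (D : PreDiagram n nl) (i : Fin n) :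
    Continuous fun s => toComplex (D.arc i s) :=
  toComplex.continuous.comp (D.arc_smooth i).continuous

/-- There are no monogons and no parallel bigons on the arcs. -/
structure IsReduced (D : PreDiagram n nl) : Prop where
  injOn_arc (i : Fin n) : InjOn (D.arc i) (Icc 0 1)
  not_parallel_bigon {i j : Fin n} (hij : i ≠ j) {s₁ s₂ t₁ t₂ : ℝ} (hs₁ : s₁ ∈ Icc (0 : ℝ) 1)
    (hs₂ : s₂ ∈ Icc (0 : ℝ) 1) (ht₁ : t₁ ∈ Icc (0 : ℝ) 1) (ht₂ : t₂ ∈ Icc (0 : ℝ) 1)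
    (hs : s₁ < s₂) (ht : t₁ < t₂) (h₁ : D.arc i s₁ = D.arc j t₁) : D.arc i s₂ ≠ D.arc j t₂

lemma halfArc_arc (D : PreDiagram n nl) (i : Fin n) (hs : s ∈ Ioo (0 : ℝ) 1) :
    HalfArc (fun x => toComplex (D.arc i (x * s))) (toComplex (D.arc i s))
      (s • toComplex (deriv (D.arc i) s)) where
  continuousOn :=
    ((D.continuous_toComplex_arc i).comp (continuous_id.mul continuous_const)).continuousOn
  apply_one := by rw [one_mul]
  hasDerivAt := by
    have h : HasDerivAt (fun x : ℝ => x * s) s 1 := by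
      simpa using (hasDerivAt_id (1 : ℝ)).mul_const s
    exact HasDerivAt.scomp (1 : ℝ) (by rw [one_mul]; exact D.hasDerivAt_toComplex_arc i s) h
  norm_le x hx := by
    rw [LinearIsometryEquiv.norm_map]
    exact D.arc_in_disk i _ ⟨mul_nonneg hx.1 hs.1.le, mul_le_one₀ hx.2 hs.1.le hs.2.le⟩
  norm_zero := by
    rw [LinearIsometryEquiv.norm_map, zero_mul]
    exact D.arc_start_bdry i
  velocity_ne := smul_ne_zero hs.1.ne' <|
    toComplex.map_eq_zero_iff.not.2 (D.arc_immersed i s (Ioo_subset_Icc_self hs))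

lemma IsReduced.eq_one_of_arc_mul_eq (hD : D.IsReduced) (hij : i ≠ j) (hs : s ∈ Ioo (0 : ℝ) 1)
    (ht : t ∈ Ioo (0 : ℝ) 1) (h : D.arc i s = D.arc j t) {x y : ℝ} (hx : x ∈ Icc (0 : ℝ) 1)
    (hy : y ∈ Icc (0 : ℝ) 1) (hxy : D.arc i (x * s) = D.arc j (y * t)) : x = 1 ∧ y = 1 := by
  have hs' := Ioo_subset_Icc_self hs
  have ht' := Ioo_subset_Icc_self ht
  have hxs : x * s ∈ Icc (0 : ℝ) 1 := unitInterval.mul_mem hx hs'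
  have hyt : y * t ∈ Icc (0 : ℝ) 1 := unitInterval.mul_mem hy ht'
  rcases hx.2.eq_or_lt with rfl | hx1
  · refine ⟨rfl, mul_right_cancel₀ ht.1.ne' (hD.injOn_arc j hyt (by simpa using ht') ?_)⟩
    rw [← hxy, one_mul, one_mul, h]
  rcases hy.2.eq_or_lt with rfl | hy1
  · refine ⟨mul_right_cancel₀ hs.1.ne' (hD.injOn_arc i hxs (by simpa using hs') ?_), rfl⟩
    rw [hxy, one_mul, one_mul, h]
  exact absurd h <| hD.not_parallel_bigon hij hxs hs' hyt ht' (mul_lt_of_lt_one_left hs.1 hx1)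
    (mul_lt_of_lt_one_left ht.1 hy1) hxy

end PreDiagram

namespace TripleDiagram

variable {D : TripleDiagram n 0} {p : Plane}

lemma boundaryAngle_mem_Ico (i : Fin n) : ((2 * i : ℕ) * π / n : ℝ) ∈ Ico 0 (2 * π) := by
  refine ⟨by positivity, ?_⟩
  rw [div_lt_iff₀ (by exact_mod_cast i.pos)]
  have hi : (i : ℝ) < n := by exact_mod_cast i.2
  push_cast
  nlinarith [Real.pi_pos]

lemma sign_boundaryAngle_sub (i j : Fin n) :
    SignType.sign ((2 * j : ℕ) * π / n - (2 * i : ℕ) * π / n : ℝ) =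
      SignType.sign ((j : ℤ) - i) := by
  have hn : (0 : ℝ) < n := by exact_mod_cast i.pos
  have hsub : ((2 * j : ℕ) * π / n - (2 * i : ℕ) * π / n : ℝ) =
      2 * π / n * ((j : ℤ) - i : ℤ) := by
    push_cast
    ring
  rw [hsub, sign_mul, sign_pos (div_pos Real.two_pi_pos hn), one_mul, _root_.sign_intCast]

lemma sum_strandSign_eq_one_of_isReduced (hD : D.IsReduced)
    (h0 : ∀ i, D.arc i 0 = bpoint n (2 * (i : ℕ))) {q : Fin 3 → Passage n 0}
    (hq : Function.Injective q) (hP : D.passages p = range q)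
    (hdet : ∀ a, 0 < det (D.tangent (q a)) (D.tangent (q (a + 1)))) :
    ∑ a, strandSign (q a) (q (a + 1)) = 1 := by
  obtain ⟨q, rfl⟩ : ∃ q' : Fin 3 → Fin n × ℝ, q = fun a => .inl (q' a) :=
    ⟨fun a => (q a).elim id fun b => b.1.elim0, funext fun a => by
      rcases h : q a with b | b
      exacts [by simp [h], b.1.elim0]⟩
  have hmem (a : Fin 3) : (q a).2 ∈ Ioo (0 : ℝ) 1 ∧ D.arc (q a).1 (q a).2 = p :=
    (hP ▸ mem_range_self a : .inl (q a) ∈ D.passages p)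
  have hfst {a b : Fin 3} (hab : a ≠ b) : (q a).1 ≠ (q b).1 := fun h => hab <| hq <| by
    refine congrArg _ (Prod.ext h (hD.injOn_arc (q a).1 (Ioo_subset_Icc_self (hmem a).1)
      (Ioo_subset_Icc_self (hmem b).1) ?_))
    rw [(hmem a).2, h, (hmem b).2]
  simp only [strandSign, ← sign_boundaryAngle_sub]
  refine sum_sign_boundary_angles_of_tripod (p := toComplex p)
    (fun a => (hmem a).2 ▸ D.halfArc_arc (q a).1 (hmem a).1)
    (fun a => boundaryAngle_mem_Ico (q a).1) (fun a => ?_)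
    (fun a => ?_) fun a b hab s hs t ht h => ?_
  · rw [zero_mul, h0, toComplex_bpoint]
  · simp only [← map_smul, ← det_apply]
    simp only [map_smul, LinearMap.smul_apply, smul_eq_mul]
    exact mul_pos (hmem (a + 1)).1.1 (mul_pos (hmem a).1.1 (hdet a))
  · exact hD.eq_one_of_arc_mul_eq (hfst hab) (hmem a).1 (hmem b).1
      ((hmem a).2.trans (hmem b).2.symm) hs ht (toComplex.injective h)

lemma signedCount_eq_tripleCount_of_isReduced (hD : D.IsReduced)
    (h0 : ∀ i, D.arc i 0 = bpoint n (2 * (i : ℕ))) : D.signedCount = D.tripleCount := by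
  rw [tripleCount, signedCount, Set.ncard_eq_toFinset_card _ D.multiple_finite,
    finsum_mem_eq_finite_toFinset_sum _ D.multiple_finite, Finset.cast_card]
  refine Finset.sum_congr rfl fun p hp => ?_
  obtain ⟨q, hq, hP, hdet⟩ := exists_oriented_passages (D.multiple_finite.mem_toFinset.1 hp)
  rw [finsum_crossingSign_eq_sum_strandSign hq hP hdet]
  exact sum_strandSign_eq_one_of_isReduced hD h0 hq hP hdet

end TripleDiagram

lemma sub_div_sub_mem_slitPlane {z w w' : ℂ} (hz : ‖z‖ = 1) (hw : ‖w‖ ≤ 1) (hw' : ‖w'‖ ≤ 1)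
    (hne : w ≠ z) (hne' : w' ≠ z) : (z - w') / (z - w) ∈ Complex.slitPlane := by
  have hz0 : z ≠ 0 := norm_pos_iff.1 (by simp [hz])
  rw [← div_div_div_cancel_right₀ hz0]
  exact div_mem_slitPlane_of_re_pos (div_re_pos_of_norm_le_one hz hw' hne')
    (div_re_pos_of_norm_le_one hz hw hne)

namespace PreDiagram

variable {D : PreDiagram n nl} {D' : PreDiagram n nl'} {i j : Fin n}

lemma arc_sub_div_arc_sub_mem_slitPlane (h0 : ∀ i, D.arc i 0 = D'.arc i 0)
    (h1 : ∀ i, D.arc i 1 = D'.arc i 1) (hij : i ≠ j) {s t : ℝ} (hs : s = 0 ∨ s = 1)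
    (ht : t ∈ Icc (0 : ℝ) 1) :
    (toComplex (D'.arc i s) - toComplex (D'.arc j t)) /
      (toComplex (D.arc i s) - toComplex (D.arc j t)) ∈ Complex.slitPlane := by
  have hs' : s ∈ Icc (0 : ℝ) 1 := by rcases hs with rfl | rfl <;> simp
  have hnorm : ‖D.arc i s‖ = 1 := (norm_arc_eq_one_iff hs').2 hs
  have hnorm' : ‖D'.arc i s‖ = 1 := (norm_arc_eq_one_iff hs').2 hs
  have heq : D'.arc i s = D.arc i s := by rcases hs with rfl | rfl <;> simp [h0, h1]
  rw [heq]
  refine sub_div_sub_mem_slitPlane ?_ ?_ ?_ (fun h => ?_) fun h => ?_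
  · rwa [LinearIsometryEquiv.norm_map]
  · rw [LinearIsometryEquiv.norm_map]
    exact D.arc_in_disk j t ht
  · rw [LinearIsometryEquiv.norm_map]
    exact D'.arc_in_disk j t ht
  · exact hij (eq_of_arc_eq_of_norm_eq_one hs' ht (toComplex.injective h).symm hnorm).1
  · exact hij (eq_of_arc_eq_of_norm_eq_one hs' ht (heq.trans (toComplex.injective h).symm)
      hnorm').1

lemma arc_sub_div_arc_sub_mem_slitPlane_of_mem_frontier (h0 : ∀ i, D.arc i 0 = D'.arc i 0)
    (h1 : ∀ i, D.arc i 1 = D'.arc i 1) (hij : i ≠ j) {z : ℂ}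
    (hz : z ∈ frontier (Icc (0 : ℝ) 1 ×ℂ Icc (0 : ℝ) 1)) :
    (toComplex (D'.arc i z.re) - toComplex (D'.arc j z.im)) /
      (toComplex (D.arc i z.re) - toComplex (D.arc j z.im)) ∈ Complex.slitPlane := by
  rw [Complex.frontier_reProdIm, closure_Icc, frontier_Icc zero_le_one] at hz
  rcases hz with hz | hz
  · rw [← neg_div_neg_eq, neg_sub, neg_sub]
    exact arc_sub_div_arc_sub_mem_slitPlane h0 h1 hij.symm hz.2 hz.1
  · exact arc_sub_div_arc_sub_mem_slitPlane h0 h1 hij hz.1 hz.2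

end PreDiagram

namespace TripleDiagram

variable {D : TripleDiagram n nl} {D' : TripleDiagram n nl'} {i j : Fin n}

lemma mem_interior_and_hasIndexAt (hij : i ≠ j) {z : ℂ} (hz : z ∈ D.crossings i j) :
    z ∈ interior (Icc (0 : ℝ) 1 ×ℂ Icc (0 : ℝ) 1) ∧
      HasIndexAt (fun x => toComplex (D.arc i x.re) - toComplex (D.arc j x.im)) z
        (-SignType.sign (det (deriv (D.arc i) z.re) (deriv (D.arc j) z.im))) := by
  refine ⟨by simpa [Complex.interior_reProdIm, Complex.mem_reProdIm] using
    And.intro hz.1 hz.2.1, ?_⟩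
  rw [det_apply]
  refine hasIndexAt_sub_of_hasDerivAt (D.hasDerivAt_toComplex_arc i _)
    (D.hasDerivAt_toComplex_arc j _) (congrArg _ hz.2.2) ?_
    (.of_forall fun s => (D.continuous_toComplex_arc i).continuousAt)
    (.of_forall fun s => (D.continuous_toComplex_arc j).continuousAt)
  rw [← det_apply]
  exact det_ne_zero_of_mem_crossings hij hz

lemma toComplex_arc_sub_ne_zero {D : PreDiagram n nl} (hij : i ≠ j) {z : ℂ}
    (hz : z ∈ Icc (0 : ℝ) 1 ×ℂ Icc (0 : ℝ) 1) (hz' : z ∉ D.crossings i j) :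
    toComplex (D.arc i z.re) - toComplex (D.arc j z.im) ≠ 0 := fun h =>
  have heq := toComplex.injective (sub_eq_zero.1 h)
  have hmem := mem_Ioo_of_arc_eq hz.1 hz.2 heq fun h => hij (congrArg Prod.fst h)
  hz' ⟨hmem.1, hmem.2, heq⟩

lemma finsum_crossings_eq (h0 : ∀ i, D.arc i 0 = D'.arc i 0) (h1 : ∀ i, D.arc i 1 = D'.arc i 1)
    (hij : i ≠ j) :
    ∑ᶠ z ∈ D.crossings i j,
        (SignType.sign (det (deriv (D.arc i) z.re) (deriv (D.arc j) z.im)) : ℤ) =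
      ∑ᶠ z ∈ D'.crossings i j,
        (SignType.sign (det (deriv (D'.arc i) z.re) (deriv (D'.arc j) z.im)) : ℤ) := by
  have hfin := finite_crossings (D := D) hij
  have hfin' := finite_crossings (D := D') hij
  have hcont {nl : ℕ} (D : PreDiagram n nl) :
      Continuous fun x : ℂ => toComplex (D.arc i x.re) - toComplex (D.arc j x.im) :=
    ((D.continuous_toComplex_arc i).comp Complex.continuous_re).sub
      ((D.continuous_toComplex_arc j).comp Complex.continuous_im)
  have hcenter : (⟨1 / 2, 1 / 2⟩ : ℂ) ∈ interior (Icc (0 : ℝ) 1 ×ℂ Icc (0 : ℝ) 1) := by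
    rw [Complex.interior_reProdIm, interior_Icc, Complex.mem_reProdIm]
    norm_num
  have hconv : Convex ℝ (Icc (0 : ℝ) 1 ×ℂ Icc (0 : ℝ) 1) :=
    ((convex_Icc 0 1).linear_preimage Complex.reLm).inter
      ((convex_Icc 0 1).linear_preimage Complex.imLm)
  rw [finsum_mem_eq_finite_toFinset_sum _ hfin, finsum_mem_eq_finite_toFinset_sum _ hfin',
    ← neg_inj, ← Finset.sum_neg_distrib, ← Finset.sum_neg_distrib]
  refine sum_index_eq_of_div_mem_slitPlane hconv
    (isClosed_Icc.reProdIm isClosed_Icc) ((isBounded_Icc 0 1).reProdIm (isBounded_Icc 0 1))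
    hcenter (hcont D.toPreDiagram).continuousOn (hcont D'.toPreDiagram).continuousOn
    (fun z hz => mem_interior_and_hasIndexAt hij (hfin.mem_toFinset.1 hz))
    (fun z hz => mem_interior_and_hasIndexAt hij (hfin'.mem_toFinset.1 hz))
    (fun z hz hz' => toComplex_arc_sub_ne_zero hij hz (mt hfin.mem_toFinset.2 hz'))
    (fun z hz hz' => toComplex_arc_sub_ne_zero hij hz (mt hfin'.mem_toFinset.2 hz'))
    fun z hz => arc_sub_div_arc_sub_mem_slitPlane_of_mem_frontier h0 h1 hij hz

lemma signedCount_eq_of_endpoints_eq (h0 : ∀ i, D.arc i 0 = D'.arc i 0)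
    (h1 : ∀ i, D.arc i 1 = D'.arc i 1) : D.signedCount = D'.signedCount := by
  rw [signedCount_eq_finsum_crossings, signedCount_eq_finsum_crossings]
  exact finsum_mem_congr rfl fun a ha => finsum_crossings_eq h0 h1 (ne_of_lt ha)

lemma tripleCount_le_of_isReduced {D : TripleDiagram n 0} {σ : Equiv.Perm (Fin n)}
    (hσ : Realizes D σ) (hσ' : Realizes D' σ) (hD : D.IsReduced) :
    D.tripleCount ≤ D'.tripleCount := by
  zify
  calc (D.tripleCount : ℤ) = D.signedCount :=
        (signedCount_eq_tripleCount_of_isReduced hD fun i => (hσ i).1).symm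
    _ = D'.signedCount := signedCount_eq_of_endpoints_eq
        (fun i => (hσ i).1.trans (hσ' i).1.symm) fun i => (hσ i).2.trans (hσ' i).2.symm
    _ ≤ D'.tripleCount := signedCount_le_tripleCount D'

end TripleDiagram

end Reduced

section Analysis
open Filter Topology

lemma smoothTransition_add_smoothTransition_one_sub (x : ℝ) :
    smoothTransition x + smoothTransition (1 - x) = 1 := by
  have h := smoothTransition.pos_denom x
  rw [smoothTransition, smoothTransition, sub_sub_cancel, add_comm (expNegInvGlue (1 - x)),
    ← add_div, div_self h.ne']

/-- A smooth approximation of `max 0`, which agrees with it outside `(-ε, ε)`. -/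
noncomputable def smoothRamp (ε s : ℝ) : ℝ :=
  ∫ x in (-ε)..s, smoothTransition ((x + ε) / (2 * ε))

namespace smoothRamp

variable {ε s : ℝ}

lemma hasDerivAt (ε s : ℝ) :
    HasDerivAt (smoothRamp ε) (smoothTransition ((s + ε) / (2 * ε))) s :=
  (Continuous.integral_hasStrictDerivAt
    (smoothTransition.continuous.comp (by fun_prop)) (-ε) s).hasDerivAt

lemma contDiff (ε : ℝ) : ContDiff ℝ (⊤ : ℕ∞) (smoothRamp ε) := by
  rw [contDiff_infty_iff_deriv]
  refine ⟨fun s => (hasDerivAt ε s).differentiableAt, ?_⟩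
  rw [funext fun s => (hasDerivAt ε s).deriv]
  exact smoothTransition.contDiff.comp (by fun_prop)

lemma deriv_add_deriv_neg (hε : 0 < ε) (s : ℝ) :
    deriv (smoothRamp ε) s + deriv (smoothRamp ε) (-s) = 1 := by
  rw [(hasDerivAt ε s).deriv, (hasDerivAt ε (-s)).deriv,
    ← smoothTransition_add_smoothTransition_one_sub ((s + ε) / (2 * ε))]
  congr 2
  field_simp
  ring

lemma of_le (hε : 0 < ε) (hs : s ≤ -ε) : smoothRamp ε s = 0 := by
  rw [smoothRamp, intervalIntegral.integral_congr (g := fun _ => 0),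
    intervalIntegral.integral_zero]
  intro x hx
  rw [uIcc_of_ge hs] at hx
  exact smoothTransition.zero_of_nonpos (div_nonpos_of_nonpos_of_nonneg (by linarith [hx.2])
    (by positivity))

lemma sub_neg (hε : 0 < ε) (s : ℝ) : smoothRamp ε s - smoothRamp ε (-s) = s := by
  have hderiv (x : ℝ) :
      HasDerivAt (fun s => smoothRamp ε s - smoothRamp ε (-s) - s) 0 x := by
    have hd (y : ℝ) := (hasDerivAt ε y).differentiableAt.hasDerivAt
    refine (((hd x).sub ((hd (-x)).comp x (hasDerivAt_neg x))).sub (hasDerivAt_id x)).congr_deriv ?_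
    linarith [deriv_add_deriv_neg hε x]
  have h := is_const_of_deriv_eq_zero (fun x => (hderiv x).differentiableAt)
    (fun x => (hderiv x).deriv) s 0
  simpa [sub_eq_zero] using h

lemma of_ge (hε : 0 < ε) (hs : ε ≤ s) : smoothRamp ε s = s := by
  have h := sub_neg hε s
  rwa [of_le hε (neg_le_neg hs), sub_zero] at h

lemma monotone (ε : ℝ) : Monotone (smoothRamp ε) :=
  monotone_of_deriv_nonneg (fun s => (hasDerivAt ε s).differentiableAt) fun s => by
    rw [(hasDerivAt ε s).deriv]
    exact smoothTransition.nonneg _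

lemma pos (hε : 0 < ε) (hs : -ε < s) : 0 < smoothRamp ε s := by
  refine intervalIntegral.intervalIntegral_pos_of_pos_on
    ((smoothTransition.continuous.comp (by fun_prop)).intervalIntegrable _ _) (fun x hx => ?_) hs
  exact smoothTransition.pos_of_pos (div_pos (by linarith [hx.1]) (by positivity))

end smoothRamp

section Periodization

variable {E : Type*} {g : ℝ → E}

lemma comp_fract_eventuallyEq (hg : ∀ᶠ s in 𝓝 (0 : ℝ), g (s + 1) = g s) (τ : ℝ) :
    g ∘ Int.fract =ᶠ[𝓝 τ] fun s => g (s - ⌊τ⌋) := by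
  have hfract : ∀ᶠ s : ℝ in 𝓝 τ, s - ⌊τ⌋ ∈ Ioo (-1 : ℝ) 1 := by
    have hcont : Continuous fun s : ℝ => s - ⌊τ⌋ := by fun_prop
    exact hcont.continuousAt.preimage_mem_nhds (Ioo_mem_nhds
      (by linarith [Int.floor_le τ]) (by linarith [Int.lt_floor_add_one τ]))
  have hzero : ∀ᶠ s : ℝ in 𝓝 τ, s < ⌊τ⌋ → g (s - ⌊τ⌋ + 1) = g (s - ⌊τ⌋) := by
    rcases (Int.floor_le τ).eq_or_lt with h | h
    · have hcont : Tendsto (fun s : ℝ => s - ⌊τ⌋) (𝓝 τ) (𝓝 0) := by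
        rw [← sub_eq_zero.2 h.symm]
        exact tendsto_id.sub_const _
      filter_upwards [hcont.eventually hg] with s hs _ using hs
    · filter_upwards [lt_mem_nhds h] with s hs hs' using absurd hs' hs.not_gt
  filter_upwards [hfract, hzero] with s hs h
  rcases lt_or_ge s ⌊τ⌋ with hlt | hge
  · have hfloor : ⌊s⌋ = ⌊τ⌋ - 1 := by
      rw [Int.floor_eq_iff]
      push_cast
      constructor <;> linarith [hs.1]
    rw [Function.comp_apply, ← h hlt, Int.fract, hfloor]
    push_cast
    congr 1
    ring
  · have hfloor : ⌊s⌋ = ⌊τ⌋ := Int.floor_eq_iff.2 ⟨hge, by linarith [hs.2]⟩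
    rw [Function.comp_apply, Int.fract, hfloor]

variable [NormedAddCommGroup E] [NormedSpace ℝ E]

lemma contDiff_comp_fract {m : WithTop ℕ∞} (hg : ContDiff ℝ m g)
    (hper : ∀ᶠ s in 𝓝 (0 : ℝ), g (s + 1) = g s) : ContDiff ℝ m (g ∘ Int.fract) :=
  contDiff_iff_contDiffAt.2 fun τ =>
    (hg.comp (contDiff_id.sub contDiff_const)).contDiffAt.congr_of_eventuallyEq
      (comp_fract_eventuallyEq hper τ)

lemma deriv_comp_fract (hper : ∀ᶠ s in 𝓝 (0 : ℝ), g (s + 1) = g s) (τ : ℝ) :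
    deriv (g ∘ Int.fract) τ = deriv g (Int.fract τ) := by
  rw [(comp_fract_eventuallyEq hper τ).deriv_eq, deriv_comp_sub_const, Int.fract]

end Periodization

lemma eventually_eq_of_sub_mem_cone {E F : Type*} [NormedAddCommGroup E] [NormedSpace ℝ E]
    [ProperSpace E] [NormedAddCommGroup F] [NormedSpace ℝ F] {f : E → F} {L : E →L[ℝ] F} {x : E}
    (hf : HasStrictFDerivAt f L x) {K : Set E} (hK : IsClosed K)
    (hcone : ∀ v ∈ K, ∀ c : ℝ, 0 < c → c • v ∈ K) (hL : ∀ v ∈ K, L v = 0 → v = 0) :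
    ∀ᶠ p in 𝓝 (x, x), p.1 - p.2 ∈ K → f p.1 = f p.2 → p.1 = p.2 := by
  obtain ⟨c, hc, hcL⟩ := ((isCompact_sphere (0 : E) 1).inter_right hK).exists_forall_le'
    (f := fun v => ‖L v‖) (a := 0) (by fun_prop) fun v hv => norm_pos_iff.2 fun h =>
      ne_zero_of_mem_unit_sphere ⟨v, hv.1⟩ (hL v hv.2 h)
  filter_upwards [hf.isLittleO.def (half_pos hc)] with p hp hpK hpf
  by_contra hne
  have hpos : 0 < ‖p.1 - p.2‖ := norm_pos_iff.2 (sub_ne_zero.2 hne)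
  have hunit := hcL (‖p.1 - p.2‖⁻¹ • (p.1 - p.2))
    ⟨by simp [norm_smul, hpos.ne'], hcone _ hpK _ (inv_pos.2 hpos)⟩
  rw [map_smul, norm_smul, norm_inv, norm_norm, inv_mul_eq_div, le_div_iff₀ hpos] at hunit
  rw [hpf, sub_self, zero_sub, norm_neg] at hp
  nlinarith

end Analysis

section CrossingChart
open Filter Topology Plane PreDiagram

namespace TripleDiagram

variable {n nl : ℕ} {D : TripleDiagram n nl} {p : Plane} {x y : Passage n nl}

lemma exists_third_passage (hx : x ∈ D.passages p) (hy : y ∈ D.passages p) (hne : x ≠ y) :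
    ∃ z, D.passages p = {x, y, z} ∧ ∃ a b : ℝ, 0 < a ∧ 0 < b ∧
      D.tangent z = -(a • D.tangent x + b • D.tangent y) := by
  obtain ⟨q, -, hP, hdet⟩ := exists_oriented_passages (PreDiagram.isMultiplePoint_of_ne hx hy hne)
  have hthird (k : Fin 3) : ∃ a b : ℝ, 0 < a ∧ 0 < b ∧
      D.tangent (q (k + 2)) = -(a • D.tangent (q k) + b • D.tangent (q (k + 1))) := by
    have h₁ := hdet (k + 1)
    have h₂ := hdet (k + 2)
    rw [add_assoc, show (1 + 1 : Fin 3) = 2 from rfl] at h₁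
    rw [add_assoc, show (2 + 1 : Fin 3) = 0 from rfl, add_zero] at h₂
    refine ⟨_, _, div_pos h₁ (hdet k), div_pos h₂ (hdet k), ?_⟩
    apply smul_right_injective _ (hdet k).ne'
    simp only [smul_neg, smul_add, smul_smul, mul_div_cancel₀ _ (hdet k).ne']
    rw [det_smul_sub_det_smul, det_swap (D.tangent (q (k + 2))), det_swap (D.tangent (q k))]
    module
  have hrange (k : Fin 3) : range q = {q k, q (k + 1), q (k + 2)} := by
    rw [← image_univ, show (univ : Set (Fin 3)) = {k, k + 1, k + 2} by ext; decide +revert,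
      image_insert_eq, image_pair]
  rw [hP] at hx hy
  obtain ⟨⟨k, rfl⟩, l, rfl⟩ := hx, hy
  have hkl : l = k + 1 ∨ k = l + 1 := by
    have hkl : k ≠ l := fun h => hne (congrArg q h)
    clear hne
    omega
  rcases hkl with rfl | rfl
  · exact ⟨q (k + 2), hP.trans (hrange k), hthird k⟩
  · obtain ⟨a, b, ha, hb, h⟩ := hthird l
    exact ⟨q (l + 2), by rw [hP, hrange l, insert_comm], b, a, hb, ha, by rw [h, add_comm]⟩

end TripleDiagram

namespace PreDiagram

/-- Near a crossing of two arcs, the passages `x` and `y`, this is a chart of the plane in which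
the two branches are the coordinate axes. -/
def crossingChart {n nl : ℕ} (D : PreDiagram n nl) (x y : Fin n × ℝ) (v : ℝ × ℝ) : Plane :=
  D.arc x.1 (x.2 + v.1) + D.arc y.1 (y.2 + v.2) - D.arc x.1 x.2

section

variable {n nl : ℕ} {D : PreDiagram n nl} {x y : Fin n × ℝ}

lemma continuous_arc (D : PreDiagram n nl) (i : Fin n) : Continuous (D.arc i) :=
  (D.arc_smooth i).continuous

lemma contDiff_crossingChart (D : PreDiagram n nl) (x y : Fin n × ℝ) :
    ContDiff ℝ (⊤ : ℕ∞) (D.crossingChart x y) :=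
  (((D.arc_smooth x.1).comp (contDiff_const.add contDiff_fst)).add
    ((D.arc_smooth y.1).comp (contDiff_const.add contDiff_snd))).sub contDiff_const

lemma hasStrictFDerivAt_arc_add {E : Type*} [NormedAddCommGroup E] [NormedSpace ℝ E]
    (D : PreDiagram n nl) (i : Fin n) (c : ℝ) (φ : E →L[ℝ] ℝ) (w : E) :
    HasStrictFDerivAt (fun w => D.arc i (c + φ w)) (φ.smulRight (deriv (D.arc i) (c + φ w))) w :=
  (((D.arc_smooth i).contDiffAt.hasStrictDerivAt (by simp)).hasStrictFDerivAt.comp w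
    (φ.hasStrictFDerivAt.const_add c)).congr_fderiv (by ext; simp)

lemma hasStrictFDerivAt_crossingChart (D : PreDiagram n nl) (x y : Fin n × ℝ) (v : ℝ × ℝ) :
    HasStrictFDerivAt (D.crossingChart x y)
      ((ContinuousLinearMap.fst ℝ ℝ ℝ).smulRight (deriv (D.arc x.1) (x.2 + v.1)) +
        (ContinuousLinearMap.snd ℝ ℝ ℝ).smulRight (deriv (D.arc y.1) (y.2 + v.2))) v :=
  ((D.hasStrictFDerivAt_arc_add x.1 x.2 (.fst ℝ ℝ ℝ) v).add
    (D.hasStrictFDerivAt_arc_add y.1 y.2 (.snd ℝ ℝ ℝ) v)).sub_const _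

lemma crossingChart_mk_zero (h : D.arc x.1 x.2 = D.arc y.1 y.2) (a : ℝ) :
    D.crossingChart x y (a, 0) = D.arc x.1 (x.2 + a) := by
  simp [crossingChart, h]

lemma crossingChart_swap (h : D.arc x.1 x.2 = D.arc y.1 y.2) (v : ℝ × ℝ) :
    D.crossingChart x y v.swap = D.crossingChart y x v := by
  simp [crossingChart, h, add_comm]

lemma crossingChart_zero_mk (h : D.arc x.1 x.2 = D.arc y.1 y.2) (b : ℝ) :
    D.crossingChart x y (0, b) = D.arc y.1 (y.2 + b) := by
  rw [← crossingChart_mk_zero h.symm, ← crossingChart_swap h, Prod.swap_prod_mk]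

lemma smul_add_smul_eq_zero_iff {u v : Plane} (h : det u v ≠ 0) {a b : ℝ} :
    a • u + b • v = 0 ↔ a = 0 ∧ b = 0 :=
  ⟨LinearIndependent.pair_iff.1 (linearIndependent_pair_iff_det_ne_zero.2 h) a b,
    by rintro ⟨rfl, rfl⟩; simp⟩

lemma eq_zero_of_smul_add_smul_sub_smul_eq_zero {u v : Plane} (h : det u v ≠ 0) {a b : ℝ}
    (ha : 0 < a) (hb : 0 < b) {r s t : ℝ} (hrs : r * s ≤ 0)
    (h0 : r • u + s • v - t • (-(a • u + b • v)) = 0) : r = 0 ∧ s = 0 ∧ t = 0 := by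
  obtain ⟨hr, hs⟩ := (smul_add_smul_eq_zero_iff h (a := r + a * t) (b := s + b * t)).1 <| by
    rw [← h0]
    module
  have ht : t = 0 := by
    by_contra ht
    have := mul_pos (mul_pos ha hb) (mul_self_pos.2 ht)
    rw [eq_neg_of_add_eq_zero_left hr, eq_neg_of_add_eq_zero_left hs] at hrs
    nlinarith
  simpa [ht] using And.intro hr hs

lemma eventually_snd_fst_eq {X Y ι : Type*} [TopologicalSpace X] [TopologicalSpace Y]
    [TopologicalSpace ι] [DiscreteTopology ι] (p : X × ι × Y) : ∀ᶠ w in 𝓝 p, w.2.1 = p.2.1 := by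
  have hcont : Continuous fun w : X × ι × Y => w.2.1 := by fun_prop
  exact hcont.continuousAt.eventually_mem ((isOpen_discrete {p.2.1}).mem_nhds rfl)

lemma eventually_injective_crossingChart
    (h : det (deriv (D.arc x.1) x.2) (deriv (D.arc y.1) y.2) ≠ 0) :
    ∀ᶠ p in 𝓝 ((0, 0) : (ℝ × ℝ) × (ℝ × ℝ)),
      D.crossingChart x y p.1 = D.crossingChart x y p.2 → p.1 = p.2 := by
  refine (eventually_eq_of_sub_mem_cone (D.hasStrictFDerivAt_crossingChart x y 0) isClosed_univ
    (fun _ _ _ _ => mem_univ _) fun v _ hv => ?_).mono fun p hp => hp (mem_univ _)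
  refine Prod.ext_iff.2 ((smul_add_smul_eq_zero_iff h).1 ?_)
  simpa using hv

lemma eventually_eq_of_arc_eq_crossingChart (hxy : D.arc x.1 x.2 = D.arc y.1 y.2)
    (h : det (deriv (D.arc x.1) x.2) (deriv (D.arc y.1) y.2) ≠ 0) :
    ∀ᶠ w in 𝓝 ((0, x) : (ℝ × ℝ) × (Fin n × ℝ)),
      D.arc w.2.1 w.2.2 = D.crossingChart x y w.1 → w.2 = (x.1, x.2 + w.1.1) ∧ w.1.2 = 0 := by
  have htendsto : Tendsto (fun w : (ℝ × ℝ) × (Fin n × ℝ) => (w.1, (w.2.2 - x.2, (0 : ℝ))))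
      (𝓝 (0, x)) (𝓝 (0, 0)) := by
    refine Continuous.tendsto' (by fun_prop) _ _ ?_
    simp
  filter_upwards [htendsto.eventually (eventually_injective_crossingChart h),
    eventually_snd_fst_eq (0, x)] with w hw hw₁ hq
  have hw' := hw (by rw [crossingChart_mk_zero hxy, add_sub_cancel, ← hq, hw₁])
  exact ⟨Prod.ext hw₁ (by simp [hw']), by simp [hw']⟩

lemma eventually_arc_ne_crossingChart {z : Fin n × ℝ}
    (hxy : D.arc x.1 x.2 = D.arc y.1 y.2) (hxz : D.arc x.1 x.2 = D.arc z.1 z.2)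
    (h : det (deriv (D.arc x.1) x.2) (deriv (D.arc y.1) y.2) ≠ 0) {a b : ℝ} (ha : 0 < a)
    (hb : 0 < b)
    (hz : deriv (D.arc z.1) z.2 = -(a • deriv (D.arc x.1) x.2 + b • deriv (D.arc y.1) y.2)) :
    ∀ᶠ w in 𝓝 ((0, z) : (ℝ × ℝ) × (Fin n × ℝ)),
      w.1 ≠ 0 → w.1.1 * w.1.2 ≤ 0 → D.arc w.2.1 w.2.2 ≠ D.crossingChart x y w.1 := by
  have hderiv := ((D.hasStrictFDerivAt_crossingChart x y 0).comp ((0, 0) : (ℝ × ℝ) × ℝ)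
    hasStrictFDerivAt_fst).sub (D.hasStrictFDerivAt_arc_add z.1 z.2 (.snd ℝ (ℝ × ℝ) ℝ) (0, 0))
  have hcone := eventually_eq_of_sub_mem_cone hderiv (K := {w | w.1.1 * w.1.2 ≤ 0})
    (isClosed_le (by fun_prop) continuous_const)
    (fun w hw c hc => by
      change (c * w.1.1) * (c * w.1.2) ≤ 0
      nlinarith [mul_nonneg hc.le hc.le, show w.1.1 * w.1.2 ≤ 0 from hw])
    fun w hw hw0 => ?_
  · have htendsto : Tendsto (fun w : (ℝ × ℝ) × (Fin n × ℝ) =>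
        ((w.1, w.2.2 - z.2), (((0, 0), 0) : (ℝ × ℝ) × ℝ))) (𝓝 (0, z)) (𝓝 ((0, 0), (0, 0))) := by
      refine Continuous.tendsto' (by fun_prop) _ _ ?_
      simp
    filter_upwards [htendsto.eventually hcone, eventually_snd_fst_eq (0, z)]
      with w hw hw₁ hne hsign heq
    refine hne (congrArg Prod.fst (hw (by simpa using hsign) ?_))
    simp [← heq, hw₁, crossingChart_mk_zero hxy, hxz]
  · have hw0 : w.1.1 • deriv (D.arc x.1) x.2 + w.1.2 • deriv (D.arc y.1) y.2 -
        w.2 • deriv (D.arc z.1) z.2 = 0 := by simpa using hw0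
    obtain ⟨h₁, h₂, h₃⟩ := eq_zero_of_smul_add_smul_sub_smul_eq_zero h ha hb hw (hz ▸ hw0)
    exact Prod.ext (Prod.ext h₁ h₂) h₃

end

/-- The crossing of the passages `x` and `y` of arcs can be smoothed inside the image of a
square of radius `ε` under the crossing chart: this square is embedded in the open disk, and away
from the crossing the two closed quadrants in which the coordinates have opposite signs are
disjoint from all arcs except for the two branches themselves. -/
structure IsSmoothable {n : ℕ} (D : PreDiagram n 0) (x y : Fin n × ℝ) (ε : ℝ) : Prop where
  pos : 0 < ε
  arc_eq : D.arc x.1 x.2 = D.arc y.1 y.2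
  left_mem : x.2 ∈ Ioo ε (1 - ε)
  right_mem : y.2 ∈ Ioo ε (1 - ε)
  norm_lt_one : ∀ v ∈ closedBall (0 : ℝ × ℝ) ε, ‖D.crossingChart x y v‖ < 1
  det_ne_zero : ∀ v ∈ closedBall (0 : ℝ × ℝ) ε,
    det (deriv (D.arc x.1) (x.2 + v.1)) (deriv (D.arc y.1) (y.2 + v.2)) ≠ 0
  injOn : InjOn (D.crossingChart x y) (closedBall 0 ε)
  eq_of_arc_eq : ∀ v ∈ closedBall (0 : ℝ × ℝ) ε, v ≠ 0 → v.1 * v.2 ≤ 0 →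
    ∀ q : Fin n × ℝ, q.2 ∈ Icc (0 : ℝ) 1 → D.arc q.1 q.2 = D.crossingChart x y v →
      q = (x.1, x.2 + v.1) ∧ v.2 = 0 ∨ q = (y.1, y.2 + v.2) ∧ v.1 = 0

end PreDiagram

namespace TripleDiagram

variable {n : ℕ} {D : TripleDiagram n 0} {x y : Fin n × ℝ}

lemma eventually_arc_eq_crossingChart (hx : x.2 ∈ Ioo (0 : ℝ) 1) (hy : y.2 ∈ Ioo (0 : ℝ) 1)
    (hxy : D.arc x.1 x.2 = D.arc y.1 y.2) (hne : x ≠ y) :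
    ∀ᶠ v in 𝓝 (0 : ℝ × ℝ), ∀ q ∈ (univ : Set (Fin n)) ×ˢ Icc (0 : ℝ) 1,
      v ≠ 0 → v.1 * v.2 ≤ 0 → D.arc q.1 q.2 = D.crossingChart x y v →
        q = (x.1, x.2 + v.1) ∧ v.2 = 0 ∨ q = (y.1, y.2 + v.2) ∧ v.1 = 0 := by
  have hxp : .inl x ∈ D.passages (D.arc x.1 x.2) := ⟨hx, rfl⟩
  have hyp : .inl y ∈ D.passages (D.arc x.1 x.2) := ⟨hy, hxy.symm⟩
  obtain ⟨z, hz, a, b, ha, hb, hzt⟩ := exists_third_passage hxp hyp (Sum.inl_injective.ne hne)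
  have hdet := det_tangent_ne_zero hxp hyp (Sum.inl_injective.ne hne)
  refine (isCompact_univ.prod isCompact_Icc).eventually_forall_of_forall_eventually
    fun q hq => ?_
  by_cases hqp : D.arc q.1 q.2 = D.arc x.1 x.2
  · have hqmem : .inl q ∈ D.passages (D.arc x.1 x.2) :=
      ⟨(norm_arc_lt_one_iff hq.2).1 (hqp ▸ D.arc_interior _ _ hx), hqp⟩
    rw [hz] at hqmem
    rcases hqmem with h | h | h
    · obtain rfl := Sum.inl_injective h
      filter_upwards [eventually_eq_of_arc_eq_crossingChart hxy hdet] with w hw _ _ h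
      exact .inl (hw h)
    · obtain rfl := Sum.inl_injective h
      have hswap : Tendsto (fun w : (ℝ × ℝ) × (Fin n × ℝ) => (w.1.swap, w.2)) (𝓝 (0, q))
        (𝓝 (0, q)) := Continuous.tendsto' (by fun_prop) _ _ rfl
      rw [det_swap, neg_ne_zero] at hdet
      filter_upwards [hswap.eventually (eventually_eq_of_arc_eq_crossingChart hxy.symm hdet)]
        with w hw _ _ h
      exact .inr (hw (h.trans (crossingChart_swap hxy.symm w.1).symm))
    · subst h
      filter_upwards [eventually_arc_ne_crossingChart hxy hqp.symm hdet ha hb hzt]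
        with w hw hne hsign h
      exact absurd h (hw hne hsign)
  · have hcont : Continuous fun w : (ℝ × ℝ) × (Fin n × ℝ) => D.arc w.2.1 w.2.2 :=
      (continuous_prod_of_discrete_left (f := fun q : Fin n × ℝ => D.arc q.1 q.2).2
        D.continuous_arc).comp continuous_snd
    have hchart : Continuous fun w : (ℝ × ℝ) × (Fin n × ℝ) => D.crossingChart x y w.1 :=
      (D.contDiff_crossingChart x y).continuous.comp continuous_fst
    filter_upwards [(hcont.continuousAt.ne_iff_eventually_ne hchart.continuousAt).1
      (by simpa [crossingChart, hxy] using hqp)] with w hw _ _ h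
    exact absurd h hw

theorem eventually_isSmoothable (hx : x.2 ∈ Ioo (0 : ℝ) 1) (hy : y.2 ∈ Ioo (0 : ℝ) 1)
    (hxy : D.arc x.1 x.2 = D.arc y.1 y.2) (hne : x ≠ y) :
    ∀ᶠ ε in 𝓝[>] (0 : ℝ), D.IsSmoothable x y ε := by
  have hdet : det (deriv (D.arc x.1) x.2) (deriv (D.arc y.1) y.2) ≠ 0 :=
    det_tangent_ne_zero (q := .inl x) (q' := .inl y) ⟨hx, rfl⟩ ⟨hy, hxy.symm⟩
      (Sum.inl_injective.ne hne)
  have hdet_near : ∀ᶠ v in 𝓝 (0 : ℝ × ℝ),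
      det (deriv (D.arc x.1) (x.2 + v.1)) (deriv (D.arc y.1) (y.2 + v.2)) ≠ 0 := by
    have hcont (i : Fin n) := (D.arc_smooth i).continuous_deriv (by simp)
    refine ContinuousAt.eventually_ne ?_ (by simpa using hdet)
    simp only [det_apply]
    fun_prop
  have hnorm : ∀ᶠ v in 𝓝 (0 : ℝ × ℝ), ‖D.crossingChart x y v‖ < 1 :=
    (D.contDiff_crossingChart x y).continuous.norm.continuousAt.eventually_lt continuousAt_const
      (by simpa [crossingChart, hxy] using D.arc_interior _ _ hy)
  have hleft : ∀ᶠ ε in 𝓝 (0 : ℝ), x.2 ∈ Ioo ε (1 - ε) ∧ y.2 ∈ Ioo ε (1 - ε) := by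
    filter_upwards [eventually_lt_nhds hx.1, eventually_lt_nhds hy.1,
      eventually_lt_nhds (sub_pos.2 hx.2), eventually_lt_nhds (sub_pos.2 hy.2)] with ε h₁ h₂ h₃ h₄
    exact ⟨⟨h₁, by linarith⟩, h₂, by linarith⟩
  have hball := eventually_closedBall_subset (hnorm.and
    (hdet_near.and (eventually_arc_eq_crossingChart hx hy hxy hne)))
  filter_upwards [self_mem_nhdsWithin, nhdsWithin_le_nhds hleft, nhdsWithin_le_nhds hball,
    nhdsWithin_le_nhds (eventually_closedBall_subset (eventually_injective_crossingChart hdet))]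
    with ε hε hmem hball hinj
  exact
    { pos := hε
      arc_eq := hxy
      left_mem := hmem.1
      right_mem := hmem.2
      norm_lt_one := fun v hv => (hball hv).1
      det_ne_zero := fun v hv => (hball hv).2.1
      injOn := fun v hv w hw => @hinj (v, w)
        ((closedBall_prod_same (0 : ℝ × ℝ) (0 : ℝ × ℝ) ε).subset ⟨hv, hw⟩)
      eq_of_arc_eq := fun v hv h0 hsign q hq => (hball hv).2.2 q ⟨mem_univ _, hq⟩ h0 hsign }

end TripleDiagram

end CrossingChart

/-! ### Oriented smoothing of a crossing -/

section Smoothing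
open Filter Topology Plane

lemma swap_mem_closedBall {v : ℝ × ℝ} {ε : ℝ} (hv : v ∈ closedBall 0 ε) :
    v.swap ∈ closedBall 0 ε := by
  rw [mem_closedBall_zero_iff, Prod.norm_def] at hv ⊢
  rwa [max_comm]

/-- A smooth curve in `ℝ × ℝ` which rounds the corner between the first axis, along which it comes
in, and the second axis, along which it goes out. -/
noncomputable def smoothCorner (ε s : ℝ) : ℝ × ℝ := (-smoothRamp ε (-s), smoothRamp ε s)

namespace smoothCorner

variable {ε s t : ℝ}

lemma contDiff (ε : ℝ) : ContDiff ℝ (⊤ : ℕ∞) (smoothCorner ε) :=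
  ((smoothRamp.contDiff ε).comp contDiff_neg).neg.prodMk (smoothRamp.contDiff ε)

lemma hasDerivAt (ε s : ℝ) : HasDerivAt (smoothCorner ε)
    (deriv (smoothRamp ε) (-s), deriv (smoothRamp ε) s) s := by
  have h (t : ℝ) := (smoothRamp.hasDerivAt ε t).differentiableAt.hasDerivAt
  exact (((h (-s)).comp s (hasDerivAt_neg s)).neg.prodMk (h s)).congr_deriv (by simp)

lemma fst_add_snd (hε : 0 < ε) (s : ℝ) : (smoothCorner ε s).1 + (smoothCorner ε s).2 = s :=
  (neg_add_eq_sub _ _).trans (smoothRamp.sub_neg hε s)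

lemma injective (hε : 0 < ε) : Function.Injective (smoothCorner ε) := fun s t h => by
  rw [← fst_add_snd hε s, h, fst_add_snd hε]

lemma of_le (hε : 0 < ε) (hs : s ≤ -ε) : smoothCorner ε s = (s, 0) :=
  Prod.ext (by simp [smoothCorner, smoothRamp.of_ge hε (le_neg_of_le_neg hs)])
    (smoothRamp.of_le hε hs)

lemma of_ge (hε : 0 < ε) (hs : ε ≤ s) : smoothCorner ε s = (0, s) :=
  Prod.ext (by simp [smoothCorner, smoothRamp.of_le hε (neg_le_neg hs)]) (smoothRamp.of_ge hε hs)

lemma fst_neg (hε : 0 < ε) (hs : s < ε) : (smoothCorner ε s).1 < 0 :=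
  neg_lt_zero.2 (smoothRamp.pos hε (neg_lt_neg hs))

lemma snd_pos (hε : 0 < ε) (hs : -ε < s) : 0 < (smoothCorner ε s).2 := smoothRamp.pos hε hs

lemma fst_nonpos (hε : 0 < ε) (s : ℝ) : (smoothCorner ε s).1 ≤ 0 := by
  rcases lt_or_ge s ε with hs | hs
  exacts [(fst_neg hε hs).le, by rw [of_ge hε hs]]

lemma snd_nonneg (hε : 0 < ε) (s : ℝ) : 0 ≤ (smoothCorner ε s).2 := by
  rcases lt_or_ge (-ε) s with hs | hs
  exacts [(snd_pos hε hs).le, by rw [of_le hε hs]]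

lemma fst_ne_zero_or_snd_ne_zero (hε : 0 < ε) (s : ℝ) :
    (smoothCorner ε s).1 ≠ 0 ∨ (smoothCorner ε s).2 ≠ 0 := by
  rcases lt_or_ge s ε with hs | hs
  exacts [.inl (fst_neg hε hs).ne, .inr (snd_pos hε (by linarith)).ne']

lemma ne_swap (hε : 0 < ε) (s t : ℝ) : smoothCorner ε s ≠ (smoothCorner ε t).swap := by
  intro h
  rw [Prod.ext_iff, Prod.fst_swap, Prod.snd_swap] at h
  rcases fst_ne_zero_or_snd_ne_zero hε s with hne | hne
  · exact hne ((fst_nonpos hε s).antisymm (h.1 ▸ snd_nonneg hε t))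
  · exact hne ((h.2 ▸ fst_nonpos hε t).antisymm (snd_nonneg hε s))

lemma mem_closedBall (hε : 0 < ε) (hs : s ∈ Icc (-ε) ε) : smoothCorner ε s ∈ closedBall 0 ε := by
  have h₁ := smoothRamp.monotone ε hs.2
  have h₂ := smoothRamp.monotone ε (neg_le_of_neg_le hs.1)
  rw [smoothRamp.of_ge hε le_rfl] at h₁ h₂
  have h₃ := fst_nonpos hε s
  have h₄ := snd_nonneg hε s
  rw [mem_closedBall_zero_iff, norm_prod_le_iff, norm_eq_abs, norm_eq_abs, abs_of_nonpos h₃,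
    abs_of_nonneg h₄, smoothCorner, neg_neg]
  exact ⟨h₂, h₁⟩

end smoothCorner

namespace PreDiagram

/-- The branch coming in along the arc through the passage `x` and going out along the arc through
the passage `y`, in the oriented smoothing of the crossing of `x` and `y`. -/
noncomputable def smoothedBranch {n nl : ℕ} (D : PreDiagram n nl) (x y : Fin n × ℝ) (ε s : ℝ) :
    Plane :=
  D.crossingChart x y (smoothCorner ε s)

lemma contDiff_smoothedBranch {n nl : ℕ} (D : PreDiagram n nl) (x y : Fin n × ℝ) (ε : ℝ) :
    ContDiff ℝ (⊤ : ℕ∞) (D.smoothedBranch x y ε) :=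
  (D.contDiff_crossingChart x y).comp (smoothCorner.contDiff ε)

namespace IsSmoothable

variable {n : ℕ} {D : PreDiagram n 0} {x y : Fin n × ℝ} {ε s t : ℝ}

lemma symm (h : D.IsSmoothable x y ε) : D.IsSmoothable y x ε where
  pos := h.pos
  arc_eq := h.arc_eq.symm
  left_mem := h.right_mem
  right_mem := h.left_mem
  norm_lt_one v hv := by
    rw [← crossingChart_swap h.arc_eq]
    exact h.norm_lt_one v.swap (swap_mem_closedBall hv)
  det_ne_zero v hv := by
    rw [det_swap, neg_ne_zero]
    exact h.det_ne_zero v.swap (swap_mem_closedBall hv)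
  injOn v hv w hw hvw := by
    rw [← crossingChart_swap h.arc_eq, ← crossingChart_swap h.arc_eq] at hvw
    exact Prod.swap_injective (h.injOn (swap_mem_closedBall hv) (swap_mem_closedBall hw) hvw)
  eq_of_arc_eq v hv h0 hsign q hq hqv := by
    rw [← crossingChart_swap h.arc_eq] at hqv
    exact (h.eq_of_arc_eq v.swap (swap_mem_closedBall hv) (fun h => h0 (Prod.swap_injective h))
      (by rwa [Prod.fst_swap, Prod.snd_swap, mul_comm]) q hq hqv).symm

lemma smoothedBranch_of_le (h : D.IsSmoothable x y ε) (hs : s ≤ -ε) :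
    D.smoothedBranch x y ε s = D.arc x.1 (x.2 + s) := by
  rw [smoothedBranch, smoothCorner.of_le h.pos hs, crossingChart_mk_zero h.arc_eq]

lemma smoothedBranch_of_ge (h : D.IsSmoothable x y ε) (hs : ε ≤ s) :
    D.smoothedBranch x y ε s = D.arc y.1 (y.2 + s) := by
  rw [smoothedBranch, smoothCorner.of_ge h.pos hs, crossingChart_zero_mk h.arc_eq]

lemma deriv_smoothedBranch_of_lt (h : D.IsSmoothable x y ε) (hs : s < -ε) :
    deriv (D.smoothedBranch x y ε) s = deriv (D.arc x.1) (x.2 + s) := by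
  rw [← deriv_comp_const_add]
  exact Filter.EventuallyEq.deriv_eq
    ((gt_mem_nhds hs).mono fun t ht => h.smoothedBranch_of_le ht.le)

lemma deriv_smoothedBranch_of_gt (h : D.IsSmoothable x y ε) (hs : ε < s) :
    deriv (D.smoothedBranch x y ε) s = deriv (D.arc y.1) (y.2 + s) := by
  rw [← deriv_comp_const_add]
  exact Filter.EventuallyEq.deriv_eq
    ((lt_mem_nhds hs).mono fun t ht => h.smoothedBranch_of_ge ht.le)

lemma deriv_smoothedBranch_ne_zero_of_mem_Icc (h : D.IsSmoothable x y ε) (hs : s ∈ Icc (-ε) ε) :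
    deriv (D.smoothedBranch x y ε) s ≠ 0 := by
  have hderiv := (D.hasStrictFDerivAt_crossingChart x y _).hasFDerivAt.comp_hasDerivAt s
    (smoothCorner.hasDerivAt ε s)
  intro h0
  obtain ⟨h₁, h₂⟩ : deriv (smoothRamp ε) (-s) = 0 ∧ deriv (smoothRamp ε) s = 0 :=
    (smul_add_smul_eq_zero_iff (h.det_ne_zero _ (smoothCorner.mem_closedBall h.pos hs))).1
      (hderiv.deriv.symm.trans h0)
  have hsum := smoothRamp.deriv_add_deriv_neg h.pos s
  rw [h₁, h₂, add_zero] at hsum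
  exact zero_ne_one hsum

lemma deriv_smoothedBranch_ne_zero (h : D.IsSmoothable x y ε) (hs : s ∈ Icc (-x.2) (1 - y.2)) :
    deriv (D.smoothedBranch x y ε) s ≠ 0 := by
  have hε := h.pos
  rcases lt_or_ge s (-ε) with h₁ | h₁
  · rw [h.deriv_smoothedBranch_of_lt h₁]
    exact D.arc_immersed _ _ ⟨by linarith [hs.1], by linarith [h.left_mem.2]⟩
  rcases lt_or_ge ε s with h₂ | h₂
  · rw [h.deriv_smoothedBranch_of_gt h₂]
    exact D.arc_immersed _ _ ⟨by linarith [h.right_mem.1], by linarith [hs.2]⟩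
  · exact h.deriv_smoothedBranch_ne_zero_of_mem_Icc ⟨h₁, h₂⟩

lemma norm_smoothedBranch_lt_one (h : D.IsSmoothable x y ε) (hs : s ∈ Ioo (-x.2) (1 - y.2)) :
    ‖D.smoothedBranch x y ε s‖ < 1 := by
  have hε := h.pos
  rcases lt_or_ge s (-ε) with h₁ | h₁
  · rw [h.smoothedBranch_of_le h₁.le]
    exact D.arc_interior _ _ ⟨by linarith [hs.1], by linarith [h.left_mem.2]⟩
  rcases lt_or_ge ε s with h₂ | h₂
  · rw [h.smoothedBranch_of_ge h₂.le]
    exact D.arc_interior _ _ ⟨by linarith [h.right_mem.1], by linarith [hs.2]⟩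
  · exact h.norm_lt_one _ (smoothCorner.mem_closedBall h.pos ⟨h₁, h₂⟩)

end IsSmoothable

end PreDiagram

/-- The conditions that the definition of a diagram imposes on a single arc. -/
structure IsProperArc (g : ℝ → Plane) : Prop where
  contDiff : ContDiff ℝ (⊤ : ℕ∞) g
  deriv_ne_zero : ∀ t ∈ Icc (0 : ℝ) 1, deriv g t ≠ 0
  norm_lt_one : ∀ t ∈ Ioo (0 : ℝ) 1, ‖g t‖ < 1
  norm_start : ‖g 0‖ = 1
  norm_end : ‖g 1‖ = 1
  transverse_start : ⟪deriv g 0, g 0⟫ ≠ 0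
  transverse_end : ⟪deriv g 1, g 1⟫ ≠ 0

/-- The conditions that the definition of a diagram imposes on a single loop. -/
structure IsProperLoop (g : ℝ → Plane) : Prop where
  contDiff : ContDiff ℝ (⊤ : ℕ∞) g
  periodic : Function.Periodic g 1
  deriv_ne_zero : ∀ t, deriv g t ≠ 0
  norm_lt_one : ∀ t, ‖g t‖ < 1

lemma IsProperArc.norm_le_one {g : ℝ → Plane} (hg : IsProperArc g) {t : ℝ}
    (ht : t ∈ Icc (0 : ℝ) 1) : ‖g t‖ ≤ 1 := by
  rcases eq_endpoints_or_mem_Ioo_of_mem_Icc ht with rfl | rfl | ht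
  exacts [hg.norm_start.le, hg.norm_end.le, (hg.norm_lt_one t ht).le]

namespace PreDiagram

variable {n nl : ℕ}

lemma isProperArc_arc (D : PreDiagram n nl) (i : Fin n) : IsProperArc (D.arc i) where
  contDiff := D.arc_smooth i
  deriv_ne_zero := D.arc_immersed i
  norm_lt_one := D.arc_interior i
  norm_start := D.arc_start_bdry i
  norm_end := D.arc_end_bdry i
  transverse_start := D.arc_transverse_start i
  transverse_end := D.arc_transverse_end i

/-- The diagram consisting of the given proper arcs and loops. -/
def ofArcsLoops (γ : Fin n → ℝ → Plane) (δ : Fin nl → ℝ → Plane)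
    (hγ : ∀ i, IsProperArc (γ i)) (hδ : ∀ i, IsProperLoop (δ i))
    (hend : Function.Injective (Sum.elim (fun i => γ i 0) (fun i => γ i 1))) :
    PreDiagram n nl where
  arc := γ
  loop := δ
  arc_smooth i := (hγ i).contDiff
  loop_smooth i := (hδ i).contDiff
  loop_periodic i := (hδ i).periodic
  arc_immersed i := (hγ i).deriv_ne_zero
  loop_immersed i := (hδ i).deriv_ne_zero
  arc_in_disk i _ ht := (hγ i).norm_le_one ht
  arc_interior i := (hγ i).norm_lt_one
  arc_start_bdry i := (hγ i).norm_start
  arc_end_bdry i := (hγ i).norm_end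
  arc_transverse_start i := (hγ i).transverse_start
  arc_transverse_end i := (hγ i).transverse_end
  loop_in_disk i := (hδ i).norm_lt_one
  endpoints_distinct := hend

/-- The branch of the smoothing that comes in along the arc of `x` and goes out along the arc of
`y`, as an arc parametrized by `[0, 1]`. -/
noncomputable def smoothedArc (D : PreDiagram n nl) (x y : Fin n × ℝ) (ε τ : ℝ) : Plane :=
  D.smoothedBranch x y ε (-x.2 + (x.2 + (1 - y.2)) * τ)

lemma deriv_comp_const_add_mul {F : Type*} [NormedAddCommGroup F] [NormedSpace ℝ F] (g : ℝ → F)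
    (a b τ : ℝ) :
    deriv (fun τ => g (a + b * τ)) τ = b • deriv g (a + b * τ) := by
  rw [← deriv_comp_const_add, ← deriv_comp_mul_left]

lemma deriv_smoothedArc (D : PreDiagram n nl) (x y : Fin n × ℝ) (ε τ : ℝ) :
    deriv (D.smoothedArc x y ε) τ = (x.2 + (1 - y.2)) •
      deriv (D.smoothedBranch x y ε) (-x.2 + (x.2 + (1 - y.2)) * τ) :=
  deriv_comp_const_add_mul _ _ _ _

namespace IsSmoothable

variable {D : PreDiagram n 0} {x y : Fin n × ℝ} {ε τ : ℝ}

lemma smoothedArc_zero (h : D.IsSmoothable x y ε) : D.smoothedArc x y ε 0 = D.arc x.1 0 := by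
  rw [smoothedArc, mul_zero, add_zero, h.smoothedBranch_of_le (neg_le_neg h.left_mem.1.le),
    add_neg_cancel]

lemma smoothedArc_one (h : D.IsSmoothable x y ε) : D.smoothedArc x y ε 1 = D.arc y.1 1 := by
  rw [smoothedArc, mul_one, neg_add_cancel_left,
    h.smoothedBranch_of_ge (by linarith [h.right_mem.2]), add_sub_cancel]

lemma length_pos (h : D.IsSmoothable x y ε) : 0 < x.2 + (1 - y.2) := by
  linarith [h.left_mem.1, h.right_mem.2, h.pos]

lemma isProperArc_smoothedArc (h : D.IsSmoothable x y ε) :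
    IsProperArc (D.smoothedArc x y ε) where
  contDiff := (D.contDiff_smoothedBranch x y ε).comp (by fun_prop)
  deriv_ne_zero t ht := by
    rw [deriv_smoothedArc]
    refine smul_ne_zero h.length_pos.ne' (h.deriv_smoothedBranch_ne_zero ⟨?_, ?_⟩) <;>
      nlinarith [ht.1, ht.2, h.length_pos]
  norm_lt_one t ht := h.norm_smoothedBranch_lt_one
    ⟨by nlinarith [ht.1, h.length_pos], by nlinarith [ht.2, h.length_pos]⟩
  norm_start := by rw [h.smoothedArc_zero, D.arc_start_bdry]
  norm_end := by rw [h.smoothedArc_one, D.arc_end_bdry]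
  transverse_start := by
    rw [deriv_smoothedArc, h.smoothedArc_zero, mul_zero, add_zero,
      h.deriv_smoothedBranch_of_lt (neg_lt_neg h.left_mem.1), add_neg_cancel, real_inner_smul_left]
    exact mul_ne_zero h.length_pos.ne' (D.arc_transverse_start x.1)
  transverse_end := by
    rw [deriv_smoothedArc, h.smoothedArc_one, mul_one, neg_add_cancel_left,
      h.deriv_smoothedBranch_of_gt (by linarith [h.right_mem.2]), add_sub_cancel,
      real_inner_smul_left]
    exact mul_ne_zero h.length_pos.ne' (D.arc_transverse_end y.1)

end IsSmoothable

end PreDiagram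

end Smoothing

section Transfer
open Plane

variable {n nl n' nl' : ℕ}

namespace TripleDiagram

/-- The triple diagram structure on a diagram whose multiple points are multiple points of a given
triple diagram, with the same tangent directions there. -/
def ofBijOn (D : TripleDiagram n nl) (D' : PreDiagram n' nl') (e : Passage n' nl' → Passage n nl)
    (hmult : ∀ p, D'.IsMultiplePoint p → D.IsMultiplePoint p)
    (he : ∀ p, D'.IsMultiplePoint p → BijOn e (D'.passages p) (D.passages p))
    (htangent : ∀ p, D'.IsMultiplePoint p → ∀ q ∈ D'.passages p,
      ∃ c : ℝ, 0 < c ∧ D'.tangent q = c • D.tangent (e q)) :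
    TripleDiagram n' nl' where
  toPreDiagram := D'
  multiple_finite := D.multiple_finite.subset hmult
  triple p hp := by
    rw [← D.triple p (hmult p hp), ← (he p hp).image_eq, (he p hp).injOn.ncard_image]
  branches_transverse p hp q hq q' hq' hne := by
    obtain ⟨c, hc, h⟩ := htangent p hp q hq
    obtain ⟨c', hc', h'⟩ := htangent p hp q' hq'
    rw [linearIndependent_pair_iff_det_ne_zero, h, h']
    simpa [hc.ne', hc'.ne'] using det_tangent_ne_zero ((he p hp).mapsTo hq)
      ((he p hp).mapsTo hq') ((he p hp).injOn.ne hq hq' hne)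
  alternating p hp := by
    obtain ⟨q₁, q₂, q₃, hP, a, b, c, ha, hb, hc, h0⟩ := D.alternating p (hmult p hp)
    have hsurj (q : Passage n nl) (hq : q ∈ D.passages p) :
        ∃ q' ∈ D'.passages p, e q' = q ∧ ∃ r : ℝ, 0 < r ∧ D.tangent q = r • D'.tangent q' := by
      obtain ⟨q', hq', rfl⟩ := (he p hp).surjOn hq
      obtain ⟨r, hr, h⟩ := htangent p hp q' hq'
      exact ⟨q', hq', rfl, r⁻¹, inv_pos.2 hr, by rw [h, inv_smul_smul₀ hr.ne']⟩
    obtain ⟨r₁, hr₁, rfl, x, hx, h₁⟩ := hsurj q₁ (by simp [hP])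
    obtain ⟨r₂, hr₂, rfl, y, hy, h₂⟩ := hsurj q₂ (by simp [hP])
    obtain ⟨r₃, hr₃, rfl, z, hz, h₃⟩ := hsurj q₃ (by simp [hP])
    refine ⟨r₁, r₂, r₃, ?_, a * x, b * y, c * z, mul_pos ha hx, mul_pos hb hy, mul_pos hc hz, ?_⟩
    · rw [← (he p hp).injOn.image_eq_image_iff subset_rfl (by simp [insert_subset_iff, *]),
        (he p hp).image_eq, hP, image_insert_eq, image_pair]
    · rw [← h0, h₁, h₂, h₃]
      simp only [mul_smul]

end TripleDiagram

namespace PreDiagram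

/-- The parameters of the interior of the arcs, and of one period of the loops. -/
def validPassages (n nl : ℕ) : Set (Passage n nl) :=
  Sum.elim (fun q => q.2 ∈ Ioo (0 : ℝ) 1) (fun q => q.2 ∈ Ico (0 : ℝ) 1)

/-- The point of the plane traversed at a passage. -/
def point (D : PreDiagram n nl) : Passage n nl → Plane :=
  Sum.elim (fun q => D.arc q.1 q.2) (fun q => D.loop q.1 q.2)

lemma mem_passages_iff {D : PreDiagram n nl} {q : Passage n nl} {p : Plane} :
    q ∈ D.passages p ↔ q ∈ validPassages n nl ∧ D.point q = p := by
  rcases q with q | q <;> rfl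

/-- The diagram `D'` arises from `D` by a modification, with correspondence `e` of passages, which
replaces the passages in `W` by the passages in `W'` and resolves the multiple point `p₀`. -/
structure ResolvesAt (D : PreDiagram n nl) (D' : PreDiagram n' nl') (p₀ : Plane)
    (e : Passage n' nl' → Passage n nl) (W : Set (Passage n nl)) (W' : Set (Passage n' nl')) :
    Prop where
  isMultiplePoint : D.IsMultiplePoint p₀
  bijOn : BijOn e (validPassages n' nl' \ W') (validPassages n nl \ W)
  point_eq : ∀ q ∈ validPassages n' nl' \ W', D'.point q = D.point (e q)
  tangent_eq : ∀ q ∈ validPassages n' nl' \ W',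
    ∃ c : ℝ, 0 < c ∧ D'.tangent q = c • D.tangent (e q)
  eq_of_point_eq : ∀ q ∈ validPassages n' nl' ∩ W', ∀ q' ∈ validPassages n' nl',
    D'.point q = D'.point q' → q = q'
  point_eq_of_mem : ∀ q ∈ W, D.IsMultiplePoint (D.point q) → D.point q = p₀
  subsingleton : (D.passages p₀ \ W).Subsingleton

namespace ResolvesAt

variable {D : PreDiagram n nl} {D' : PreDiagram n' nl'} {p p₀ : Plane}
  {e : Passage n' nl' → Passage n nl} {W : Set (Passage n nl)} {W' : Set (Passage n' nl')}

lemma bijOn_passages_diff (h : D.ResolvesAt D' p₀ e W W') (p : Plane) :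
    BijOn e (D'.passages p \ W') (D.passages p \ W) := by
  refine ⟨fun q hq => ?_, h.bijOn.injOn.mono
    (sdiff_subset_sdiff_left fun q hq => (mem_passages_iff.1 hq).1), fun q hq => ?_⟩
  · obtain ⟨hvalid, hpoint⟩ := mem_passages_iff.1 hq.1
    have hq' : q ∈ validPassages n' nl' \ W' := ⟨hvalid, hq.2⟩
    have hmaps := h.bijOn.mapsTo hq'
    exact ⟨mem_passages_iff.2 ⟨hmaps.1, by rw [← h.point_eq q hq', hpoint]⟩, hmaps.2⟩
  · obtain ⟨hvalid, hpoint⟩ := mem_passages_iff.1 hq.1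
    obtain ⟨q', hq', rfl⟩ := h.bijOn.surjOn ⟨hvalid, hq.2⟩
    exact ⟨q', ⟨mem_passages_iff.2 ⟨hq'.1, by rw [h.point_eq q' hq', hpoint]⟩, hq'.2⟩, rfl⟩

lemma disjoint_passages_new (h : D.ResolvesAt D' p₀ e W W') (hp : D'.IsMultiplePoint p) :
    Disjoint (D'.passages p) W' := by
  refine disjoint_left.2 fun q hq hW => hp ?_
  have heq (q') (hq' : q' ∈ D'.passages p) : q = q' := by
    rw [mem_passages_iff] at hq hq'
    exact h.eq_of_point_eq q ⟨hq.1, hW⟩ q' hq'.1 (hq.2.trans hq'.2.symm)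
  exact fun q₁ h₁ q₂ h₂ => (heq q₁ h₁).symm.trans (heq q₂ h₂)

lemma disjoint_passages_old (h : D.ResolvesAt D' p₀ e W W') (hp : D.IsMultiplePoint p)
    (hne : p ≠ p₀) : Disjoint (D.passages p) W := by
  refine disjoint_left.2 fun q hq hW => hne ?_
  obtain ⟨-, rfl⟩ := mem_passages_iff.1 hq
  exact h.point_eq_of_mem q hW hp

lemma isMultiplePoint_iff (h : D.ResolvesAt D' p₀ e W W') :
    D'.IsMultiplePoint p ↔ D.IsMultiplePoint p ∧ p ≠ p₀ := by
  have hbij := h.bijOn_passages_diff p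
  refine ⟨fun hp => ?_, fun ⟨hp, hne⟩ hsub => ?_⟩
  · have hdiff : ¬ (D.passages p \ W).Subsingleton := fun hsub => hp <| by
      rw [← (h.disjoint_passages_new hp).sdiff_eq_left]
      exact fun q hq q' hq' => hbij.injOn hq hq' (hsub (hbij.mapsTo hq) (hbij.mapsTo hq'))
    exact ⟨fun hsub => hdiff (hsub.anti sdiff_subset), fun heq => hdiff (heq ▸ h.subsingleton)⟩
  · rw [(h.disjoint_passages_old hp hne).sdiff_eq_left] at hbij
    exact hp (hbij.image_eq ▸ (hsub.anti sdiff_subset).image e)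

lemma bijOn_passages (h : D.ResolvesAt D' p₀ e W W') (hp : D'.IsMultiplePoint p) :
    BijOn e (D'.passages p) (D.passages p) := by
  have hp' := h.isMultiplePoint_iff.1 hp
  simpa only [(h.disjoint_passages_new hp).sdiff_eq_left,
    (h.disjoint_passages_old hp'.1 hp'.2).sdiff_eq_left] using h.bijOn_passages_diff p

end ResolvesAt

end PreDiagram

lemma TripleDiagram.exists_of_resolvesAt {D : TripleDiagram n nl} {D' : PreDiagram n' nl'}
    {p₀ : Plane} {e : Passage n' nl' → Passage n nl} {W : Set (Passage n nl)}
    {W' : Set (Passage n' nl')} (h : D.ResolvesAt D' p₀ e W W') :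
    ∃ T : TripleDiagram n' nl', T.toPreDiagram = D' ∧ T.tripleCount + 1 = D.tripleCount := by
  refine ⟨D.ofBijOn D' e (fun p hp => (h.isMultiplePoint_iff.1 hp).1)
    (fun p hp => h.bijOn_passages hp) fun p hp q hq => h.tangent_eq q
      ⟨(PreDiagram.mem_passages_iff.1 hq).1,
        disjoint_left.1 (h.disjoint_passages_new hp) hq⟩, rfl, ?_⟩
  have heq : {p | D'.IsMultiplePoint p} = {p | D.IsMultiplePoint p} \ {p₀} :=
    Set.ext fun p => h.isMultiplePoint_iff
  rw [tripleCount, tripleCount, ofBijOn, heq]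
  exact ncard_sdiff_singleton_add_one h.isMultiplePoint D.multiple_finite

end Transfer

section SmoothingCoordinates
open Plane PreDiagram

/-- A parameter on the smoothing of the crossing of two passages of arcs: either a passage of an
arc that does not take part in the crossing, or a parameter on one of the two smoothed branches. -/
inductive SmoothedPassage (n : ℕ)
  | unchanged (q : Fin n × ℝ)
  | firstBranch (s : ℝ)
  | secondBranch (s : ℝ)

namespace SmoothedPassage

variable {n nl : ℕ}

/-- The point of the smoothing with a given parameter. -/
noncomputable def point (D : PreDiagram n nl) (x y : Fin n × ℝ) (ε : ℝ) :
    SmoothedPassage n → Plane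
  | unchanged q => D.arc q.1 q.2
  | firstBranch s => D.smoothedBranch x y ε s
  | secondBranch s => D.smoothedBranch y x ε s

/-- The velocity of the smoothing at a given parameter. -/
noncomputable def velocity (D : PreDiagram n nl) (x y : Fin n × ℝ) (ε : ℝ) :
    SmoothedPassage n → Plane
  | unchanged q => deriv (D.arc q.1) q.2
  | firstBranch s => deriv (D.smoothedBranch x y ε) s
  | secondBranch s => deriv (D.smoothedBranch y x ε) s

/-- The parameter on the original arcs that corresponds to a parameter on the smoothing. -/
noncomputable def source (x y : Fin n × ℝ) : SmoothedPassage n → Fin n × ℝ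
  | unchanged q => q
  | firstBranch s => if s < 0 then (x.1, x.2 + s) else (y.1, y.2 + s)
  | secondBranch s => if s < 0 then (y.1, y.2 + s) else (x.1, x.2 + s)

/-- The parameters at which the smoothing may differ from the original diagram. -/
def window (n : ℕ) (ε : ℝ) : Set (SmoothedPassage n) :=
  firstBranch '' Icc (-ε) ε ∪ secondBranch '' Icc (-ε) ε

/-- The coordinates, in the crossing chart, of a point on a smoothed branch (with value `0`
elsewhere). -/
noncomputable def chartCoord (ε : ℝ) : SmoothedPassage n → ℝ × ℝ
  | unchanged _ => 0
  | firstBranch s => smoothCorner ε s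
  | secondBranch s => (smoothCorner ε s).swap

variable {D : PreDiagram n 0} {x y : Fin n × ℝ} {ε s : ℝ} {c c' : SmoothedPassage n}

lemma firstBranch_mem_window : firstBranch s ∈ window n ε ↔ s ∈ Icc (-ε) ε := by
  simp [window]

lemma secondBranch_mem_window : secondBranch s ∈ window n ε ↔ s ∈ Icc (-ε) ε := by
  simp [window]

lemma point_eq_arc_source (h : D.IsSmoothable x y ε) (hc : c ∉ window n ε) :
    c.point D x y ε = D.arc (c.source x y).1 (c.source x y).2 := by
  have hε := h.pos
  rcases c with q | s | s
  · rfl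
  all_goals
    simp only [firstBranch_mem_window, secondBranch_mem_window, mem_Icc, not_and_or, not_le] at hc
    rcases hc with hs | hs
  · simp [point, source, h.smoothedBranch_of_le hs.le, show s < 0 by linarith]
  · simp [point, source, h.smoothedBranch_of_ge hs.le, show ¬ s < 0 by linarith]
  · simp [point, source, h.symm.smoothedBranch_of_le hs.le, show s < 0 by linarith]
  · simp [point, source, h.symm.smoothedBranch_of_ge hs.le, show ¬ s < 0 by linarith]

lemma velocity_eq_deriv_arc_source (h : D.IsSmoothable x y ε) (hc : c ∉ window n ε) :
    c.velocity D x y ε = deriv (D.arc (c.source x y).1) (c.source x y).2 := by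
  have hε := h.pos
  rcases c with q | s | s
  · rfl
  all_goals
    simp only [firstBranch_mem_window, secondBranch_mem_window, mem_Icc, not_and_or, not_le] at hc
    rcases hc with hs | hs
  · simp [velocity, source, h.deriv_smoothedBranch_of_lt hs, show s < 0 by linarith]
  · simp [velocity, source, h.deriv_smoothedBranch_of_gt hs, show ¬ s < 0 by linarith]
  · simp [velocity, source, h.symm.deriv_smoothedBranch_of_lt hs, show s < 0 by linarith]
  · simp [velocity, source, h.symm.deriv_smoothedBranch_of_gt hs, show ¬ s < 0 by linarith]

lemma exists_source_eq_of_mem_window (hc : c ∈ window n ε) : ∃ s ∈ Icc (-ε) ε,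
    c.source x y = (x.1, x.2 + s) ∨ c.source x y = (y.1, y.2 + s) := by
  rcases hc with ⟨s, hs, rfl⟩ | ⟨s, hs, rfl⟩ <;> refine ⟨s, hs, ?_⟩ <;>
    by_cases h0 : s < 0 <;> simp [source, h0]

lemma mem_image_source_window (x y : Fin n × ℝ) (hs : s ∈ Icc (-ε) ε) :
    (x.1, x.2 + s) ∈ source x y '' window n ε ∧ (y.1, y.2 + s) ∈ source x y '' window n ε := by
  have h₁ : firstBranch s ∈ window n ε := firstBranch_mem_window.2 hs
  have h₂ : secondBranch s ∈ window n ε := secondBranch_mem_window.2 hs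
  by_cases h0 : s < 0
  · exact ⟨⟨_, h₁, if_pos h0⟩, _, h₂, if_pos h0⟩
  · exact ⟨⟨_, h₂, if_neg h0⟩, _, h₁, if_neg h0⟩

lemma point_eq_crossingChart (h : D.IsSmoothable x y ε) (hc : c ∈ window n ε) :
    c.point D x y ε = D.crossingChart x y (c.chartCoord ε) := by
  rcases hc with ⟨s, -, rfl⟩ | ⟨s, -, rfl⟩
  exacts [rfl, (crossingChart_swap h.arc_eq _).symm]

lemma chartCoord_mem (hε : 0 < ε) (hc : c ∈ window n ε) :
    c.chartCoord ε ∈ closedBall 0 ε ∧ c.chartCoord ε ≠ 0 ∧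
      (c.chartCoord ε).1 * (c.chartCoord ε).2 ≤ 0 := by
  have hcorner {s : ℝ} (hs : s ∈ Icc (-ε) ε) : smoothCorner ε s ∈ closedBall 0 ε ∧
      smoothCorner ε s ≠ 0 ∧ (smoothCorner ε s).1 * (smoothCorner ε s).2 ≤ 0 := by
    refine ⟨smoothCorner.mem_closedBall hε hs, fun h0 => ?_,
      mul_nonpos_of_nonpos_of_nonneg (smoothCorner.fst_nonpos hε s) (smoothCorner.snd_nonneg hε s)⟩
    simpa [h0] using smoothCorner.fst_ne_zero_or_snd_ne_zero hε s
  rcases hc with ⟨s, hs, rfl⟩ | ⟨s, hs, rfl⟩ <;> obtain ⟨h₁, h₂, h₃⟩ := hcorner hs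
  · exact ⟨h₁, h₂, h₃⟩
  · exact ⟨swap_mem_closedBall h₁, fun h0 => h₂ (Prod.swap_injective h0), by
      rwa [chartCoord, Prod.fst_swap, Prod.snd_swap, mul_comm]⟩

lemma injOn_chartCoord (hε : 0 < ε) : InjOn (chartCoord ε) (window n ε) := by
  rintro _ (⟨s, -, rfl⟩ | ⟨s, -, rfl⟩) _ (⟨t, -, rfl⟩ | ⟨t, -, rfl⟩) h
  · rw [smoothCorner.injective hε h]
  · exact absurd h (smoothCorner.ne_swap hε s t)
  · exact absurd h.symm (smoothCorner.ne_swap hε t s)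
  · rw [smoothCorner.injective hε (Prod.swap_injective h)]

lemma injOn_point_window (h : D.IsSmoothable x y ε) :
    InjOn (point D x y ε) (window n ε) := fun c hc c' hc' heq => by
  rw [point_eq_crossingChart h hc, point_eq_crossingChart h hc'] at heq
  exact injOn_chartCoord h.pos hc hc'
    (h.injOn (chartCoord_mem h.pos hc).1 (chartCoord_mem h.pos hc').1 heq)

lemma mem_image_source_of_point_eq (h : D.IsSmoothable x y ε) (hc : c ∈ window n ε)
    {q : Fin n × ℝ} (hq : q.2 ∈ Ioo (0 : ℝ) 1) (heq : c.point D x y ε = D.arc q.1 q.2) :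
    q ∈ source x y '' window n ε := by
  obtain ⟨hball, hne, hsign⟩ := chartCoord_mem h.pos hc
  rw [point_eq_crossingChart h hc] at heq
  have hIcc (w : ℝ) (hw : ‖w‖ ≤ ‖c.chartCoord ε‖) : w ∈ Icc (-ε) ε :=
    abs_le.1 (hw.trans (mem_closedBall_zero_iff.1 hball))
  rcases h.eq_of_arc_eq _ hball hne hsign q (Ioo_subset_Icc_self hq) heq.symm with
    ⟨rfl, -⟩ | ⟨rfl, -⟩
  exacts [(mem_image_source_window x y (hIcc _ (norm_fst_le _))).1,
    (mem_image_source_window x y (hIcc _ (norm_snd_le _))).2]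

end SmoothedPassage

namespace PreDiagram
open SmoothedPassage
namespace IsSmoothable

variable {n : ℕ} {D : PreDiagram n 0} {x y : Fin n × ℝ} {ε s : ℝ}

lemma ne (h : D.IsSmoothable x y ε) : x ≠ y := by
  rintro rfl
  simpa [det_self] using h.det_ne_zero 0 (mem_closedBall_self h.pos.le)

lemma not_isMultiplePoint (h : D.IsSmoothable x y ε) (hs : s ∈ Icc (-ε) ε) (hs0 : s ≠ 0) :
    ¬ D.IsMultiplePoint (D.arc x.1 (x.2 + s)) := by
  refine not_not_intro (subsingleton_of_subset_singleton (a := .inl (x.1, x.2 + s)) ?_)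
  rintro (q | q) hq
  · have hball : (s, (0 : ℝ)) ∈ closedBall 0 ε := by
      simpa [mem_closedBall_zero_iff, h.pos.le, abs_le] using hs
    rcases h.eq_of_arc_eq (s, 0) hball (by simpa using hs0) (by simp) q
      (Ioo_subset_Icc_self hq.1) (hq.2.trans (crossingChart_mk_zero h.arc_eq s).symm) with
      ⟨rfl, -⟩ | ⟨-, h0⟩
    exacts [rfl, absurd h0 hs0]
  · exact q.1.elim0

lemma arc_eq_of_mem_window (h : D.IsSmoothable x y ε) {q : Fin n × ℝ}
    (hq : q ∈ source x y '' window n ε) (hmult : D.IsMultiplePoint (D.arc q.1 q.2)) :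
    D.arc q.1 q.2 = D.arc x.1 x.2 := by
  obtain ⟨c, hc, rfl⟩ := hq
  obtain ⟨s, hs, heq | heq⟩ := exists_source_eq_of_mem_window (x := x) (y := y) hc
  all_goals
    rw [heq] at hmult ⊢
    obtain rfl | hs0 := eq_or_ne s 0
  · rw [add_zero]
  · exact absurd hmult (h.not_isMultiplePoint hs hs0)
  · rw [add_zero, h.arc_eq]
  · exact absurd hmult (h.symm.not_isMultiplePoint hs hs0)

end IsSmoothable

/-- The diagram `D'` is obtained from `D` by smoothing the crossing of the passages `x` and `y`
inside a square of radius `ε`, the function `φ` identifying the passages of `D'` with parameters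
on the smoothing. -/
structure IsSmoothing {n nl : ℕ} (D : PreDiagram n 0) (x y : Fin n × ℝ) (ε : ℝ)
    (D' : PreDiagram n nl) (φ : Passage n nl → SmoothedPassage n) : Prop where
  isSmoothable : D.IsSmoothable x y ε
  bijOn : BijOn (source x y ∘ φ) (validPassages n nl) {q | q.2 ∈ Ioo (0 : ℝ) 1}
  window_subset : window n ε ⊆ φ '' validPassages n nl
  point_eq : ∀ q ∈ validPassages n nl, D'.point q = (φ q).point D x y ε
  tangent_eq : ∀ q ∈ validPassages n nl, ∃ c : ℝ, 0 < c ∧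
    D'.tangent q = c • (φ q).velocity D x y ε

namespace IsSmoothing

variable {n nl : ℕ} {D : PreDiagram n 0} {x y : Fin n × ℝ} {ε : ℝ} {D' : PreDiagram n nl}
  {φ : Passage n nl → SmoothedPassage n}

lemma bijOn_sdiff (h : D.IsSmoothing x y ε D' φ) :
    BijOn (source x y ∘ φ) (validPassages n nl \ φ ⁻¹' window n ε)
      ({q | q.2 ∈ Ioo (0 : ℝ) 1} \ source x y '' window n ε) := by
  have hwindow : source x y '' window n ε =
      source x y ∘ φ '' (validPassages n nl ∩ φ ⁻¹' window n ε) := by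
    rw [image_comp, image_inter_preimage, inter_eq_self_of_subset_right h.window_subset]
  rw [hwindow, ← h.bijOn.image_eq, ← h.bijOn.injOn.image_sdiff]
  exact (h.bijOn.injOn.mono sdiff_subset).bijOn_image

lemma eq_of_point_eq (h : D.IsSmoothing x y ε D' φ) {q q' : Passage n nl}
    (hq : q ∈ validPassages n nl ∩ φ ⁻¹' window n ε) (hq' : q' ∈ validPassages n nl)
    (heq : D'.point q = D'.point q') : q = q' := by
  rw [h.point_eq q hq.1, h.point_eq q' hq'] at heq
  by_cases hwindow : φ q' ∈ window n ε
  · exact h.bijOn.injOn.of_comp hq.1 hq'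
      (injOn_point_window h.isSmoothable hq.2 hwindow heq)
  · rw [point_eq_arc_source h.isSmoothable hwindow] at heq
    exact absurd (mem_image_source_of_point_eq h.isSmoothable hq.2 (h.bijOn.mapsTo hq') heq)
      (h.bijOn_sdiff.mapsTo ⟨hq', hwindow⟩).2

end IsSmoothing

lemma bijOn_inl_validPassages (n : ℕ) :
    BijOn Sum.inl {q : Fin n × ℝ | q.2 ∈ Ioo (0 : ℝ) 1} (validPassages n 0) := by
  refine ⟨fun _ hq => hq, Sum.inl_injective.injOn, ?_⟩
  rintro (q | q) hq
  exacts [⟨q, hq, rfl⟩, q.1.elim0]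

end PreDiagram

namespace TripleDiagram
open SmoothedPassage

variable {n nl : ℕ} {D : TripleDiagram n 0} {x y : Fin n × ℝ} {ε : ℝ} {D' : PreDiagram n nl}
  {φ : Passage n nl → SmoothedPassage n}

lemma resolvesAt_of_isSmoothing (h : D.IsSmoothing x y ε D' φ) :
    D.ResolvesAt D' (D.arc x.1 x.2) (Sum.inl ∘ source x y ∘ φ)
      (Sum.inl '' (source x y '' window n ε)) (φ ⁻¹' window n ε) := by
  have hs := h.isSmoothable
  have hx : .inl x ∈ D.passages (D.arc x.1 x.2) :=
    ⟨Ioo_subset_Ioo hs.pos.le (sub_le_self _ hs.pos.le) hs.left_mem, rfl⟩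
  have hy : .inl y ∈ D.passages (D.arc x.1 x.2) :=
    ⟨Ioo_subset_Ioo hs.pos.le (sub_le_self _ hs.pos.le) hs.right_mem, hs.arc_eq.symm⟩
  have hne := Sum.inl_injective (β := Fin 0 × ℝ).ne hs.ne
  exact
    { isMultiplePoint := isMultiplePoint_of_ne hx hy hne
      bijOn := by
        rw [← (bijOn_inl_validPassages n).image_eq, ← image_sdiff Sum.inl_injective]
        exact Sum.inl_injective.injOn.bijOn_image.comp h.bijOn_sdiff
      point_eq := fun q hq => (h.point_eq q hq.1).trans (point_eq_arc_source hs hq.2)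
      tangent_eq := fun q hq => by
        obtain ⟨c, hc, htangent⟩ := h.tangent_eq q hq.1
        exact ⟨c, hc, htangent.trans (congrArg _ (velocity_eq_deriv_arc_source hs hq.2))⟩
      eq_of_point_eq := fun q hq q' hq' heq => h.eq_of_point_eq hq hq' heq
      point_eq_of_mem := by
        rintro _ ⟨q, hq, rfl⟩ hmult
        exact hs.arc_eq_of_mem_window hq hmult
      subsingleton := by
        obtain ⟨z, hz, -⟩ := exists_third_passage hx hy hne
        have h0 := mem_image_source_window x y (s := 0) ⟨neg_nonpos.2 hs.pos.le, hs.pos.le⟩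
        simp only [add_zero] at h0
        refine subsingleton_of_subset_singleton (a := z) fun q hq => ?_
        rcases hz ▸ hq.1 with rfl | rfl | rfl
        exacts [absurd ⟨x, h0.1, rfl⟩ hq.2, absurd ⟨y, h0.2, rfl⟩ hq.2, rfl] }

end TripleDiagram

end SmoothingCoordinates

section Surgery
open Filter Topology PreDiagram

namespace SmoothedPassage

variable {n : ℕ} {x y : Fin n × ℝ} {ε s : ℝ} {J : Set ℝ}

/-- The parameters on the smoothing of the crossing of `x` and `y`, the second branch being
parametrized by `J`. -/
def smoothedPassages (x y : Fin n × ℝ) (J : Set ℝ) : Set (SmoothedPassage n) :=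
  unchanged '' {q | q.1 ≠ x.1 ∧ q.1 ≠ y.1 ∧ q.2 ∈ Ioo (0 : ℝ) 1} ∪
    firstBranch '' Ioo (-x.2) (1 - y.2) ∪ secondBranch '' J

lemma unchanged_mem_smoothedPassages {q : Fin n × ℝ} :
    unchanged q ∈ smoothedPassages x y J ↔ q.1 ≠ x.1 ∧ q.1 ≠ y.1 ∧ q.2 ∈ Ioo (0 : ℝ) 1 := by
  simp [smoothedPassages]

lemma firstBranch_mem_smoothedPassages :
    firstBranch s ∈ smoothedPassages x y J ↔ s ∈ Ioo (-x.2) (1 - y.2) := by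
  simp [smoothedPassages]

lemma secondBranch_mem_smoothedPassages :
    secondBranch s ∈ smoothedPassages x y J ↔ s ∈ J := by
  simp [smoothedPassages]

lemma bijOn_source_of_ne (hx : x.2 ∈ Ioo (0 : ℝ) 1) (hy : y.2 ∈ Ioo (0 : ℝ) 1)
    (hne : x.1 ≠ y.1) : BijOn (source x y) (smoothedPassages x y (Ioo (-y.2) (1 - x.2)))
      {q | q.2 ∈ Ioo (0 : ℝ) 1} := by
  refine ⟨?_, ?_, ?_⟩
  · rintro _ ((⟨q, hq, rfl⟩ | ⟨s, hs, rfl⟩) | ⟨s, hs, rfl⟩) <;> grind [source]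
  · rintro _ ((⟨q, hq, rfl⟩ | ⟨s, _, rfl⟩) | ⟨s, _, rfl⟩)
      _ ((⟨q', hq', rfl⟩ | ⟨s', _, rfl⟩) | ⟨s', _, rfl⟩) h <;> grind [source]
  · rintro ⟨i, t⟩ ht
    by_cases hix : i = x.1
    · by_cases hlt : t < x.2
      · exact ⟨firstBranch (t - x.2), firstBranch_mem_smoothedPassages.2 (by grind),
          by grind [source]⟩
      · exact ⟨secondBranch (t - x.2), secondBranch_mem_smoothedPassages.2 (by grind),
          by grind [source]⟩
    by_cases hiy : i = y.1
    · by_cases hlt : t < y.2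
      · exact ⟨secondBranch (t - y.2), secondBranch_mem_smoothedPassages.2 (by grind),
          by grind [source]⟩
      · exact ⟨firstBranch (t - y.2), firstBranch_mem_smoothedPassages.2 (by grind),
          by grind [source]⟩
    · exact ⟨unchanged (i, t), unchanged_mem_smoothedPassages.2 ⟨hix, hiy, ht⟩, rfl⟩

lemma bijOn_source_of_eq (hx : x.2 ∈ Ioo (0 : ℝ) 1) (hy : y.2 ∈ Ioo (0 : ℝ) 1)
    (heq : x.1 = y.1) (hlt : x.2 < y.2) : BijOn (source x y)
      (smoothedPassages x y (Ico (-((y.2 - x.2) / 2)) ((y.2 - x.2) / 2)))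
      {q | q.2 ∈ Ioo (0 : ℝ) 1} := by
  refine ⟨?_, ?_, ?_⟩
  · rintro _ ((⟨q, hq, rfl⟩ | ⟨s, hs, rfl⟩) | ⟨s, hs, rfl⟩) <;> grind [source]
  · rintro _ ((⟨q, hq, rfl⟩ | ⟨s, _, rfl⟩) | ⟨s, _, rfl⟩)
      _ ((⟨q', hq', rfl⟩ | ⟨s', _, rfl⟩) | ⟨s', _, rfl⟩) h <;> grind [source]
  · rintro ⟨i, t⟩ ht
    by_cases hix : i = x.1
    · rcases lt_or_ge t x.2 with htx | htx
      · exact ⟨firstBranch (t - x.2), firstBranch_mem_smoothedPassages.2 (by grind),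
          by grind [source]⟩
      rcases lt_or_ge t y.2 with hty | hty
      · by_cases hmid : t < (x.2 + y.2) / 2
        · exact ⟨secondBranch (t - x.2), secondBranch_mem_smoothedPassages.2 (by grind),
            by grind [source]⟩
        · exact ⟨secondBranch (t - y.2), secondBranch_mem_smoothedPassages.2 (by grind),
            by grind [source]⟩
      · exact ⟨firstBranch (t - y.2), firstBranch_mem_smoothedPassages.2 (by grind),
          by grind [source]⟩
    · exact ⟨unchanged (i, t), unchanged_mem_smoothedPassages.2 ⟨hix, heq ▸ hix, ht⟩, rfl⟩

lemma window_subset_smoothedPassages (hx : ε < x.2) (hy : ε < 1 - y.2) (hJ : Icc (-ε) ε ⊆ J) :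
    window n ε ⊆ smoothedPassages x y J := by
  rintro _ (⟨s, hs, rfl⟩ | ⟨s, hs, rfl⟩)
  · exact firstBranch_mem_smoothedPassages.2 ⟨by linarith [hs.1], by linarith [hs.2]⟩
  · exact secondBranch_mem_smoothedPassages.2 (hJ hs)

end SmoothedPassage

namespace PreDiagram
open SmoothedPassage

variable {n nl : ℕ}

lemma injective_endpoints (D : PreDiagram n nl) {γ : Fin n → ℝ → Plane}
    (ρ : Equiv.Perm (Fin n)) (h₀ : ∀ i, γ i 0 = D.arc i 0) (h₁ : ∀ i, γ i 1 = D.arc (ρ i) 1) :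
    Function.Injective (Sum.elim (fun i => γ i 0) (fun i => γ i 1)) := by
  have heq : Sum.elim (fun i => γ i 0) (fun i => γ i 1) =
      Sum.elim (fun i => D.arc i 0) (fun i => D.arc i 1) ∘ Sum.map id ρ := by
    ext1 (i | i)
    exacts [h₀ i, h₁ i]
  rw [heq]
  exact D.endpoints_distinct.comp (Function.injective_id.sumMap ρ.injective)

/-- The arcs obtained by smoothing a crossing of the arcs through two passages `x` and `y`. If
`x` and `y` lie on the same arc, this leaves out the loop that is split off. -/
noncomputable def smoothedArcs (D : PreDiagram n nl) (x y : Fin n × ℝ) (ε : ℝ) (i : Fin n) :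
    ℝ → Plane :=
  if i = x.1 then D.smoothedArc x y ε else if i = y.1 then D.smoothedArc y x ε else D.arc i

/-- The loop split off by smoothing a self-crossing of an arc, at passages `x` and `y` in this
order. -/
noncomputable def smoothedLoop (D : PreDiagram n nl) (x y : Fin n × ℝ) (ε : ℝ) : ℝ → Plane :=
  (fun τ => D.smoothedBranch y x ε (-((y.2 - x.2) / 2) + (y.2 - x.2) * τ)) ∘ Int.fract

namespace IsSmoothable

variable {D : PreDiagram n 0} {x y : Fin n × ℝ} {ε : ℝ}

lemma smoothedArcs_zero (h : D.IsSmoothable x y ε) (i : Fin n) :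
    D.smoothedArcs x y ε i 0 = D.arc i 0 := by
  rw [smoothedArcs]
  split_ifs with hx hy
  · rw [h.smoothedArc_zero, hx]
  · rw [h.symm.smoothedArc_zero, hy]
  · rfl

lemma smoothedArcs_one (h : D.IsSmoothable x y ε) (i : Fin n) :
    D.smoothedArcs x y ε i 1 = D.arc (Equiv.swap x.1 y.1 i) 1 := by
  rw [smoothedArcs]
  split_ifs with hx hy
  · rw [h.smoothedArc_one, hx, Equiv.swap_apply_left]
  · rw [h.symm.smoothedArc_one, hy, Equiv.swap_apply_right]
  · rw [Equiv.swap_apply_of_ne_of_ne hx hy]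

lemma isProperArc_smoothedArcs (h : D.IsSmoothable x y ε) (i : Fin n) :
    IsProperArc (D.smoothedArcs x y ε i) := by
  rw [smoothedArcs]
  split_ifs
  exacts [h.isProperArc_smoothedArc, h.symm.isProperArc_smoothedArc, D.isProperArc_arc i]

lemma two_mul_lt (h : D.IsSmoothable x y ε) (heq : x.1 = y.1) (hlt : x.2 < y.2) :
    2 * ε < y.2 - x.2 := by
  by_contra! hle
  have hmem₁ : ((y.2 - x.2) / 2, (0 : ℝ)) ∈ closedBall 0 ε := by
    rw [mem_closedBall_zero_iff, norm_prod_le_iff, norm_eq_abs, abs_of_nonneg (by linarith)]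
    exact ⟨by linarith, by simpa using h.pos.le⟩
  have hmem₂ : ((0 : ℝ), -((y.2 - x.2) / 2)) ∈ closedBall 0 ε := by
    rw [mem_closedBall_zero_iff, norm_prod_le_iff, norm_neg, norm_eq_abs ((y.2 - x.2) / 2),
      abs_of_nonneg (by linarith)]
    exact ⟨by simpa using h.pos.le, by linarith⟩
  have hmid := h.injOn hmem₁ hmem₂ <| by
    rw [crossingChart_mk_zero h.arc_eq, crossingChart_zero_mk h.arc_eq, heq]
    ring_nf
  exact hlt.ne (by linarith [congrArg Prod.fst hmid])

lemma eventually_smoothedBranch_add_one (h : D.IsSmoothable x y ε) (heq : x.1 = y.1)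
    (hlt : x.2 < y.2) : ∀ᶠ τ in 𝓝 (0 : ℝ),
      D.smoothedBranch y x ε (-((y.2 - x.2) / 2) + (y.2 - x.2) * (τ + 1)) =
        D.smoothedBranch y x ε (-((y.2 - x.2) / 2) + (y.2 - x.2) * τ) := by
  have hε := h.two_mul_lt heq hlt
  have hcont₁ : ContinuousAt (fun τ => -((y.2 - x.2) / 2) + (y.2 - x.2) * τ) 0 := by fun_prop
  have hcont₂ : ContinuousAt (fun τ => -((y.2 - x.2) / 2) + (y.2 - x.2) * (τ + 1)) 0 := by
    fun_prop
  filter_upwards [hcont₁.eventually_lt continuousAt_const (show _ < -ε by linarith),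
    continuousAt_const.eventually_lt hcont₂ (show ε < _ by linarith)] with τ h₁ h₂
  rw [h.symm.smoothedBranch_of_le h₁.le, h.symm.smoothedBranch_of_ge h₂.le, heq]
  ring_nf

lemma deriv_smoothedLoop (h : D.IsSmoothable x y ε) (heq : x.1 = y.1) (hlt : x.2 < y.2)
    (τ : ℝ) : deriv (D.smoothedLoop x y ε) τ = (y.2 - x.2) •
      deriv (D.smoothedBranch y x ε) (-((y.2 - x.2) / 2) + (y.2 - x.2) * Int.fract τ) := by
  rw [smoothedLoop, deriv_comp_fract (h.eventually_smoothedBranch_add_one heq hlt),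
    deriv_comp_const_add_mul]

lemma isProperLoop_smoothedLoop (h : D.IsSmoothable x y ε) (heq : x.1 = y.1)
    (hlt : x.2 < y.2) : IsProperLoop (D.smoothedLoop x y ε) := by
  have hT := sub_pos.2 hlt
  have hfract (τ : ℝ) :
      -((y.2 - x.2) / 2) + (y.2 - x.2) * Int.fract τ ∈ Ioo (-y.2) (1 - x.2) := by
    have h₀ := Int.fract_nonneg τ
    have h₁ := Int.fract_lt_one τ
    constructor <;> nlinarith [h.left_mem.1, h.right_mem.2, h.pos]
  refine ⟨contDiff_comp_fract ((D.contDiff_smoothedBranch y x ε).comp (by fun_prop))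
    (h.eventually_smoothedBranch_add_one heq hlt), fun τ => ?_, fun τ => ?_,
    fun τ => h.symm.norm_smoothedBranch_lt_one (hfract τ)⟩
  · simp [smoothedLoop]
  · rw [h.deriv_smoothedLoop heq hlt]
    exact smul_ne_zero hT.ne' (h.symm.deriv_smoothedBranch_ne_zero (Ioo_subset_Icc_self (hfract τ)))

end IsSmoothable

end PreDiagram

end Surgery

section Removal
open Filter Topology PreDiagram

lemma const_add_mul_mem_Ioo_iff {a b τ : ℝ} (hb : 0 < b) :
    a + b * τ ∈ Ioo a (a + b) ↔ τ ∈ Ioo (0 : ℝ) 1 := by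
  simp [hb, mul_lt_iff_lt_one_right hb]

lemma const_add_mul_mem_Ico_iff {a b τ : ℝ} (hb : 0 < b) :
    a + b * τ ∈ Ico a (a + b) ↔ τ ∈ Ico (0 : ℝ) 1 := by
  simp [hb, mul_lt_iff_lt_one_right hb]

lemma const_add_mul_surjective {a b : ℝ} (hb : b ≠ 0) :
    Function.Surjective fun τ => a + b * τ :=
  (add_left_surjective a).comp (mul_left_surjective₀ hb)

namespace SmoothedPassage

variable {n nl : ℕ} {x y : Fin n × ℝ}

/-- The parameter on the smoothing of the crossing of `x` and `y` that corresponds to a passage of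
the smoothed diagram, whose arcs are `PreDiagram.smoothedArcs` and whose loops, which only occur
if `x` and `y` lie on the same arc, are `PreDiagram.smoothedLoop`. -/
noncomputable def ofPassage (x y : Fin n × ℝ) : Passage n nl → SmoothedPassage n :=
  Sum.elim
    (fun q => if q.1 = x.1 then firstBranch (-x.2 + (x.2 + (1 - y.2)) * q.2)
      else if q.1 = y.1 then secondBranch (-y.2 + (y.2 + (1 - x.2)) * q.2) else unchanged q)
    (fun q => secondBranch (-((y.2 - x.2) / 2) + (y.2 - x.2) * q.2))

lemma bijOn_ofPassage_of_ne (hx : x.2 ∈ Ioo (0 : ℝ) 1) (hy : y.2 ∈ Ioo (0 : ℝ) 1)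
    (hne : x.1 ≠ y.1) : BijOn (ofPassage x y) (validPassages n 0)
      (smoothedPassages x y (Ioo (-y.2) (1 - x.2))) := by
  have hl₁ : 0 < x.2 + (1 - y.2) := by linarith [hx.1, hy.2]
  have hl₂ : 0 < y.2 + (1 - x.2) := by linarith [hx.2, hy.1]
  have hmem₁ (τ : ℝ) := const_add_mul_mem_Ioo_iff (a := -x.2) (τ := τ) hl₁
  have hmem₂ (τ : ℝ) := const_add_mul_mem_Ioo_iff (a := -y.2) (τ := τ) hl₂
  rw [neg_add_cancel_left] at hmem₁ hmem₂
  rw [← (bijOn_inl_validPassages n).image_eq]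
  refine ⟨?_, ?_, ?_⟩
  · rintro _ ⟨⟨i, τ⟩, hτ, rfl⟩
    simp only [ofPassage, Sum.elim_inl]
    split_ifs with hix hiy
    exacts [firstBranch_mem_smoothedPassages.2 ((hmem₁ τ).2 hτ),
      secondBranch_mem_smoothedPassages.2 ((hmem₂ τ).2 hτ),
      unchanged_mem_smoothedPassages.2 ⟨hix, hiy, hτ⟩]
  · rintro _ ⟨⟨i, τ⟩, -, rfl⟩ _ ⟨⟨j, τ'⟩, -, rfl⟩ h
    simp only [ofPassage, Sum.elim_inl] at h
    grind
  · rintro _ ((⟨q, ⟨hqx, hqy, hq⟩, rfl⟩ | ⟨s, hs, rfl⟩) | ⟨s, hs, rfl⟩)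
    · exact ⟨_, mem_image_of_mem _ hq, by simp [ofPassage, hqx, hqy]⟩
    · obtain ⟨τ, rfl⟩ := (const_add_mul_surjective (a := -x.2) hl₁.ne') s
      exact ⟨_, mem_image_of_mem _ (x := (x.1, τ)) ((hmem₁ τ).1 hs), by simp [ofPassage]⟩
    · obtain ⟨τ, rfl⟩ := (const_add_mul_surjective (a := -y.2) hl₂.ne') s
      exact ⟨_, mem_image_of_mem _ (x := (y.1, τ)) ((hmem₂ τ).1 hs), by
        simp [ofPassage, hne.symm]⟩

lemma bijOn_ofPassage_of_eq (hx : x.2 ∈ Ioo (0 : ℝ) 1) (hy : y.2 ∈ Ioo (0 : ℝ) 1)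
    (heq : x.1 = y.1) (hlt : x.2 < y.2) : BijOn (ofPassage x y) (validPassages n 1)
      (smoothedPassages x y (Ico (-((y.2 - x.2) / 2)) ((y.2 - x.2) / 2))) := by
  have hl₁ : 0 < x.2 + (1 - y.2) := by linarith [hx.1, hy.2]
  have hl₂ : 0 < y.2 - x.2 := sub_pos.2 hlt
  have hmem₁ (τ : ℝ) := const_add_mul_mem_Ioo_iff (a := -x.2) (τ := τ) hl₁
  have hmem₂ (τ : ℝ) := const_add_mul_mem_Ico_iff (a := -((y.2 - x.2) / 2)) (τ := τ) hl₂
  rw [neg_add_cancel_left] at hmem₁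
  rw [neg_add_eq_sub, sub_half] at hmem₂
  refine ⟨?_, ?_, ?_⟩
  · rintro (⟨i, τ⟩ | ⟨i, τ⟩) hτ
    · simp only [ofPassage, Sum.elim_inl, ← heq]
      split_ifs with hix
      exacts [firstBranch_mem_smoothedPassages.2 ((hmem₁ τ).2 hτ),
        unchanged_mem_smoothedPassages.2 ⟨hix, heq ▸ hix, hτ⟩]
    · exact secondBranch_mem_smoothedPassages.2 ((hmem₂ τ).2 hτ)
  · rintro (⟨i, τ⟩ | ⟨i, τ⟩) - (⟨j, τ'⟩ | ⟨j, τ'⟩) - h <;>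
      simp only [ofPassage, Sum.elim_inl, Sum.elim_inr] at h
    · grind
    · grind
    · grind
    · rw [Subsingleton.elim i j,
        mul_left_cancel₀ hl₂.ne' (add_left_cancel (secondBranch.inj h))]
  · rintro _ ((⟨q, ⟨hqx, hqy, hq⟩, rfl⟩ | ⟨s, hs, rfl⟩) | ⟨s, hs, rfl⟩)
    · exact ⟨.inl q, hq, by simp [ofPassage, hqx, hqy]⟩
    · obtain ⟨τ, rfl⟩ := (const_add_mul_surjective (a := -x.2) hl₁.ne') s
      exact ⟨.inl (x.1, τ), (hmem₁ τ).1 hs, by simp [ofPassage]⟩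
    · obtain ⟨τ, rfl⟩ := (const_add_mul_surjective (a := -((y.2 - x.2) / 2)) hl₂.ne') s
      exact ⟨.inr (0, τ), (hmem₂ τ).1 hs, rfl⟩

end SmoothedPassage

namespace PreDiagram
open SmoothedPassage

variable {n nl : ℕ}

lemma IsSmoothable.isSmoothing {D : PreDiagram n 0} {x y : Fin n × ℝ} {ε : ℝ}
    (h : D.IsSmoothable x y ε) {D' : PreDiagram n nl} (harc : D'.arc = D.smoothedArcs x y ε)
    (hloop : ∀ i, D'.loop i = D.smoothedLoop x y ε)
    (hxy : Fin nl → x.1 = y.1 ∧ x.2 < y.2) {J : Set ℝ} (hJ : Icc (-ε) ε ⊆ J)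
    (hsource : BijOn (source x y) (smoothedPassages x y J) {q | q.2 ∈ Ioo (0 : ℝ) 1})
    (hφ : BijOn (ofPassage x y) (validPassages n nl) (smoothedPassages x y J)) :
    D.IsSmoothing x y ε D' (ofPassage x y) where
  isSmoothable := h
  bijOn := hsource.comp hφ
  window_subset := hφ.image_eq ▸ window_subset_smoothedPassages h.left_mem.1
    (by linarith [h.right_mem.2]) hJ
  point_eq := by
    rintro (⟨i, τ⟩ | ⟨i, τ⟩) hq
    · simp only [PreDiagram.point, Sum.elim_inl, harc, ofPassage, smoothedArcs]
      split_ifs <;> rfl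
    · simp only [PreDiagram.point, Sum.elim_inr, hloop, ofPassage, smoothedLoop,
        Function.comp_apply, Int.fract_eq_self.2 hq]
      rfl
  tangent_eq := by
    rintro (⟨i, τ⟩ | ⟨i, τ⟩) hq
    · simp only [PreDiagram.tangent, Sum.elim_inl, harc, ofPassage, smoothedArcs]
      split_ifs
      · exact ⟨_, h.length_pos, deriv_smoothedArc ..⟩
      · exact ⟨_, h.symm.length_pos, deriv_smoothedArc ..⟩
      · exact ⟨1, one_pos, (one_smul _ _).symm⟩
    · refine ⟨_, sub_pos.2 (hxy i).2, ?_⟩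
      simp only [PreDiagram.tangent, Sum.elim_inr, hloop,
        h.deriv_smoothedLoop (hxy i).1 (hxy i).2, Int.fract_eq_self.2 hq]
      rfl

end PreDiagram

namespace TripleDiagram
open SmoothedPassage

variable {n : ℕ} {D : TripleDiagram n 0} {x y : Fin n × ℝ} {ε : ℝ}

lemma exists_smoothing_of_ne (h : D.IsSmoothable x y ε) (hne : x.1 ≠ y.1) :
    ∃ T : TripleDiagram n 0, T.arc = D.smoothedArcs x y ε ∧ T.tripleCount + 1 = D.tripleCount := by
  have hε := h.pos
  have hx : x.2 ∈ Ioo (0 : ℝ) 1 := ⟨hε.trans h.left_mem.1, by linarith [h.left_mem.2]⟩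
  have hy : y.2 ∈ Ioo (0 : ℝ) 1 := ⟨hε.trans h.right_mem.1, by linarith [h.right_mem.2]⟩
  obtain ⟨T, hT, hcount⟩ := exists_of_resolvesAt <| resolvesAt_of_isSmoothing <| h.isSmoothing
    (D' := ofArcsLoops _ Fin.elim0 h.isProperArc_smoothedArcs (fun i => i.elim0)
      (D.injective_endpoints _ h.smoothedArcs_zero h.smoothedArcs_one))
    rfl (fun i => i.elim0) Fin.elim0
    (Icc_subset_Ioo (by linarith [h.right_mem.1]) (by linarith [h.left_mem.2]))
    (bijOn_source_of_ne hx hy hne) (bijOn_ofPassage_of_ne hx hy hne)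
  exact ⟨T, congrArg PreDiagram.arc hT, hcount⟩

lemma exists_smoothing_of_eq (h : D.IsSmoothable x y ε) (heq : x.1 = y.1) (hlt : x.2 < y.2) :
    ∃ T : TripleDiagram n 1, T.arc = D.smoothedArcs x y ε ∧ T.tripleCount + 1 = D.tripleCount := by
  have hε := h.pos
  have hx : x.2 ∈ Ioo (0 : ℝ) 1 := ⟨hε.trans h.left_mem.1, by linarith [h.left_mem.2]⟩
  have hy : y.2 ∈ Ioo (0 : ℝ) 1 := ⟨hε.trans h.right_mem.1, by linarith [h.right_mem.2]⟩
  have hgap := h.two_mul_lt heq hlt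
  have hball : Icc (-ε) ε ⊆ Ico (-((y.2 - x.2) / 2)) ((y.2 - x.2) / 2) := fun s hs =>
    ⟨by linarith [hs.1], by linarith [hs.2]⟩
  obtain ⟨T, hT, hcount⟩ := exists_of_resolvesAt <| resolvesAt_of_isSmoothing <| h.isSmoothing
    (D' := ofArcsLoops (nl := 1) _ _ h.isProperArc_smoothedArcs
      (fun _ => h.isProperLoop_smoothedLoop heq hlt)
      (D.injective_endpoints _ h.smoothedArcs_zero h.smoothedArcs_one))
    rfl (fun _ => rfl) (fun _ => ⟨heq, hlt⟩) hball
    (bijOn_source_of_eq hx hy heq hlt) (bijOn_ofPassage_of_eq hx hy heq hlt)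
  exact ⟨T, congrArg PreDiagram.arc hT, hcount⟩

end TripleDiagram

end Removal

/-! ### Monogons and parallel bigons -/

section Minimality
open Filter Topology PreDiagram

namespace PreDiagram

variable {n : ℕ}

lemma IsSmoothable.exists_smoothedArc_eq {D : PreDiagram n 0} {x y : Fin n × ℝ} {ε t : ℝ}
    (h : D.IsSmoothable x y ε) (hεt : ε < t - y.2) (ht : t < 1) :
    ∃ τ ∈ Ioo (0 : ℝ) 1, D.smoothedArc x y ε τ = D.arc y.1 t := by
  obtain ⟨τ, hτ⟩ := const_add_mul_surjective (a := -x.2) h.length_pos.ne' (t - y.2)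
  simp only at hτ
  refine ⟨τ, (const_add_mul_mem_Ioo_iff (a := -x.2) h.length_pos).1 ?_, ?_⟩
  · rw [hτ, neg_add_cancel_left]
    exact ⟨by linarith [h.left_mem.1, h.pos], by linarith⟩
  · rw [smoothedArc, hτ, h.smoothedBranch_of_ge hεt.le, add_sub_cancel]

lemma isReduced_iff {nl : ℕ} {D : PreDiagram n nl} : D.IsReduced ↔
    ((¬ ∃ (i : Fin n) (s t : ℝ), s ∈ Icc (0 : ℝ) 1 ∧ t ∈ Icc (0 : ℝ) 1 ∧
        s ≠ t ∧ D.arc i s = D.arc i t) ∧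
      (¬ ∃ (i j : Fin n), i ≠ j ∧ ∃ (x y : Plane), x ≠ y ∧ ‖x‖ < 1 ∧ ‖y‖ < 1 ∧
        ∃ (s₁ s₂ t₁ t₂ : ℝ), s₁ ∈ Icc (0 : ℝ) 1 ∧ s₂ ∈ Icc (0 : ℝ) 1 ∧
          t₁ ∈ Icc (0 : ℝ) 1 ∧ t₂ ∈ Icc (0 : ℝ) 1 ∧ s₁ < s₂ ∧ t₁ < t₂ ∧
          D.arc i s₁ = x ∧ D.arc j t₁ = x ∧ D.arc i s₂ = y ∧ D.arc j t₂ = y)) := by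
  constructor
  · intro hD
    refine ⟨?_, ?_⟩
    · rintro ⟨i, s, t, hs, ht, hst, heq⟩
      exact hst (hD.injOn_arc i hs ht heq)
    · rintro ⟨i, j, hij, x, y, -, -, -, s₁, s₂, t₁, t₂, hs₁, hs₂, ht₁, ht₂, hs, ht, rfl, hx,
        rfl, hy⟩
      exact hD.not_parallel_bigon hij hs₁ hs₂ ht₁ ht₂ hs ht hx.symm hy.symm
  · rintro ⟨hmonogon, hbigon⟩
    have hinj (i : Fin n) : InjOn (D.arc i) (Icc 0 1) := fun s hs t ht heq =>
      by_contra fun hst => hmonogon ⟨i, s, t, hs, ht, hst, heq⟩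
    refine ⟨hinj, fun {i j} hij {s₁ s₂ t₁ t₂} hs₁ hs₂ ht₁ ht₂ hs ht hx hy => hbigon ?_⟩
    have hnorm {s t : ℝ} (hs : s ∈ Icc (0 : ℝ) 1) (ht : t ∈ Icc (0 : ℝ) 1)
        (h : D.arc i s = D.arc j t) : ‖D.arc i s‖ < 1 :=
      D.arc_interior i s (mem_Ioo_of_arc_eq hs ht h fun h => hij (congrArg Prod.fst h)).1
    exact ⟨i, j, hij, _, _, fun h => hs.ne (hinj i hs₁ hs₂ h), hnorm hs₁ ht₁ hx,
      hnorm hs₂ ht₂ hy, s₁, s₂, t₁, t₂, hs₁, hs₂, ht₁, ht₂, hs, ht, rfl, hx.symm, rfl, hy.symm⟩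

end PreDiagram

namespace TripleDiagram

variable {n : ℕ} {D : TripleDiagram n 0} {σ : Equiv.Perm (Fin n)} {i j : Fin n}

lemma exists_tripleCount_lt_of_monogon (hσ : Realizes D σ) {s t : ℝ} (hs : s ∈ Icc (0 : ℝ) 1)
    (ht : t ∈ Icc (0 : ℝ) 1) (hst : s ≠ t) (h : D.arc i s = D.arc i t) :
    ∃ T : TripleDiagram n 1, Realizes T σ ∧ T.tripleCount < D.tripleCount := by
  wlog hlt : s < t generalizing s t
  · exact this ht hs hst.symm h.symm (lt_of_le_of_ne (not_lt.1 hlt) hst.symm)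
  have hne : (i, s) ≠ (i, t) := fun heq => hst (congrArg Prod.snd heq)
  obtain ⟨hs', ht'⟩ := mem_Ioo_of_arc_eq hs ht h hne
  obtain ⟨ε, hε⟩ := (D.eventually_isSmoothable (x := (i, s)) (y := (i, t)) hs' ht' h hne).exists
  obtain ⟨T, harc, hcount⟩ := exists_smoothing_of_eq hε rfl hlt
  refine ⟨T, fun k => ?_, by lia⟩
  rw [harc, hε.smoothedArcs_zero, hε.smoothedArcs_one, Equiv.swap_self]
  exact hσ k

lemma exists_tripleCount_lt_of_parallel_bigon (hσ : Realizes D σ) (hij : i ≠ j)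
    {s₁ s₂ t₁ t₂ : ℝ} (hs₁ : s₁ ∈ Icc (0 : ℝ) 1) (hs₂ : s₂ ∈ Icc (0 : ℝ) 1)
    (ht₁ : t₁ ∈ Icc (0 : ℝ) 1) (ht₂ : t₂ ∈ Icc (0 : ℝ) 1) (hs : s₁ < s₂) (ht : t₁ < t₂)
    (h₁ : D.arc i s₁ = D.arc j t₁) (h₂ : D.arc i s₂ = D.arc j t₂) :
    ∃ T : TripleDiagram n 0, Realizes T σ ∧ T.tripleCount < D.tripleCount := by
  have hne (s t : ℝ) : (i, s) ≠ (j, t) := fun heq => hij (congrArg Prod.fst heq)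
  obtain ⟨hs₁', ht₁'⟩ := mem_Ioo_of_arc_eq hs₁ ht₁ h₁ (hne _ _)
  obtain ⟨hs₂', ht₂'⟩ := mem_Ioo_of_arc_eq hs₂ ht₂ h₂ (hne _ _)
  obtain ⟨ε, hε, hεs, hεt⟩ := ((D.eventually_isSmoothable (x := (i, s₁)) (y := (j, t₁)) hs₁' ht₁'
    h₁ (hne _ _)).and ((eventually_lt_nhds (sub_pos.2 hs)).filter_mono inf_le_left |>.and
      ((eventually_lt_nhds (sub_pos.2 ht)).filter_mono inf_le_left))).exists
  obtain ⟨T, harc, hcount⟩ := exists_smoothing_of_ne hε hij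
  -- Past the first crossing the two arcs have exchanged their courses, so they still cross at the
  -- second one, and smoothing it exchanges their endpoints back.
  obtain ⟨u, hu, hui⟩ := hε.exists_smoothedArc_eq hεt ht₂'.2
  obtain ⟨v, hv, hvj⟩ := hε.symm.exists_smoothedArc_eq hεs hs₂'.2
  have hcross : T.arc i u = T.arc j v := by
    simp only [harc, smoothedArcs, if_true, if_neg hij.symm, hui, hvj, h₂]
  obtain ⟨δ, hδ⟩ :=
    (T.eventually_isSmoothable (x := (i, u)) (y := (j, v)) hu hv hcross (hne _ _)).exists
  obtain ⟨T', harc', hcount'⟩ := exists_smoothing_of_ne hδ hij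
  refine ⟨T', fun k => ?_, by lia⟩
  rw [harc', hδ.smoothedArcs_zero, hδ.smoothedArcs_one, harc, hε.smoothedArcs_zero,
    hε.smoothedArcs_one, Equiv.swap_apply_self]
  exact hσ k

lemma isReduced_of_forall_tripleCount_le (hσ : Realizes D σ)
    (hmin : ∀ (nl : ℕ) (D' : TripleDiagram n nl), Realizes D' σ →
      D.tripleCount ≤ D'.tripleCount) : D.IsReduced where
  injOn_arc i s hs t ht h := by_contra fun hst => by
    obtain ⟨T, hT, hlt⟩ := exists_tripleCount_lt_of_monogon hσ hs ht hst h
    exact (hmin 1 T hT).not_gt hlt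
  not_parallel_bigon hij _ _ _ _ hs₁ hs₂ ht₁ ht₂ hs ht h₁ h₂ := by
    obtain ⟨T, hT, hlt⟩ :=
      exists_tripleCount_lt_of_parallel_bigon hσ hij hs₁ hs₂ ht₁ ht₂ hs ht h₁ h₂
    exact (hmin 0 T hT).not_gt hlt

end TripleDiagram

end Minimality

/-- **Theorem (characterization of minimal diagrams).** A triple diagram `D` without
closed strands realizing `σ` is minimal (has no more triple points than any triple
diagram whose arcs realize `σ`) if and only if it has no monogon (no arc passes through
the same point of the disk at two distinct parameter values) and no parallel bigon
(no two distinct arcs meet at two distinct points `x ≠ y`, with both arcs oriented from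
`x` to `y`). -/
theorem triple_diagram_minimal_iff_no_monogon_no_parallel_bigon
    (n : ℕ) (hn : 1 ≤ n) (σ : Equiv.Perm (Fin n))
    (D : TripleDiagram n 0) (hD : Realizes D σ) :
    (∀ (nl : ℕ) (D' : TripleDiagram n nl), Realizes D' σ →
        D.tripleCount ≤ D'.tripleCount) ↔
      ((¬ ∃ (i : Fin n) (s t : ℝ), s ∈ Set.Icc (0:ℝ) 1 ∧ t ∈ Set.Icc (0:ℝ) 1 ∧
          s ≠ t ∧ D.arc i s = D.arc i t) ∧
       (¬ ∃ (i j : Fin n), i ≠ j ∧ ∃ (x y : Plane), x ≠ y ∧ ‖x‖ < 1 ∧ ‖y‖ < 1 ∧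
          ∃ (s₁ s₂ t₁ t₂ : ℝ), s₁ ∈ Set.Icc (0:ℝ) 1 ∧ s₂ ∈ Set.Icc (0:ℝ) 1 ∧
            t₁ ∈ Set.Icc (0:ℝ) 1 ∧ t₂ ∈ Set.Icc (0:ℝ) 1 ∧ s₁ < s₂ ∧ t₁ < t₂ ∧
            D.arc i s₁ = x ∧ D.arc j t₁ = x ∧ D.arc i s₂ = y ∧ D.arc j t₂ = y)) := by
  rw [← PreDiagram.isReduced_iff]
  exact ⟨TripleDiagram.isReduced_of_forall_tripleCount_le hD,
    fun hreduced _ _ hD' => TripleDiagram.tripleCount_le_of_isReduced hD hD' hreduced⟩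
end

section
/- The count N(σ) is independent of the choice of linear ordering of the boundary points compatible with their cyclic ordering. Precisely: for n ≥ 1, a bijection σ : Fin n → Fin n, and any m ∈ {0,…,2n−1}, define the linear order <_m on {0,…,2n−1} by x <_m y iff ((x − m) mod 2n) < ((y − m) mod 2n), and let N_m(σ) be the number of ordered pairs (i, j) with i ≠ j such that, writing a = 2i, b = 2j, c = 2σ(i)+1, d = 2σ(j)+1, either a <_m b <_m c <_m d or d <_m c <_m b <_m a. Then N_m(σ) = N_0(σ) for every m. -/
/-- `N_m(σ)`: the number of ordered pairs `(i,j)`, `i ≠ j`, such that, writing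
`a = 2i`, `b = 2j`, `c = 2σ(i)+1`, `d = 2σ(j)+1` in `{0,…,2n−1}`, either
`a <_m b <_m c <_m d` or `d <_m c <_m b <_m a`, where `x <_m y` iff
`(x − m) mod 2n < (y − m) mod 2n`. -/
def Nm (n : ℕ) (σ : Equiv.Perm (Fin n)) (m : ℕ) : ℕ :=
  (Finset.univ.filter fun ij : Fin n × Fin n =>
    ij.1 ≠ ij.2 ∧
      (let f : ℕ → ℤ := fun x => ((x : ℤ) - (m : ℤ)) % (2 * (n : ℤ))
       let a := f (2 * (ij.1 : ℕ))
       let b := f (2 * (ij.2 : ℕ))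
       let c := f (2 * (σ ij.1 : ℕ) + 1)
       let d := f (2 * (σ ij.2 : ℕ) + 1)
       (a < b ∧ b < c ∧ c < d) ∨ (d < c ∧ c < b ∧ b < a))).card

/-!
Move the basepoint past a single endpoint, say of the chord `k`: in the linear order this endpoint
jumps from first to last, and nothing else changes. Pairs not involving `k` are unaffected. Of the
pairs involving `k`, those counted before the move are given by the chords crossing `k` in one
direction, those counted afterwards by the chords crossing `k` in the other direction. Every chord
with an endpoint strictly on one side of `k` that does not cross `k` has one tail and one head
there, so the two numbers agree as soon as that side contains as many tails as heads. Since in and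
out points alternate around the circle and `k` joins an in point to an out point, this is the case.
-/

open Finset Sum

section ChordDiagram

variable {ι α β : Type*} [LinearOrder α] [LinearOrder β] {D : ι ⊕ ι → α} {t : α} {k : ι}

/-- A family of oriented chords with linearly ordered endpoints is a map `D : ι ⊕ ι → α`, where
`D (inl i)` is the tail and `D (inr i)` the head of the chord `i`. The chords `i` and `j` cross
monotonically if tail `i`, tail `j`, head `i`, head `j` occur in this order or in its reverse. -/
abbrev MonotoneCrossing (D : ι ⊕ ι → α) (i j : ι) : Prop :=
  (D (inl i) < D (inl j) ∧ D (inl j) < D (inr i) ∧ D (inr i) < D (inr j)) ∨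
    (D (inr j) < D (inr i) ∧ D (inr i) < D (inl j) ∧ D (inl j) < D (inl i))

lemma monotoneCrossing_update_iff_of_ne [DecidableEq ι] (hbot : ∀ y, D (inl k) ≤ D y)
    (htop : ∀ y, D y < t) {i : ι} (hik : i ≠ k) (j : ι) :
    MonotoneCrossing (Function.update D (inl k) t) i j ↔ MonotoneCrossing D i j := by
  obtain rfl | hjk := eq_or_ne j k
  · simp [MonotoneCrossing, hik, (hbot _).not_gt, (htop _).not_gt]
  · simp [MonotoneCrossing, hik, hjk]

lemma MonotoneCrossing.ne {i j : ι} (h : MonotoneCrossing D i j) : i ≠ j := by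
  grind

lemma monotoneCrossing_iff_of_bot (hD : D.Injective) (hbot : ∀ y, D (inl k) ≤ D y) (j : ι) :
    MonotoneCrossing D k j ↔ D (inl j) ≤ D (inr k) ∧ D (inr k) < D (inr j) := by
  have hne : D (inl j) ≠ D (inr k) := hD.ne inl_ne_inr
  have : j ≠ k → D (inl k) < D (inl j) := fun hjk =>
    (hbot _).lt_of_ne (hD.ne (inl_injective.ne hjk.symm))
  grind

lemma monotoneCrossing_update_iff_of_bot [DecidableEq ι] (hD : D.Injective)
    (hbot : ∀ y, D (inl k) ≤ D y) (htop : ∀ y, D y < t) (j : ι) :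
    MonotoneCrossing (Function.update D (inl k) t) k j ↔
      D (inr j) ≤ D (inr k) ∧ D (inr k) < D (inl j) := by
  have hne : j ≠ k → D (inr j) ≠ D (inr k) := fun hjk => hD.ne (inr_injective.ne hjk)
  have := hbot (inr k)
  have := htop (inl j)
  have := htop (inr j)
  have := htop (inr k)
  grind

variable [Fintype ι]

/-- The number of ordered pairs of chords that cross monotonically; this is `N_m(σ)` for an
arbitrary family of chords. -/
def crossingCount (D : ι ⊕ ι → α) : ℕ :=
  #{q : ι × ι | MonotoneCrossing D q.1 q.2}

/-- The initial segment ending at the endpoint opposite to `x` on its chord contains as many tails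
as heads. When `x` is the first endpoint, this says that equally many chords cross the chord of `x`
in the two directions. -/
def IsBalancedAt (D : ι ⊕ ι → α) (x : ι ⊕ ι) : Prop :=
  #{j | D (inl j) ≤ D x.swap} = #{j | D (inr j) ≤ D x.swap}

lemma crossingCount_eq_sum (D : ι ⊕ ι → α) :
    crossingCount D = ∑ i, #{j | MonotoneCrossing D i j} := by
  simp only [crossingCount, card_filter, Fintype.sum_prod_type]

lemma crossingCount_strictMono_comp {f : α → β} (hf : StrictMono f) (D : ι ⊕ ι → α) :
    crossingCount (f ∘ D) = crossingCount D := by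
  simp only [crossingCount, MonotoneCrossing, Function.comp_apply, hf.lt_iff_lt]

lemma crossingCount_comp_swap (D : ι ⊕ ι → α) : crossingCount (D ∘ swap) = crossingCount D := by
  refine card_equiv (Equiv.prodComm ι ι) fun q => ?_
  rw [mem_filter_univ, mem_filter_univ]
  exact or_comm

lemma crossingCount_update_inl [DecidableEq ι] (hD : D.Injective)
    (hbot : ∀ y, D (inl k) ≤ D y) (htop : ∀ y, D y < t) (hbal : IsBalancedAt D (inl k)) :
    crossingCount (Function.update D (inl k) t) = crossingCount D := by
  simp only [crossingCount_eq_sum]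
  refine Fintype.sum_congr _ _ fun i => ?_
  obtain rfl | hik := eq_or_ne i k
  · simp only [monotoneCrossing_update_iff_of_bot hD hbot htop,
      monotoneCrossing_iff_of_bot hD hbot, ← not_le, filter_and_not]
    exact card_sdiff_comm hbal.symm
  · simp only [monotoneCrossing_update_iff_of_ne hbot htop hik]

lemma crossingCount_update [DecidableEq ι] {x : ι ⊕ ι} (hD : D.Injective) (hbot : ∀ y, D x ≤ D y)
    (htop : ∀ y, D y < t) (hbal : IsBalancedAt D x) :
    crossingCount (Function.update D x t) = crossingCount D := by
  obtain k | k := x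
  · exact crossingCount_update_inl hD hbot htop hbal
  · have hswap : Function.update D (inr k) t ∘ swap = Function.update (D ∘ swap) (inl k) t :=
      Function.update_comp_eq_of_injective D swap_leftInverse.injective (inl k) t
    rw [← crossingCount_comp_swap, hswap, ← crossingCount_comp_swap D]
    exact crossingCount_update_inl (hD.comp swap_leftInverse.injective) (fun y => hbot y.swap)
      (fun y => htop y.swap) hbal.symm

end ChordDiagram

section Circle

variable {β ι : Type*} {p : ℤ}

/-- The positions of points `E x` on a circle of circumference `p` in the linear order obtained by
cutting the circle just before `m`. -/
def positionFrom (p : ℤ) (E : β → ℤ) (m : ℤ) : β → ℤ := fun x => (E x - m) % p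

lemma positionFrom_injective {E : β → ℤ} (hE : ∀ ⦃x y⦄, E x ≡ E y [ZMOD p] → x = y) (m : ℤ) :
    (positionFrom p E m).Injective :=
  fun _ _ h => hE (Int.ModEq.add_right_cancel' (-m) h)

lemma positionFrom_congr {m m' : ℤ} (E : β → ℤ) (h : m ≡ m' [ZMOD p]) :
    positionFrom p E m = positionFrom p E m' :=
  funext fun x => h.sub_left (E x)

lemma positionFrom_add_one (hp : 0 < p) (E : β → ℤ) (m : ℤ) (x : β) :
    positionFrom p E (m + 1) x =
      (if positionFrom p E m x = 0 then p else positionFrom p E m x) - 1 := by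
  have hpred : positionFrom p E (m + 1) x = (positionFrom p E m x - 1) % p := by
    rw [positionFrom, positionFrom, Int.emod_sub_emod, sub_sub]
  have hnonneg : 0 ≤ positionFrom p E m x := Int.emod_nonneg _ hp.ne'
  have hlt : positionFrom p E m x < p := Int.emod_lt_of_pos _ hp
  rw [hpred]
  split_ifs with h
  · rw [h, ← Int.add_emod_right, Int.emod_eq_of_lt] <;> omega
  · rw [Int.emod_eq_of_lt] <;> omega

lemma crossingCount_positionFrom_add_one [Fintype ι] (hp : 0 < p) {E : ι ⊕ ι → ℤ}
    (hE : ∀ ⦃x y⦄, E x ≡ E y [ZMOD p] → x = y)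
    (hbal : ∀ x, IsBalancedAt (positionFrom p E (E x)) x) (m : ℤ) :
    crossingCount (positionFrom p E (m + 1)) = crossingCount (positionFrom p E m) := by
  classical
  have hmono : StrictMono fun a : ℤ => a - 1 := fun a b h => sub_lt_sub_right h 1
  by_cases hx : ∃ x, positionFrom p E m x = 0
  · obtain ⟨x, hx⟩ := hx
    have hpos : positionFrom p E (m + 1) = (· - 1) ∘ Function.update (positionFrom p E m) x p := by
      funext y
      have hy : positionFrom p E m y = 0 ↔ y = x := by
        rw [← hx, (positionFrom_injective hE m).eq_iff]
      simp only [positionFrom_add_one hp, hy, Function.comp_apply, Function.update_apply]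
    have hxm : E x ≡ m [ZMOD p] := Int.emod_eq_emod_iff_emod_sub_eq_zero.mpr hx
    rw [hpos, crossingCount_strictMono_comp hmono]
    refine crossingCount_update (positionFrom_injective hE m) (fun y => ?_)
      (fun y => Int.emod_lt_of_pos _ hp) (positionFrom_congr E hxm ▸ hbal x)
    exact hx.trans_le (Int.emod_nonneg _ hp.ne')
  · have hpos : positionFrom p E (m + 1) = (· - 1) ∘ positionFrom p E m := by
      funext y
      simp only [positionFrom_add_one hp, if_neg (not_exists.mp hx y), Function.comp_apply]
    rw [hpos, crossingCount_strictMono_comp hmono]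

theorem Nm_independent_of_basepoint_general [Fintype ι] (hp : 0 < p) {E : ι ⊕ ι → ℤ}
    (hE : ∀ ⦃x y⦄, E x ≡ E y [ZMOD p] → x = y)
    (hbal : ∀ x, IsBalancedAt (positionFrom p E (E x)) x) (m m' : ℤ) :
    crossingCount (positionFrom p E m) = crossingCount (positionFrom p E m') := by
  have hper : Function.Periodic (fun m => crossingCount (positionFrom p E m)) 1 :=
    crossingCount_positionFrom_add_one hp hE hbal
  have hzero (m : ℤ) : crossingCount (positionFrom p E m) = crossingCount (positionFrom p E 0) := by
    simpa using hper.int_mul_eq m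
  rw [hzero m, hzero m']

lemma even_emod_iff (hp : Even p) (a : ℤ) : Even (a % p) ↔ Even a := by
  rw [Int.emod_def, Int.even_sub, iff_true_right (hp.mul_right _)]

lemma card_emod_le_eq_of_modEq_add_one [Fintype ι] {f g : ι → ℤ} {r : ℤ} (hp : 0 < p)
    (hp_even : Even p) (hr : Odd r) (hf : ∀ j, Even (f j)) (τ : Equiv.Perm ι)
    (hτ : ∀ j, g (τ j) ≡ f j + 1 [ZMOD p]) :
    #{j | f j % p ≤ r % p} = #{j | g j % p ≤ r % p} := by
  refine card_equiv τ fun j => ?_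
  have hnonneg : 0 ≤ f j % p := Int.emod_nonneg _ hp.ne'
  have hlt : f j % p < p := Int.emod_lt_of_pos _ hp
  have hfj : Even (f j % p) := (even_emod_iff hp_even _).mpr (hf j)
  have hrp : ¬Even (r % p) := by rwa [even_emod_iff hp_even, Int.not_even_iff_odd]
  have hg : g (τ j) % p = f j % p + 1 := by
    rw [hτ j, ← Int.emod_add_emod, Int.emod_eq_of_lt] <;> grind
  rw [mem_filter_univ, mem_filter_univ, hg]
  grind

lemma isBalancedAt_positionFrom_of_alternating [Fintype ι] {E : ι ⊕ ι → ℤ} (hp : 0 < p)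
    (hp_even : Even p) (htail : ∀ j, Even (E (inl j))) (hhead : ∀ j, Odd (E (inr j)))
    (nextHead nextTail : Equiv.Perm ι)
    (hnext_head : ∀ j, E (inr (nextHead j)) ≡ E (inl j) + 1 [ZMOD p])
    (hnext_tail : ∀ j, E (inl (nextTail j)) ≡ E (inr j) + 1 [ZMOD p]) (x : ι ⊕ ι) :
    IsBalancedAt (positionFrom p E (E x)) x := by
  obtain k | k := x
  · refine card_emod_le_eq_of_modEq_add_one hp hp_even ((hhead k).sub_even (htail k))
      (fun j => (htail j).sub (htail k)) nextHead fun j => ?_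
    rw [← add_sub_right_comm]
    exact (hnext_head j).sub_right _
  · refine (card_emod_le_eq_of_modEq_add_one hp hp_even ((htail k).sub_odd (hhead k))
      (fun j => (hhead j).sub_odd (hhead k)) nextTail fun j => ?_).symm
    rw [← add_sub_right_comm]
    exact (hnext_tail j).sub_right _

end Circle

section AlternatingPoints

variable {n : ℕ} (σ : Equiv.Perm (Fin n))

/-- The endpoints of the chords of `σ`: the chord `i` runs from `2i` to `2σ(i)+1`. -/
def endpoint : Fin n ⊕ Fin n → ℤ := Sum.elim (fun i => 2 * i) (fun i => 2 * σ i + 1)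

lemma Nm_eq_crossingCount (m : ℕ) :
    Nm n σ m = crossingCount (positionFrom (2 * n) (endpoint σ) m) := by
  unfold Nm crossingCount
  congr 1
  ext ⟨i, j⟩
  rw [mem_filter_univ, mem_filter_univ]
  refine ⟨fun h => by simpa [MonotoneCrossing, positionFrom, endpoint] using h.2, fun h => ?_⟩
  exact ⟨h.ne, by simpa [MonotoneCrossing, positionFrom, endpoint] using h⟩

lemma eq_of_endpoint_modEq ⦃x y : Fin n ⊕ Fin n⦄
    (h : endpoint σ x ≡ endpoint σ y [ZMOD 2 * n]) : x = y := by
  have hmem (z) : 0 ≤ endpoint σ z ∧ endpoint σ z < 2 * n := by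
    obtain i | i := z <;> simp only [endpoint, Sum.elim_inl, Sum.elim_inr] <;> omega
  have heq : endpoint σ x = endpoint σ y := by
    rwa [Int.ModEq, Int.emod_eq_of_lt (hmem x).1 (hmem x).2,
      Int.emod_eq_of_lt (hmem y).1 (hmem y).2] at h
  have hinj := σ.injective
  obtain i | i := x <;> obtain j | j := y <;>
    simp only [endpoint, Sum.elim_inl, Sum.elim_inr] at heq
  · congr 1; omega
  · omega
  · omega
  · congr 1; apply hinj; omega

lemma endpoint_inr_symm (j : Fin n) :
    endpoint σ (inr (σ.symm j)) = endpoint σ (inl j) + 1 := by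
  simp [endpoint]

lemma endpoint_inl_add_one_modEq [NeZero n] (j : Fin n) :
    endpoint σ (inl (σ j + 1)) ≡ endpoint σ (inr j) + 1 [ZMOD 2 * n] := by
  have h : ((σ j + 1 : Fin n) : ℤ) ≡ σ j + 1 [ZMOD n] := by
    rw [Fin.val_add, Fin.val_one', Nat.add_mod_mod]
    exact_mod_cast Nat.mod_modEq _ _
  have hdouble := h.mul_left' (c := 2)
  rwa [mul_add_one, ← one_add_one_eq_two, ← add_assoc, one_add_one_eq_two] at hdouble

lemma isBalancedAt_positionFrom_endpoint [NeZero n] (x : Fin n ⊕ Fin n) :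
    IsBalancedAt (positionFrom (2 * n) (endpoint σ) (endpoint σ x)) x :=
  isBalancedAt_positionFrom_of_alternating (by have := NeZero.pos n; omega) (even_two_mul _)
    (fun _ => even_two_mul _) (fun _ => odd_two_mul_add_one _) σ.symm (σ.trans (Equiv.addRight 1))
    (fun j => congrArg (· % _) (endpoint_inr_symm σ j)) (endpoint_inl_add_one_modEq σ) x

end AlternatingPoints

/-- **Theorem.** The count `N(σ)` is independent of the choice of linear ordering of the
`2n` boundary points compatible with their cyclic ordering: `N_m(σ) = N_0(σ)` for every
basepoint `m ∈ {0,…,2n−1}`. -/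
theorem Nm_independent_of_basepoint (n : ℕ) (hn : 1 ≤ n) (σ : Equiv.Perm (Fin n))
    (m : ℕ) (hm : m < 2 * n) :
    Nm n σ m = Nm n σ 0 := by
  have : NeZero n := ⟨by omega⟩
  rw [Nm_eq_crossingCount, Nm_eq_crossingCount]
  exact Nm_independent_of_basepoint_general (by omega) (eq_of_endpoint_modEq σ)
    (isBalancedAt_positionFrom_endpoint σ) _ _
end
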